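/- Let n → ∞ through odd integers, let d = d(n) be even with 4 ≤ d ≤ (log n)², let k = ⌊d/4⌋, and fix ε ∈ (0,1). Then with high probability, the d-regular graph L underlying G''(n-1,d) has the following property: for at least (1-ε)n vertices r of L, there are at least (1-ε)·(nd/2)^{d/2}/(d/2)! induced d-matchings M of L such that L admits k strong independent spanning trees rooted at r with respect to M. -/

import Mathlib

/-- `M` is an ordered `d`-tuple of pairwise edge-disjoint perfect matchings of `K_n`
(each matching being viewed as a 1-regular simple graph on `[n]`). -/
def IsPMTuple {n d : ℕ} (M : Fin d → SimpleGraph (Fin n)) : Prop :=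
  (∀ i, ∀ v, Nat.card ((M i).neighborSet v) = 1) ∧
  ∀ i j, i ≠ j → Disjoint (M i) (M j)

open Classical in
/-- Probability that `G''(n,d)`, the uniformly random ordered `d`-tuple of pairwise
edge-disjoint perfect matchings of `K_n`, satisfies the property `A`. -/
noncomputable def tupleProb (n d : ℕ) (A : (Fin d → SimpleGraph (Fin n)) → Prop) : ℝ :=
  ((Finset.univ.filter (fun M : Fin d → SimpleGraph (Fin n) =>
      IsPMTuple M ∧ A M)).card : ℝ) /
  ((Finset.univ.filter (fun M : Fin d → SimpleGraph (Fin n) => IsPMTuple M)).card : ℝ)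

open Filter

/-- The spanning trees `T 0, …, T (t-1)` of `G` are independent spanning trees rooted at `r`:
each `T i` is a spanning tree of `G` (a tree on the whole vertex set, all of whose edges lie
in `G`), and for every vertex `v ≠ r`, the paths from `v` to `r` in any two distinct trees
share only the vertices `v` and `r`. -/
def IsIST {n : ℕ} (G : SimpleGraph (Fin n)) (r : Fin n) {t : ℕ}
    (T : Fin t → SimpleGraph (Fin n)) : Prop :=
  (∀ i, T i ≤ G ∧ (T i).IsTree) ∧
  ∀ v : Fin n, v ≠ r → ∀ i j : Fin t, i ≠ j →
    ∀ p : (T i).Walk v r, ∀ q : (T j).Walk v r, p.IsPath → q.IsPath →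
      ∀ x : Fin n, x ∈ p.support → x ∈ q.support → x = v ∨ x = r

/-- `G` contains (at least) `t` independent spanning trees rooted at `r`. -/
def HasISTs {n : ℕ} (G : SimpleGraph (Fin n)) (r : Fin n) (t : ℕ) : Prop :=
  ∃ T : Fin t → SimpleGraph (Fin n), IsIST G r T


/-- `M` is an induced `d`-matching of `L`: a subgraph of `L` in which every vertex has at
most one neighbour, consisting of `d/2` edges (hence spanning `d` vertices), and such
that the subgraph of `L` induced on the spanned vertices consists exactly of these
edges. -/
def IsInducedMatching {n : ℕ} (L M : SimpleGraph (Fin n)) (d : ℕ) : Prop :=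
  M ≤ L ∧
  (∀ v w x : Fin n, M.Adj v w → M.Adj v x → w = x) ∧
  Nat.card M.edgeSet = d / 2 ∧
  (∀ u v : Fin n, u ∈ M.support → v ∈ M.support → L.Adj u v → M.Adj u v)

/-- `L` admits `t` strong independent spanning trees rooted at `r` with respect to the
induced matching `M`: there are ISTs `T_1,…,T_t` of `L` rooted at `r` such that (P1) no
edge of any `T_i` lies in `M`, and (P2) for all distinct `i, j` and all `u, v ∈ V(M)`,
the paths from `u` to `r` in `T_i` and from `v` to `r` in `T_j` intersect exactly in
`{u, r}` if `u = v`, and exactly in `{r}` if `u ≠ v`. -/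
def HasStrongISTs {n : ℕ} (L M : SimpleGraph (Fin n)) (r : Fin n) (t : ℕ) : Prop :=
  ∃ T : Fin t → SimpleGraph (Fin n),
    IsIST L r T ∧
    (∀ i, Disjoint (T i) M) ∧
    (∀ i j : Fin t, i ≠ j → ∀ u v : Fin n, u ∈ M.support → v ∈ M.support →
      ∀ p : (T i).Walk u r, ∀ q : (T j).Walk v r, p.IsPath → q.IsPath →
        {x : Fin n | x ∈ p.support ∧ x ∈ q.support} =
          (if u = v then ({u, r} : Set (Fin n)) else {r}))

/-!
Split the `d` colours into `k` blocks of four: three tree colours and one link colour. Switching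
edges of a uniformly random system of disjoint perfect matchings shows that a fixed word in the
colours rarely fixes a given vertex, that small vertex sets rarely span too many edges, and that a
link colour rarely misses all pairs between two given large sets.

Hence around most roots `r` the reduced words in the tree colours of the `k` blocks span disjoint
binary cores of size `n` divided by a power of `log n`. From any other vertex the paths in the
`i`-th tree colours reach, inside a maximal edge set of large girth, a set big enough to be joined
to the `i`-th core by the `i`-th link colour. Following these routes to `r` gives the `k` trees;
they are strong with respect to every matching whose edges are far from each other, from the cores
and from short cycles. A union bound over forbidden edges and forbidden pairs of edges shows that
almost all sets of `d / 2` edges are such matchings.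
-/

namespace StrongIST

/-! ### Words over a family of involutions -/

section Words

variable {α β V : Type*} {φ : α → V → V} {P Q : α → V → Prop} {w u : List α} {x : V}

/-- The endpoint of the walk from `x` spelled by the word `w`. The last letter is applied first, so
that concatenation of words is composition. -/
def wordAct (φ : α → V → V) (w : List α) (x : V) : V := w.foldr φ x

@[simp] lemma wordAct_nil (φ : α → V → V) (x : V) : wordAct φ [] x = x := rfl

@[simp] lemma wordAct_cons (φ : α → V → V) (a : α) (w : List α) (x : V) :
    wordAct φ (a :: w) x = φ a (wordAct φ w x) := rfl

lemma wordAct_append (φ : α → V → V) (w u : List α) (x : V) :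
    wordAct φ (w ++ u) x = wordAct φ w (wordAct φ u x) := by
  simp [wordAct]

lemma wordAct_map (f : β → α) (φ : α → V → V) (w : List β) (x : V) :
    wordAct φ (w.map f) x = wordAct (fun b => φ (f b)) w x := by
  simp [wordAct, List.foldr_map]

lemma wordAct_reverse_wordAct (hφ : ∀ a, (φ a).Involutive) (w : List α) (x : V) :
    wordAct φ w.reverse (wordAct φ w x) = x := by
  induction w with
  | nil => rfl
  | cons a w ih => rw [List.reverse_cons, wordAct_append]; simpa [hφ a _] using ih

/-- Every step of the walk from `x` spelled by `w`, seen as a letter together with the vertex at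
which it is applied, satisfies `P`. -/
def AlongWord (φ : α → V → V) (P : α → V → Prop) : List α → V → Prop
  | [], _ => True
  | a :: w, x => AlongWord φ P w x ∧ P a (wordAct φ w x)

lemma alongWord_append :
    AlongWord φ P (w ++ u) x ↔ AlongWord φ P u x ∧ AlongWord φ P w (wordAct φ u x) := by
  induction w with
  | nil => simp [AlongWord]
  | cons a w ih => simp [AlongWord, ih, wordAct_append, and_assoc]

lemma AlongWord.mono (h : ∀ a x, P a x → Q a x) (hw : AlongWord φ P w x) : AlongWord φ Q w x := by
  induction w with
  | nil => trivial
  | cons a w ih => exact ⟨ih hw.1, h _ _ hw.2⟩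

lemma AlongWord.reverse (hφ : ∀ a, (φ a).Involutive) (hP : ∀ a x, P a x → P a (φ a x))
    (hw : AlongWord φ P w x) : AlongWord φ P w.reverse (wordAct φ w x) := by
  induction w with
  | nil => trivial
  | cons a w ih =>
    rw [List.reverse_cons, alongWord_append]
    refine ⟨⟨trivial, hP _ _ hw.2⟩, ?_⟩
    simpa only [wordAct_cons, wordAct_nil, hφ a _] using ih hw.1

/-- A word is reduced if no two consecutive letters agree: these are the normal forms in the free
product of copies of `ℤ/2` indexed by the letters. -/
abbrev IsReduced (w : List α) : Prop := w.IsChain (· ≠ ·)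

lemma isReduced_cons {a : α} : IsReduced (a :: w) ↔ w.head? ≠ some a ∧ IsReduced w := by
  rw [IsReduced, List.isChain_cons]
  refine and_congr_left fun _ => ⟨fun h ha => h a ha rfl, ?_⟩
  rintro h y hy rfl
  exact h hy

lemma IsReduced.of_append_left (h : IsReduced (w ++ u)) : IsReduced w := (List.isChain_append.1 h).1

lemma IsReduced.of_append_right (h : IsReduced (w ++ u)) : IsReduced u :=
  (List.isChain_append.1 h).2.1

lemma IsReduced.reverse (h : IsReduced w) : IsReduced w.reverse :=
  List.isChain_reverse.2 (h.imp fun _ _ => Ne.symm)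

lemma IsReduced.map {f : α → β} (h : IsReduced w) (hf : f.Injective) : IsReduced (w.map f) :=
  (List.isChain_map f).2 (h.imp fun _ _ hne heq => hne (hf heq))

variable [DecidableEq α] [DecidableEq β]

/-- Left multiplication of a reduced word by a letter. -/
def cancelCons (a : α) (w : List α) : List α := if w.head? = some a then w.tail else a :: w

/-- The reduced form of a word in the free product of copies of `ℤ/2`. -/
def reduceWord (w : List α) : List α := w.foldr cancelCons []

lemma cancelCons_cons_self (a : α) (w : List α) : cancelCons a (a :: w) = w := by simp [cancelCons]

lemma cancelCons_of_head?_ne {a : α} (h : w.head? ≠ some a) : cancelCons a w = a :: w := if_neg h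

lemma IsReduced.cancelCons (h : IsReduced w) (a : α) : IsReduced (cancelCons a w) := by
  unfold StrongIST.cancelCons
  split_ifs with ha
  · exact List.IsChain.tail h
  · exact isReduced_cons.2 ⟨ha, h⟩

lemma cancelCons_cancelCons (h : IsReduced w) (a : α) : cancelCons a (cancelCons a w) = w := by
  by_cases ha : w.head? = some a
  · obtain ⟨t, rfl⟩ := List.head?_eq_some_iff.1 ha
    rw [cancelCons_cons_self, cancelCons_of_head?_ne (isReduced_cons.1 h).1]
  · rw [cancelCons_of_head?_ne ha, cancelCons_cons_self]

lemma length_cancelCons_le (a : α) (w : List α) : (cancelCons a w).length ≤ w.length + 1 := by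
  unfold cancelCons
  split_ifs <;> simp only [List.length_tail, List.length_cons] <;> omega

lemma wordAct_cancelCons (hφ : ∀ a, (φ a).Involutive) (a : α) (w : List α) (x : V) :
    wordAct φ (cancelCons a w) x = φ a (wordAct φ w x) := by
  by_cases ha : w.head? = some a
  · obtain ⟨t, rfl⟩ := List.head?_eq_some_iff.1 ha
    rw [cancelCons_cons_self, wordAct_cons, hφ a _]
  · rw [cancelCons_of_head?_ne ha, wordAct_cons]

@[simp] lemma reduceWord_nil : reduceWord ([] : List α) = [] := rfl

@[simp] lemma reduceWord_cons (a : α) (w : List α) :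
    reduceWord (a :: w) = cancelCons a (reduceWord w) := rfl

lemma isReduced_reduceWord (w : List α) : IsReduced (reduceWord w) := by
  induction w with
  | nil => exact List.isChain_nil
  | cons a w ih => exact ih.cancelCons a

lemma IsReduced.reduceWord_eq (h : IsReduced w) : reduceWord w = w := by
  induction w with
  | nil => rfl
  | cons a w ih =>
    obtain ⟨ha, hw⟩ := isReduced_cons.1 h
    rw [reduceWord_cons, ih hw, cancelCons_of_head?_ne ha]

lemma length_reduceWord_le (w : List α) : (reduceWord w).length ≤ w.length := by
  induction w with
  | nil => rfl
  | cons a w ih => exact (length_cancelCons_le a _).trans (Nat.succ_le_succ ih)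

lemma wordAct_reduceWord (hφ : ∀ a, (φ a).Involutive) (w : List α) (x : V) :
    wordAct φ (reduceWord w) x = wordAct φ w x := by
  induction w with
  | nil => rfl
  | cons a w ih => rw [reduceWord_cons, wordAct_cancelCons hφ, ih, wordAct_cons]

lemma AlongWord.reduceWord (hφ : ∀ a, (φ a).Involutive) (hw : AlongWord φ P w x) :
    AlongWord φ P (reduceWord w) x := by
  induction w with
  | nil => trivial
  | cons a w ih =>
    have hred := ih hw.1
    rw [reduceWord_cons]
    by_cases ha : (StrongIST.reduceWord w).head? = some a
    · obtain ⟨t, ht⟩ := List.head?_eq_some_iff.1 ha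
      rw [ht] at hred ⊢
      rw [cancelCons_cons_self]
      exact hred.1
    · rw [cancelCons_of_head?_ne ha]
      exact ⟨hred, by rw [wordAct_reduceWord hφ]; exact hw.2⟩

lemma reduceWord_map {f : α → β} (hf : f.Injective) (w : List α) :
    reduceWord (w.map f) = (reduceWord w).map f := by
  have head?_map_iff (s : List α) (a : α) : (s.map f).head? = some (f a) ↔ s.head? = some a := by
    cases s <;> simp [hf.eq_iff]
  induction w with
  | nil => rfl
  | cons a w ih =>
    simp only [List.map_cons, reduceWord_cons, ih, cancelCons, head?_map_iff]
    split_ifs <;> simp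

lemma reduceWord_append_reduceWord_right (w u : List α) :
    reduceWord (w ++ reduceWord u) = reduceWord (w ++ u) := by
  induction w with
  | nil => exact (isReduced_reduceWord u).reduceWord_eq
  | cons a w ih => rw [List.cons_append, List.cons_append, reduceWord_cons, ih, reduceWord_cons]

/-- The letters act on the reduced words by left multiplication, so that the general facts on
`wordAct` become identities between reduced forms. -/
def cancelConsReduced (a : α) (s : {s : List α // IsReduced s}) : {s : List α // IsReduced s} :=
  ⟨cancelCons a s.1, s.2.cancelCons a⟩

lemma involutive_cancelConsReduced (a : α) : (cancelConsReduced a).Involutive :=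
  fun s => Subtype.ext (cancelCons_cancelCons s.2 a)

lemma coe_wordAct_cancelConsReduced (w u : List α) :
    (wordAct cancelConsReduced w ⟨reduceWord u, isReduced_reduceWord u⟩).1 =
      reduceWord (w ++ u) := by
  induction w with
  | nil => rfl
  | cons a w ih => exact congrArg (cancelCons a) ih

lemma reduceWord_reduceWord_append (w u : List α) :
    reduceWord (reduceWord w ++ u) = reduceWord (w ++ u) := by
  rw [← coe_wordAct_cancelConsReduced, wordAct_reduceWord involutive_cancelConsReduced,
    coe_wordAct_cancelConsReduced]

lemma reduceWord_reverse_append_append (w u : List α) :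
    reduceWord (w.reverse ++ (w ++ u)) = reduceWord u := by
  rw [← List.append_assoc, ← coe_wordAct_cancelConsReduced, wordAct_append,
    wordAct_reverse_wordAct involutive_cancelConsReduced]

lemma reduceWord_append_reverse_append (w u : List α) :
    reduceWord (w ++ (w.reverse ++ u)) = reduceWord u := by
  simpa only [List.reverse_reverse] using reduceWord_reverse_append_append w.reverse u

lemma reduceWord_eq_of_reverse_append (h : reduceWord (u.reverse ++ w) = []) :
    reduceWord w = reduceWord u := by
  rw [← reduceWord_append_reverse_append u w, ← reduceWord_append_reduceWord_right, h,
    List.append_nil]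

lemma reduceWord_eq_nil_of_conj (h : reduceWord (u.reverse ++ (w ++ u)) = []) :
    reduceWord w = [] := by
  have hcancel : reduceWord (u ++ u.reverse) = [] := by
    simpa using reduceWord_append_reverse_append u []
  calc reduceWord w = reduceWord (w ++ (u ++ u.reverse)) := by
        rw [← reduceWord_append_reduceWord_right, hcancel, List.append_nil]
    _ = reduceWord (u ++ u.reverse) := by
        rw [← List.append_assoc, ← reduceWord_reduceWord_append,
          reduceWord_eq_of_reverse_append h, reduceWord_reduceWord_append]
    _ = [] := hcancel

end Words

/-! ### Uniform probability on a finite set -/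

section UniformProb

variable {T κ : Type*} [Fintype T] {Ω E E' : T → Prop} {ω : T}

open Classical in
/-- The finite set of all `ω` with `P ω`, with classical decidability. -/
noncomputable def outcomes (P : T → Prop) : Finset T := {ω | P ω}

@[simp] lemma mem_outcomes : ω ∈ outcomes E ↔ E ω := by simp [outcomes]

/-- The probability that a uniformly random element of `{ω | Ω ω}` satisfies `E`; it is `0` if there
is no such element. -/
noncomputable def uniformProb (Ω E : T → Prop) : ℝ :=
  ((outcomes fun ω => Ω ω ∧ E ω).card : ℝ) / ((outcomes Ω).card : ℝ)

lemma uniformProb_nonneg (Ω E : T → Prop) : 0 ≤ uniformProb Ω E := by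
  unfold uniformProb; positivity

lemma uniformProb_mono (h : ∀ ω, Ω ω → E ω → E' ω) : uniformProb Ω E ≤ uniformProb Ω E' := by
  unfold uniformProb
  gcongr
  intro ω
  rw [mem_outcomes, mem_outcomes]
  exact fun hω => ⟨hω.1, h ω hω.1 hω.2⟩

lemma uniformProb_le_one (Ω E : T → Prop) : uniformProb Ω E ≤ 1 := by
  refine div_le_one_of_le₀ (Nat.cast_le.2 (Finset.card_le_card fun ω hω => ?_)) (Nat.cast_nonneg _)
  exact mem_outcomes.2 (mem_outcomes.1 hω).1

lemma uniformProb_eq_zero (h : ∀ ω, Ω ω → ¬E ω) : uniformProb Ω E = 0 := by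
  have hempty : (outcomes fun ω => Ω ω ∧ E ω) = ∅ :=
    Finset.eq_empty_of_forall_notMem fun ω hω => h ω (mem_outcomes.1 hω).1 (mem_outcomes.1 hω).2
  rw [uniformProb, hempty, Finset.card_empty, Nat.cast_zero, zero_div]

lemma uniformProb_exists_le (s : Finset κ) (Ω : T → Prop) (F : κ → T → Prop) :
    uniformProb Ω (fun ω => ∃ i ∈ s, F i ω) ≤ ∑ i ∈ s, uniformProb Ω (F i) := by
  classical
  unfold uniformProb
  rw [← Finset.sum_div]
  gcongr
  have hsub : (outcomes fun ω => Ω ω ∧ ∃ i ∈ s, F i ω) ⊆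
      s.biUnion fun i => outcomes fun ω => Ω ω ∧ F i ω := by
    intro ω
    simp only [mem_outcomes, Finset.mem_biUnion]
    exact fun ⟨hΩ, i, hi, hF⟩ => ⟨i, hi, hΩ, hF⟩
  exact_mod_cast (Finset.card_le_card hsub).trans Finset.card_biUnion_le

lemma uniformProb_or_le (Ω E E' : T → Prop) :
    uniformProb Ω (fun ω => E ω ∨ E' ω) ≤ uniformProb Ω E + uniformProb Ω E' := by
  rw [add_comm]
  simpa using uniformProb_exists_le Finset.univ Ω fun b : Bool => bif b then E' else E

lemma sum_uniformProb_fiber [Fintype κ] (Ω E : T → Prop) (f : T → κ) :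
    ∑ i, uniformProb Ω (fun ω => E ω ∧ f ω = i) = uniformProb Ω E := by
  classical
  have hfiber := Finset.card_eq_sum_card_fiberwise (f := f) (s := outcomes fun ω => Ω ω ∧ E ω)
    (t := Finset.univ) fun _ _ => Finset.mem_coe.2 (Finset.mem_univ _)
  unfold uniformProb
  rw [← Finset.sum_div, hfiber, Nat.cast_sum]
  congr! with i
  ext ω
  simp only [mem_outcomes, Finset.mem_filter, and_assoc]

lemma uniformProb_not (hΩ : ∃ ω, Ω ω) (E : T → Prop) :
    uniformProb Ω (fun ω => ¬E ω) = 1 - uniformProb Ω E := by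
  have htrue : uniformProb Ω (fun _ => True) = 1 := by
    obtain ⟨ω, hω⟩ := hΩ
    simp only [uniformProb, and_true]
    exact div_self (Nat.cast_ne_zero.2 (Finset.card_ne_zero_of_mem (mem_outcomes.2 hω)))
  have hsum := sum_uniformProb_fiber Ω (fun _ => True) E
  rw [Fintype.univ_Prop, Finset.sum_pair (by simp), htrue] at hsum
  simp only [true_and, eq_iff_iff, iff_true, iff_false] at hsum
  linarith

/-- Markov's inequality for the number of events that occur. -/
lemma uniformProb_le_card_filter_mul_le (s : Finset κ) (Ω : T → Prop) (F : κ → T → Prop)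
    [∀ i, DecidablePred (F i)] (m : ℝ) :
    uniformProb Ω (fun ω => m ≤ (s.filter fun i => F i ω).card) * m ≤
      ∑ i ∈ s, uniformProb Ω (F i) := by
  unfold uniformProb
  rw [← Finset.sum_div, div_mul_eq_mul_div]
  gcongr
  set A := outcomes fun ω => Ω ω ∧ m ≤ (s.filter fun i => F i ω).card
  calc (A.card : ℝ) * m = ∑ _ ∈ A, m := by rw [Finset.sum_const, nsmul_eq_mul]
    _ ≤ ∑ ω ∈ A, ((s.filter fun i => F i ω).card : ℝ) :=
        Finset.sum_le_sum fun _ hω => (mem_outcomes.1 hω).2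
    _ = ∑ i ∈ s, ((A.filter (F i)).card : ℝ) := by
        exact_mod_cast Finset.sum_card_bipartiteAbove_eq_sum_card_bipartiteBelow
          (s := A) (t := s) fun ω i => F i ω
    _ ≤ ∑ i ∈ s, ((outcomes fun ω => Ω ω ∧ F i ω).card : ℝ) := by
        gcongr with i _
        intro ω hω
        simp only [A, Finset.mem_filter, mem_outcomes] at hω ⊢
        exact ⟨hω.1.1, hω.2⟩

end UniformProb

/-! ### Random systems of disjoint perfect matchings -/

section MatchingSystem

variable {ι V : Type*}

/-- A family of pairwise edge-disjoint perfect matchings on `V`, each encoded by the map sending a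
vertex to its partner. -/
structure IsMatchingSystem (φ : ι → V → V) : Prop where
  involutive : ∀ c, (φ c).Involutive
  ne_self : ∀ c x, φ c x ≠ x
  color_inj : ∀ {c c' x}, φ c x = φ c' x → c = c'

namespace IsMatchingSystem

variable {φ : ι → V → V}

lemma comp (hφ : IsMatchingSystem φ) {κ : Type*} {f : κ → ι} (hf : f.Injective) :
    IsMatchingSystem fun a => φ (f a) :=
  ⟨fun a => hφ.involutive (f a), fun a => hφ.ne_self (f a), fun h => hf (hφ.color_inj h)⟩

end IsMatchingSystem

variable {φ : ι → V → V} {c : ι} {x y u : V}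

/-- The vertex `u` can take over the role of `y` at `x`: switching the edges of colour `c` at `y`
and `u` creates no double edge. -/
def IsSwitchable (φ : ι → V → V) (c : ι) (x y u : V) : Prop :=
  u ≠ x ∧ u ≠ y ∧ (∀ c', φ c' x ≠ u) ∧ ∀ c', φ c (φ c' y) ≠ u

/-- The event `E` is preserved when the matching of colour `c` is changed away from `U`. -/
def IsInsensitiveOff (c : ι) (U : Set V) (E : (ι → V → V) → Prop) : Prop :=
  ∀ φ ψ, IsMatchingSystem φ → IsMatchingSystem ψ → (∀ c', c' ≠ c → ψ c' = φ c') →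
    (∀ z ∈ U, ψ c z = φ c z) → E φ → E ψ

lemma card_le_card_isSwitchable_add [Fintype V] [Fintype ι] (φ : ι → V → V) (c : ι)
    (x y : V) (U : Finset V) :
    Fintype.card V ≤
      (outcomes fun u => IsSwitchable φ c x y u ∧ u ∉ U).card +
        (U.card + 2 * Fintype.card ι + 2) := by
  classical
  have hforbidden : Fintype.card V ≤ (outcomes fun u => IsSwitchable φ c x y u ∧ u ∉ U).card +
      (U ∪ {x, y} ∪ Finset.univ.image (fun c' => φ c' x) ∪
        Finset.univ.image (fun c' => φ c (φ c' y))).card := by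
    rw [← Finset.card_univ]
    refine (Finset.card_le_card fun u _ => ?_).trans (Finset.card_union_le _ _)
    simp only [IsSwitchable, mem_outcomes, Finset.mem_union, Finset.mem_insert,
      Finset.mem_singleton, Finset.mem_image, Finset.mem_univ, true_and]
    grind
  refine hforbidden.trans (Nat.add_le_add_left ?_ _)
  have himage (f : ι → V) : (Finset.univ.image f).card ≤ Fintype.card ι := Finset.card_image_le
  calc _ ≤ U.card + 2 + Fintype.card ι + Fintype.card ι :=
        (Finset.card_union_le _ _).trans (add_le_add ((Finset.card_union_le _ _).trans
          (add_le_add ((Finset.card_union_le _ _).trans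
            (add_le_add_right Finset.card_le_two _)) (himage _))) (himage _))
    _ = U.card + 2 * Fintype.card ι + 2 := by ring

variable [DecidableEq V]

lemma IsSwitchable.apply_ne_swap (h : IsSwitchable φ c x y u) (hφ : IsMatchingSystem φ)
    (hxy : φ c x = y) {c' : ι} (hc : c' ≠ c) (z : V) :
    φ c' z ≠ Equiv.swap y u (φ c (Equiv.swap y u z)) := by
  obtain ⟨hux, huy, hxu, hyu⟩ := h
  have hyx : φ c y = x := by rw [← hxy, hφ.involutive c x]
  have hx : x ≠ y := hxy ▸ (hφ.ne_self c x).symm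
  have hyu' (c' : ι) : φ c' y ≠ φ c u := fun h => hyu c' (by rw [h, hφ.involutive c u])
  obtain rfl | hzy := eq_or_ne z y
  · have huz : φ c u ≠ z := fun h => hux (by rw [← hyx, ← h, hφ.involutive c u])
    rw [Equiv.swap_apply_left, Equiv.swap_apply_of_ne_of_ne huz (hφ.ne_self c u)]
    exact hyu' c'
  obtain rfl | hzu := eq_or_ne z u
  · rw [Equiv.swap_apply_right, hyx, Equiv.swap_apply_of_ne_of_ne hx hux.symm]
    exact fun h => hxu c' (by rw [← h, hφ.involutive c' z])
  rw [Equiv.swap_apply_of_ne_of_ne hzy hzu]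
  obtain hz | hz := eq_or_ne (φ c z) y
  · rw [hz, Equiv.swap_apply_left, show z = x by rw [← hyx, ← hz, hφ.involutive c z]]
    exact hxu c'
  obtain hz' | hz' := eq_or_ne (φ c z) u
  · rw [hz', Equiv.swap_apply_right]
    exact fun h => hyu' c' (by rw [← hz', hφ.involutive c z, ← h, hφ.involutive c' z])
  rw [Equiv.swap_apply_of_ne_of_ne hz hz']
  exact fun h => hc (hφ.color_inj h)

variable [DecidableEq ι]

/-- The switching that replaces the edges `xy` and `uv` of colour `c` by `xu` and `yv`. -/
def switch (φ : ι → V → V) (c : ι) (y u : V) : ι → V → V :=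
  Function.update φ c fun z => Equiv.swap y u (φ c (Equiv.swap y u z))

lemma switch_self (φ : ι → V → V) (c : ι) (y u z : V) :
    switch φ c y u c z = Equiv.swap y u (φ c (Equiv.swap y u z)) := by
  rw [switch, Function.update_self]

lemma switch_of_ne (φ : ι → V → V) {c c' : ι} (hc : c' ≠ c) (y u : V) :
    switch φ c y u c' = φ c' := by
  rw [switch, Function.update_of_ne hc]

lemma switch_switch (φ : ι → V → V) (c : ι) (y u : V) : switch (switch φ c y u) c y u = φ := by
  funext c' z
  obtain rfl | hc := eq_or_ne c' c
  · simp only [switch_self, Equiv.swap_apply_self]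
  · simp only [switch_of_ne _ hc]

lemma IsSwitchable.isMatchingSystem_switch (h : IsSwitchable φ c x y u) (hφ : IsMatchingSystem φ)
    (hxy : φ c x = y) : IsMatchingSystem (switch φ c y u) where
  involutive c' z := by
    obtain rfl | hc := eq_or_ne c' c
    · simp only [switch_self, Equiv.swap_apply_self, hφ.involutive c' _]
    · rw [switch_of_ne _ hc, hφ.involutive c' z]
  ne_self c' z := by
    obtain rfl | hc := eq_or_ne c' c
    · rw [switch_self, Ne, Equiv.swap_apply_eq_iff]
      exact hφ.ne_self c' _
    · rw [switch_of_ne _ hc]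
      exact hφ.ne_self c' z
  color_inj {c₁ c₂ z} heq := by
    by_cases h₁ : c₁ = c <;> by_cases h₂ : c₂ = c
    · rw [h₁, h₂]
    · subst h₁
      rw [switch_self, switch_of_ne _ h₂] at heq
      exact absurd heq.symm (h.apply_ne_swap hφ hxy h₂ z)
    · subst h₂
      rw [switch_self, switch_of_ne _ h₁] at heq
      exact absurd heq (h.apply_ne_swap hφ hxy h₁ z)
    · rw [switch_of_ne _ h₁, switch_of_ne _ h₂] at heq
      exact hφ.color_inj heq

lemma eq_of_switch_eq {ψ : ι → V → V} {u' : V} (hx : x ≠ y) (hu : u ≠ x) (hu' : u' ≠ x)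
    (hφ : φ c x = y) (hψ : ψ c x = y) (h : switch φ c y u = switch ψ c y u') : u = u' := by
  have hcx := congrFun (congrFun h c) x
  rwa [switch_self, switch_self, Equiv.swap_apply_of_ne_of_ne hx hu.symm,
    Equiv.swap_apply_of_ne_of_ne hx hu'.symm, hφ, hψ, Equiv.swap_apply_left,
    Equiv.swap_apply_left] at hcx

lemma IsInsensitiveOff.switch {E : (ι → V → V) → Prop} {U : Set V} (hE : IsInsensitiveOff c U E)
    (hy : y ∉ U) (hu : u ∉ U) (hφ : IsMatchingSystem φ)
    (hswitch : IsMatchingSystem (switch φ c y u)) (hU : ∀ z ∈ U, φ c z ∈ U) (hEφ : E φ) :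
    E (switch φ c y u) := by
  refine hE φ _ hφ hswitch (fun c' hc => switch_of_ne φ hc y u) (fun z hz => ?_) hEφ
  rw [switch_self, Equiv.swap_apply_of_ne_of_ne (ne_of_mem_of_not_mem hz hy)
    (ne_of_mem_of_not_mem hz hu), Equiv.swap_apply_of_ne_of_ne
    (ne_of_mem_of_not_mem (hU z hz) hy) (ne_of_mem_of_not_mem (hU z hz) hu)]

variable [Fintype ι] [Fintype V]

/-- The probability of `E` in a uniformly random system of disjoint perfect matchings of `V`
coloured by `ι`. -/
noncomputable abbrev matchingProb (E : (ι → V → V) → Prop) : ℝ := uniformProb IsMatchingSystem E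

/-- Double counting of the pairs `(φ, u)` with `φ` in the event on the left and `u` switchable: the
switched system lies in `E` and determines the pair. -/
lemma matchingProb_and_apply_eq_mul_le {E : (ι → V → V) → Prop} {U : Finset V}
    (hE : IsInsensitiveOff c U E)
    (hU : ∀ φ, IsMatchingSystem φ → E φ → ∀ z ∈ U, φ c z ∈ U) (x : V) (hy : y ∉ U) {D : ℝ}
    (hD : D ≤ Fintype.card V - 2 * Fintype.card ι - U.card - 2) :
    matchingProb (fun φ => E φ ∧ φ c x = y) * D ≤ matchingProb E := by
  classical
  unfold matchingProb uniformProb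
  rw [div_mul_eq_mul_div]
  gcongr
  set A := outcomes fun φ : ι → V → V => IsMatchingSystem φ ∧ E φ ∧ φ c x = y with hA
  set switchable : (ι → V → V) → Finset V :=
    fun φ => outcomes fun u => IsSwitchable φ c x y u ∧ u ∉ U with hswitchable
  have hD_le (φ : ι → V → V) : D ≤ (switchable φ).card := by
    have hcard : (Fintype.card V : ℝ) ≤
        (switchable φ).card + (U.card + 2 * Fintype.card ι + 2) :=
      mod_cast card_le_card_isSwitchable_add φ c x y U
    linarith
  have hcard : (A.sigma switchable).card ≤
      (outcomes fun φ : ι → V → V => IsMatchingSystem φ ∧ E φ).card := by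
    refine Finset.card_le_card_of_injOn (fun p => switch p.1 c y p.2) ?_ ?_
    · rintro ⟨φ, u⟩ hp
      simp only [hA, hswitchable, Finset.coe_sigma, Set.mem_sigma_iff, Finset.mem_coe,
        mem_outcomes] at hp ⊢
      obtain ⟨⟨hφ, hEφ, hxy⟩, hu, huU⟩ := hp
      have hsystem := hu.isMatchingSystem_switch hφ hxy
      exact ⟨hsystem, hE.switch hy huU hφ hsystem (hU φ hφ hEφ) hEφ⟩
    · rintro ⟨φ, u⟩ hp ⟨ψ, u'⟩ hp' heq
      simp only [hA, hswitchable, Finset.coe_sigma, Set.mem_sigma_iff, Finset.mem_coe,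
        mem_outcomes] at hp hp' heq
      have hx : x ≠ y := hp.1.2.2 ▸ (hp.1.1.ne_self c x).symm
      obtain rfl := eq_of_switch_eq hx hp.2.1.1 hp'.2.1.1 hp.1.2.2 hp'.1.2.2 heq
      rw [← switch_switch φ c y u, heq, switch_switch]
  calc (A.card : ℝ) * D = ∑ _ ∈ A, D := by rw [Finset.sum_const, nsmul_eq_mul]
    _ ≤ ∑ φ ∈ A, ((switchable φ).card : ℝ) := Finset.sum_le_sum fun φ _ => hD_le φ
    _ = ((A.sigma switchable).card : ℝ) := by rw [Finset.card_sigma]; push_cast; rfl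
    _ ≤ _ := by exact_mod_cast hcard

end MatchingSystem

section PrescribedEdges

variable {ι V : Type*} {φ : ι → V → V} {c : ι} {x y : V} {D : ℝ}

/-- The coloured edges in `B` all belong to the matching system `φ`. -/
def ContainsEdges (B : Finset (ι × Sym2 V)) (φ : ι → V → V) : Prop :=
  ∀ p ∈ B, ∀ x ∈ p.2, s(x, φ p.1 x) = p.2

lemma isInsensitiveOff_true (c : ι) (U : Set V) :
    IsInsensitiveOff c U fun _ : ι → V → V => True := fun _ _ _ _ _ _ _ => trivial

variable [DecidableEq V] [DecidableEq ι]

lemma containsEdges_insert {B : Finset (ι × Sym2 V)} (hφ : IsMatchingSystem φ) :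
    ContainsEdges (insert (c, s(x, y)) B) φ ↔ ContainsEdges B φ ∧ φ c x = y := by
  simp only [ContainsEdges, Finset.mem_insert, forall_eq_or_imp]
  rw [and_comm]
  refine and_congr_right fun _ => ⟨fun h => ?_, ?_⟩
  · have hx := h x (Sym2.mem_mk_left x y)
    rw [Sym2.congr_right] at hx
    exact hx
  · rintro rfl z hz
    obtain rfl | rfl := Sym2.mem_iff.1 hz
    · rfl
    · rw [hφ.involutive c x, Sym2.eq_swap]

variable [Fintype V]

/-- The vertices whose partner of colour `c` is prescribed by the coloured edges in `B`. -/
def saturated (c : ι) (B : Finset (ι × Sym2 V)) : Finset V := {x | ∃ p ∈ B, p.1 = c ∧ x ∈ p.2}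

lemma mem_saturated {B : Finset (ι × Sym2 V)} : x ∈ saturated c B ↔ ∃ e, (c, e) ∈ B ∧ x ∈ e := by
  simp [saturated]

lemma card_saturated_le (c : ι) (B : Finset (ι × Sym2 V)) : (saturated c B).card ≤ 2 * B.card := by
  have hsub : saturated c B ⊆ B.biUnion fun p => p.2.toFinset := by
    intro x
    rw [mem_saturated, Finset.mem_biUnion]
    exact fun ⟨e, he, hx⟩ => ⟨(c, e), he, Sym2.mem_toFinset.2 hx⟩
  rw [mul_comm]
  refine (Finset.card_le_card hsub).trans (Finset.card_biUnion_le_card_mul _ _ 2 fun p _ => ?_)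
  rw [Sym2.card_toFinset]
  split_ifs <;> omega

lemma ContainsEdges.apply_mem_saturated {B : Finset (ι × Sym2 V)} (h : ContainsEdges B φ)
    (hx : x ∈ saturated c B) : φ c x ∈ saturated c B := by
  obtain ⟨e, he, hxe⟩ := mem_saturated.1 hx
  have hmem : φ c x ∈ s(x, φ c x) := Sym2.mem_mk_right _ _
  exact mem_saturated.2 ⟨e, he, by rwa [h _ he x hxe] at hmem⟩

lemma IsInsensitiveOff.and_containsEdges {E : (ι → V → V) → Prop} (hE : IsInsensitiveOff c ∅ E)
    (B : Finset (ι × Sym2 V)) :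
    IsInsensitiveOff c (saturated c B) fun φ => E φ ∧ ContainsEdges B φ := by
  rintro φ ψ hφ hψ hne hsat ⟨hEφ, hB⟩
  refine ⟨hE φ ψ hφ hψ hne (fun _ => False.elim) hEφ, ?_⟩
  rintro ⟨c', e⟩ he z hz
  obtain rfl | hc := eq_or_ne c' c
  · rw [hsat z (Finset.mem_coe.2 (mem_saturated.2 ⟨e, he, hz⟩))]
    exact hB _ he z hz
  · rw [hne c' hc]
    exact hB _ he z hz

variable [Fintype ι] {B : Finset (ι × Sym2 V)}

lemma matchingProb_containsEdges_insert :
    matchingProb (ContainsEdges (insert (c, s(x, y)) B)) =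
      matchingProb fun φ => ContainsEdges B φ ∧ φ c x = y :=
  (uniformProb_mono fun _ hφ => (containsEdges_insert hφ).1).antisymm
    (uniformProb_mono fun _ hφ => (containsEdges_insert hφ).2)

lemma matchingProb_and_containsEdges_insert_mul_le {E : (ι → V → V) → Prop}
    (hE : IsInsensitiveOff c ∅ E) (hx : x ∉ saturated c B)
    (hD : D ≤ Fintype.card V - 2 * Fintype.card ι - 2 * B.card - 2) :
    matchingProb (fun φ => E φ ∧ ContainsEdges (insert (c, s(x, y)) B) φ) * D ≤
      matchingProb fun φ => E φ ∧ ContainsEdges B φ := by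
  have hsat : ((saturated c B).card : ℝ) ≤ 2 * B.card := mod_cast card_saturated_le c B
  have heq : matchingProb (fun φ => E φ ∧ ContainsEdges (insert (c, s(x, y)) B) φ) =
      matchingProb fun φ => (E φ ∧ ContainsEdges B φ) ∧ φ c x = y :=
    (uniformProb_mono fun φ hφ => by simp [containsEdges_insert hφ, and_assoc]).antisymm
      (uniformProb_mono fun φ hφ => by simp +contextual [containsEdges_insert hφ])
  by_cases hy : y ∈ saturated c B
  · rw [heq, matchingProb, uniformProb_eq_zero, zero_mul]
    · exact uniformProb_nonneg _ _
    · rintro φ hφ ⟨⟨-, hB⟩, rfl⟩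
      exact hx (hφ.involutive c x ▸ hB.apply_mem_saturated hy)
  · rw [heq]
    exact matchingProb_and_apply_eq_mul_le (hE.and_containsEdges B)
      (fun φ _ hB z => hB.2.apply_mem_saturated) x hy (by linarith)

lemma matchingProb_containsEdges_insert_mul_le (hx : x ∉ saturated c B)
    (hD : D ≤ Fintype.card V - 2 * Fintype.card ι - 2 * B.card - 2) :
    matchingProb (ContainsEdges (insert (c, s(x, y)) B)) * D ≤ matchingProb (ContainsEdges B) := by
  simpa only [true_and] using
    matchingProb_and_containsEdges_insert_mul_le (y := y) (isInsensitiveOff_true c ∅) hx hD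

lemma matchingProb_containsEdges_le (B : Finset (ι × Sym2 V)) (hD0 : 0 < D)
    (hD : D ≤ Fintype.card V - 2 * Fintype.card ι - 2 * B.card - 2) :
    matchingProb (ContainsEdges B) ≤ (1 / D) ^ B.card := by
  induction B using Finset.induction_on with
  | empty => simpa using uniformProb_le_one _ _
  | insert p B hp ih =>
    obtain ⟨c, e⟩ := p
    induction e with | _ x y
    rw [Finset.card_insert_of_notMem hp] at hD ⊢
    push_cast at hD
    by_cases hx : x ∈ saturated c B
    · rw [matchingProb, uniformProb_eq_zero]
      · positivity
      · intro φ hφ h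
        obtain ⟨hB, rfl⟩ := (containsEdges_insert hφ).1 h
        obtain ⟨e, he, hxe⟩ := mem_saturated.1 hx
        exact hp (hB _ he x hxe ▸ he)
    · calc matchingProb (ContainsEdges (insert (c, s(x, y)) B))
          ≤ matchingProb (ContainsEdges B) / D := by
            rw [le_div_iff₀ hD0]
            exact matchingProb_containsEdges_insert_mul_le hx (by linarith)
        _ ≤ (1 / D) ^ B.card / D := by gcongr; exact ih (by linarith)
        _ = (1 / D) ^ (B.card + 1) := by rw [pow_succ, mul_one_div]

end PrescribedEdges

/-! ### Words that fix a vertex -/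

section ClosedWalks

variable {ι V : Type*} [DecidableEq V] {φ : ι → V → V} {c : ι} {x r : V} {l : List ι}
  {U : Finset V} {D : ℝ}

/-- The walk from `x` spelled by `l`, first letter first, enters `U` or one of the vertices that it
has already visited after its start. -/
def HitsSeen (φ : ι → V → V) : List ι → Finset V → V → Prop
  | [], _, _ => False
  | c :: l, U, x => φ c x ∈ U ∨ HitsSeen φ l (insert (φ c x) U) (φ c x)

lemma hitsSeen_of_wordAct_reverse_mem (hl : l ≠ []) (h : wordAct φ l.reverse x ∈ U) :
    HitsSeen φ l U x := by
  induction l generalizing U x with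
  | nil => exact absurd rfl hl
  | cons c l ih =>
    rw [List.reverse_cons, wordAct_append] at h
    obtain rfl | hl' := eq_or_ne l []
    · exact Or.inl h
    · exact Or.inr (ih hl' (Finset.mem_insert_of_mem h))

variable [DecidableEq ι] [Fintype V] [Fintype ι] {B : Finset (ι × Sym2 V)}

/-- Expose the first edge of the walk. -/
lemma matchingProb_hitsSeen_cons_mul_le (hx : x ∉ saturated c B) {K : ℝ} (hK : 0 ≤ K) (hD0 : 0 ≤ D)
    (hD : D ≤ Fintype.card V - 2 * Fintype.card ι - 2 * B.card - 2)
    (hl : ∀ y ∉ U, matchingProb (fun φ => ContainsEdges (insert (c, s(x, y)) B) φ ∧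
      HitsSeen φ l (insert y U) y) * D ≤ K * matchingProb (ContainsEdges (insert (c, s(x, y)) B))) :
    matchingProb (fun φ => ContainsEdges B φ ∧ HitsSeen φ (c :: l) U x) * D ≤
      (U.card + K) * matchingProb (ContainsEdges B) := by
  have hfiber (y : V) :
      matchingProb (fun φ => (ContainsEdges B φ ∧ HitsSeen φ (c :: l) U x) ∧ φ c x = y) * D ≤
        (if y ∈ U then matchingProb (ContainsEdges B) else 0) +
          K * matchingProb (ContainsEdges (insert (c, s(x, y)) B)) := by
    split_ifs with hy
    · have hsub :
          matchingProb (fun φ => (ContainsEdges B φ ∧ HitsSeen φ (c :: l) U x) ∧ φ c x = y) ≤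
            matchingProb (ContainsEdges (insert (c, s(x, y)) B)) :=
        uniformProb_mono fun φ hφ h => (containsEdges_insert hφ).2 ⟨h.1.1, h.2⟩
      exact (mul_le_mul_of_nonneg_right hsub hD0).trans
        ((matchingProb_containsEdges_insert_mul_le hx hD).trans
          (le_add_of_nonneg_right (mul_nonneg hK (uniformProb_nonneg _ _))))
    · rw [zero_add]
      refine (mul_le_mul_of_nonneg_right (uniformProb_mono ?_) hD0).trans (hl y hy)
      rintro φ hφ ⟨⟨hB, hhit⟩, rfl⟩
      exact ⟨(containsEdges_insert hφ).2 ⟨hB, rfl⟩, hhit.resolve_left hy⟩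
  calc _ = ∑ y, matchingProb
          (fun φ => (ContainsEdges B φ ∧ HitsSeen φ (c :: l) U x) ∧ φ c x = y) * D := by
        rw [← Finset.sum_mul, sum_uniformProb_fiber]
    _ ≤ ∑ y, ((if y ∈ U then matchingProb (ContainsEdges B) else 0) +
          K * matchingProb (ContainsEdges (insert (c, s(x, y)) B))) :=
        Finset.sum_le_sum fun y _ => hfiber y
    _ = (U.card + K) * matchingProb (ContainsEdges B) := by
        simp only [matchingProb_containsEdges_insert]
        rw [Finset.sum_add_distrib, ← Finset.mul_sum, sum_uniformProb_fiber, Finset.sum_ite_mem,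
          Finset.univ_inter, Finset.sum_const, nsmul_eq_mul, add_mul]

lemma matchingProb_hitsSeen_mul_le (hl : IsReduced l) (hx : x ∈ U)
    (hB : ∀ p ∈ B, ∀ z ∈ p.2, z ∈ U) (hxB : ∀ c ∈ l.head?, x ∉ saturated c B) (hD0 : 0 ≤ D)
    (hD : D ≤ Fintype.card V - 2 * Fintype.card ι - 2 * (B.card + l.length) - 2) :
    matchingProb (fun φ => ContainsEdges B φ ∧ HitsSeen φ l U x) * D ≤
      l.length * (U.card + l.length) * matchingProb (ContainsEdges B) := by
  induction l generalizing B U x with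
  | nil =>
    rw [matchingProb, uniformProb_eq_zero fun _ _ h => h.2]
    simp
  | cons c l ih =>
    obtain ⟨hc, hl⟩ := isReduced_cons.1 hl
    simp only [List.length_cons, Nat.cast_add, Nat.cast_one] at hD ⊢
    have hlen : (0 : ℝ) ≤ l.length := Nat.cast_nonneg _
    refine (matchingProb_hitsSeen_cons_mul_le (K := l.length * (U.card + (l.length + 1)))
      (hxB c rfl) (by positivity) hD0 (by linarith) fun y hy => ?_).trans ?_
    · have hcard : ((insert (c, s(x, y)) B).card : ℝ) ≤ B.card + 1 :=
        mod_cast Finset.card_insert_le _ _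
      have hy_step := ih (B := insert (c, s(x, y)) B) (U := insert y U) hl
        (Finset.mem_insert_self y U) ?_ ?_ (by linarith)
      · rw [Finset.card_insert_of_notMem hy] at hy_step
        push_cast at hy_step
        linarith
      · intro p hp z hz
        obtain rfl | hp := Finset.mem_insert.1 hp
        · obtain rfl | rfl := Sym2.mem_iff.1 hz
          exacts [Finset.mem_insert_of_mem hx, Finset.mem_insert_self _ _]
        · exact Finset.mem_insert_of_mem (hB p hp z hz)
      · intro c' hc' hsat
        obtain ⟨e, he, hye⟩ := mem_saturated.1 hsat
        obtain he | he := Finset.mem_insert.1 he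
        · obtain ⟨rfl, -⟩ := Prod.ext_iff.1 he
          exact hc hc'
        · exact hy (hB _ he y hye)
    · refine mul_le_mul_of_nonneg_right ?_ (uniformProb_nonneg _ _)
      linarith

lemma matchingProb_wordAct_eq_self_le {w : List ι} (hw : reduceWord w ≠ []) (r : V) (hD0 : 0 < D)
    (hD : D ≤ Fintype.card V - 2 * Fintype.card ι - 2 * w.length - 2) :
    matchingProb (fun φ => wordAct φ w r = r) ≤ w.length * (w.length + 1) / D := by
  have hlen : ((reduceWord w).length : ℝ) ≤ w.length := mod_cast length_reduceWord_le w
  have hsub : matchingProb (fun φ => wordAct φ w r = r) ≤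
      matchingProb fun φ => ContainsEdges ∅ φ ∧ HitsSeen φ (reduceWord w).reverse {r} r := by
    refine uniformProb_mono fun φ hφ h => ⟨fun p hp => absurd hp (Finset.notMem_empty p), ?_⟩
    refine hitsSeen_of_wordAct_reverse_mem (List.reverse_ne_nil_iff.2 hw) ?_
    rw [List.reverse_reverse, wordAct_reduceWord hφ.involutive, h]
    exact Finset.mem_singleton_self r
  have hhit := matchingProb_hitsSeen_mul_le (B := (∅ : Finset (ι × Sym2 V))) (U := {r}) (x := r)
    (isReduced_reduceWord w).reverse (Finset.mem_singleton_self r) (by simp)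
    (fun c _ h => by simp [mem_saturated] at h) hD0.le
    (by rw [List.length_reverse, Finset.card_empty]; push_cast; linarith)
  rw [List.length_reverse, Finset.card_singleton, Nat.cast_one] at hhit
  rw [le_div_iff₀ hD0]
  calc _ ≤ _ := mul_le_mul_of_nonneg_right hsub hD0.le
    _ ≤ _ := hhit
    _ ≤ (w.length : ℝ) * (1 + w.length) * 1 := by
        gcongr
        exacts [uniformProb_nonneg _ _, uniformProb_le_one _ _]
    _ = w.length * (w.length + 1) := by ring

end ClosedWalks

/-! ### Edges of a fresh colour between large sets -/

section Link

variable {ι V : Type*} [DecidableEq V] [DecidableEq ι] [Fintype V] [Fintype ι] {c : ι}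
  {E : (ι → V → V) → Prop} {X Y : Finset V} {D : ℝ}

/-- Expose the edge of colour `c` at `x`. -/
lemma matchingProb_forall_apply_notMem_le_of_erase {B : Finset (ι × Sym2 V)} {x : V} {θ : ℝ}
    (hE : IsInsensitiveOff c ∅ E) (hx : x ∈ X) (hxB : x ∉ saturated c B) (hθ : 0 ≤ θ) (hD0 : 0 < D)
    (hD : D ≤ Fintype.card V - 2 * Fintype.card ι - 2 * B.card - 2)
    (hstep : ∀ y ∉ Y, matchingProb (fun φ => (E φ ∧ ContainsEdges (insert (c, s(x, y)) B) φ) ∧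
        ∀ z ∈ (X.erase x).erase y, φ c z ∉ Y) ≤
      θ * matchingProb fun φ => E φ ∧ ContainsEdges (insert (c, s(x, y)) B) φ) :
    matchingProb (fun φ => (E φ ∧ ContainsEdges B φ) ∧ ∀ z ∈ X, φ c z ∉ Y) ≤
      Yᶜ.card / D * θ * matchingProb fun φ => E φ ∧ ContainsEdges B φ := by
  set p := matchingProb fun φ => E φ ∧ ContainsEdges B φ
  have hfiber (y : V) : matchingProb
      (fun φ => ((E φ ∧ ContainsEdges B φ) ∧ ∀ z ∈ X, φ c z ∉ Y) ∧ φ c x = y) ≤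
        if y ∈ Yᶜ then θ * (p / D) else 0 := by
    split_ifs with hy
    · rw [Finset.mem_compl] at hy
      calc _ ≤ _ := uniformProb_mono fun φ hφ h =>
              ⟨⟨h.1.1.1, (containsEdges_insert hφ).2 ⟨h.1.1.2, h.2⟩⟩, fun z hz =>
                h.1.2 z (Finset.mem_of_mem_erase (Finset.mem_of_mem_erase hz))⟩
        _ ≤ _ := hstep y hy
        _ ≤ θ * (p / D) := by
            gcongr
            rw [le_div_iff₀ hD0]
            exact matchingProb_and_containsEdges_insert_mul_le hE hxB hD
    · rw [Finset.mem_compl, not_not] at hy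
      refine (uniformProb_eq_zero fun φ _ h => h.1.2 x hx ?_).le
      rwa [h.2]
  calc _ = ∑ y, matchingProb
          (fun φ => ((E φ ∧ ContainsEdges B φ) ∧ ∀ z ∈ X, φ c z ∉ Y) ∧ φ c x = y) :=
        (sum_uniformProb_fiber _ _ _).symm
    _ ≤ ∑ y, if y ∈ Yᶜ then θ * (p / D) else 0 := Finset.sum_le_sum fun y _ => hfiber y
    _ = Yᶜ.card / D * θ * p := by
        rw [Finset.sum_ite_mem, Finset.univ_inter, Finset.sum_const, nsmul_eq_mul]
        ring

lemma matchingProb_forall_apply_notMem_le_pow_mul {q : ℕ} {B : Finset (ι × Sym2 V)}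
    (hE : IsInsensitiveOff c ∅ E) (hX : 2 * q ≤ X.card) (hXB : ∀ x ∈ X, x ∉ saturated c B)
    (hD0 : 0 < D) (hD : D ≤ Fintype.card V - 2 * Fintype.card ι - 2 * (B.card + q) - 2) :
    matchingProb (fun φ => (E φ ∧ ContainsEdges B φ) ∧ ∀ x ∈ X, φ c x ∉ Y) ≤
      (Yᶜ.card / D) ^ q * matchingProb fun φ => E φ ∧ ContainsEdges B φ := by
  induction q generalizing B X with
  | zero =>
    rw [pow_zero, one_mul]
    exact uniformProb_mono fun _ _ h => h.1
  | succ q ih =>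
    push_cast at hD
    obtain ⟨x, hx⟩ : X.Nonempty := Finset.card_pos.1 (by omega)
    rw [pow_succ']
    refine matchingProb_forall_apply_notMem_le_of_erase hE hx (hXB x hx) (by positivity) hD0
      (by linarith [(Nat.cast_nonneg q : (0 : ℝ) ≤ q)]) fun y _ => ih ?_ ?_ ?_
    · have hx_erase := Finset.card_erase_of_mem hx
      have hy_erase := Finset.pred_card_le_card_erase (s := X.erase x) (a := y)
      omega
    · intro z hz hsat
      simp only [Finset.mem_erase] at hz
      obtain ⟨e, he, hze⟩ := mem_saturated.1 hsat
      obtain he | he := Finset.mem_insert.1 he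
      · obtain ⟨-, rfl⟩ := Prod.ext_iff.1 he
        obtain rfl | rfl := Sym2.mem_iff.1 hze
        exacts [hz.2.1 rfl, hz.1 rfl]
      · exact hXB z hz.2.2 (mem_saturated.2 ⟨e, he, hze⟩)
    · have hcard : ((insert (c, s(x, y)) B).card : ℝ) ≤ B.card + 1 :=
        mod_cast Finset.card_insert_le _ _
      linarith

lemma matchingProb_forall_apply_notMem_le (X Y : (ι → V → V) → Finset V) {q m : ℕ}
    (hX : ∀ φ ψ, (∀ c', c' ≠ c → ψ c' = φ c') → X ψ = X φ)
    (hY : ∀ φ ψ, (∀ c', c' ≠ c → ψ c' = φ c') → Y ψ = Y φ) (hD0 : 0 < D)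
    (hD : D ≤ Fintype.card V - 2 * Fintype.card ι - 2 * q - 2) :
    matchingProb (fun φ => (2 * q ≤ (X φ).card ∧ (Y φ)ᶜ.card ≤ m) ∧ ∀ x ∈ X φ, φ c x ∉ Y φ) ≤
      (m / D) ^ q := by
  have hfiber (p : Finset V × Finset V) :
      matchingProb (fun φ => ((2 * q ≤ (X φ).card ∧ (Y φ)ᶜ.card ≤ m) ∧ ∀ x ∈ X φ, φ c x ∉ Y φ) ∧
        (X φ, Y φ) = p) ≤ (m / D) ^ q * matchingProb fun φ => True ∧ (X φ, Y φ) = p := by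
    by_cases hp : 2 * q ≤ p.1.card ∧ p.2ᶜ.card ≤ m
    · have hm : (p.2ᶜ.card : ℝ) ≤ m := mod_cast hp.2
      have hinsensitive : IsInsensitiveOff c ∅ fun φ => (X φ, Y φ) = p :=
        fun φ ψ _ _ hne _ h => by
          simpa only [hX φ ψ hne, hY φ ψ hne] using h
      calc _ ≤ matchingProb fun φ => ((X φ, Y φ) = p ∧ ContainsEdges ∅ φ) ∧
                ∀ x ∈ p.1, φ c x ∉ p.2 := by
            refine uniformProb_mono fun φ _ => ?_
            rintro ⟨⟨-, h⟩, rfl⟩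
            exact ⟨⟨rfl, by simp [ContainsEdges]⟩, h⟩
        _ ≤ (p.2ᶜ.card / D) ^ q * matchingProb fun φ => (X φ, Y φ) = p ∧ ContainsEdges ∅ φ :=
            matchingProb_forall_apply_notMem_le_pow_mul hinsensitive hp.1
              (by simp [mem_saturated]) hD0 (by simpa using hD)
        _ ≤ _ := by
            gcongr
            · exact uniformProb_nonneg _ _
            · exact uniformProb_mono fun _ _ h => ⟨trivial, h.1⟩
    · rw [matchingProb, uniformProb_eq_zero]
      · exact mul_nonneg (by positivity) (uniformProb_nonneg _ _)
      · rintro φ - ⟨⟨h, -⟩, rfl⟩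
        exact hp h
  calc _ = _ := (sum_uniformProb_fiber _ _ fun φ => (X φ, Y φ)).symm
    _ ≤ _ := Finset.sum_le_sum fun p _ => hfiber p
    _ = (m / D) ^ q * matchingProb (ι := ι) (V := V) fun _ => True := by
        rw [← Finset.mul_sum, sum_uniformProb_fiber]
    _ ≤ (m / D) ^ q := mul_le_of_le_one_right (by positivity) (uniformProb_le_one _ _)

end Link

/-! ### Small dense vertex sets -/

section Dense

variable {ι V : Type*}

/-- Some set of at most `H` vertices spans more coloured edges than it has vertices. -/
def HasDenseSet (H : ℕ) (φ : ι → V → V) : Prop :=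
  ∃ (W : Finset V) (B : Finset (ι × Sym2 V)), W.card ≤ H ∧ B.card = W.card + 1 ∧
    (∀ p ∈ B, ∀ x ∈ p.2, x ∈ W) ∧ ContainsEdges B φ

variable [DecidableEq V] [DecidableEq ι] [Fintype V] [Fintype ι]

lemma matchingProb_spans_le {H w : ℕ} (hw : w ≤ H)
    (hV : 4 * Fintype.card ι + 4 * (H + 1) + 4 ≤ Fintype.card V) {W : Finset V} (hW : W.card = w) :
    matchingProb (fun φ : ι → V → V => ∃ B ∈ Finset.powersetCard (w + 1)
        ((Finset.univ : Finset ι) ×ˢ W.sym2), ContainsEdges B φ) ≤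
      ((2 * Fintype.card ι * (H + 1) ^ 2) / Fintype.card V) ^ (w + 1) := by
  have hV' : (4 * Fintype.card ι + 4 * (H + 1) + 4 : ℝ) ≤ Fintype.card V := mod_cast hV
  have hwH : (w : ℝ) ≤ H := mod_cast hw
  have hcontains (B) (hB : B ∈ Finset.powersetCard (w + 1) ((Finset.univ : Finset ι) ×ˢ W.sym2)) :
      matchingProb (ContainsEdges B) ≤ (2 / (Fintype.card V : ℝ)) ^ (w + 1) := by
    have hcard := (Finset.mem_powersetCard.1 hB).2
    have hle := matchingProb_containsEdges_le B (D := (Fintype.card V : ℝ) / 2) (by linarith)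
      (by rw [hcard]; push_cast; linarith)
    rwa [hcard, one_div_div] at hle
  have hchoose : ((Fintype.card ι * (w + 1).choose 2).choose (w + 1) : ℝ) ≤
      (Fintype.card ι * (H + 1) ^ 2) ^ (w + 1) := by
    have hpow : (w + 1).choose 2 ≤ (H + 1) ^ 2 := (Nat.choose_le_pow _ _).trans (by gcongr)
    exact_mod_cast (Nat.choose_le_pow _ (w + 1)).trans
      (Nat.pow_le_pow_left (Nat.mul_le_mul_left _ hpow) _)
  calc _ ≤ _ := uniformProb_exists_le _ _ _
    _ ≤ _ := Finset.sum_le_card_nsmul _ _ _ hcontains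
    _ = ((Fintype.card ι * (w + 1).choose 2).choose (w + 1) : ℝ) *
          (2 / (Fintype.card V : ℝ)) ^ (w + 1) := by
        rw [Finset.card_powersetCard, nsmul_eq_mul, Finset.card_product, Finset.card_sym2, hW,
          Finset.card_univ]
    _ ≤ (Fintype.card ι * (H + 1) ^ 2) ^ (w + 1) * (2 / (Fintype.card V : ℝ)) ^ (w + 1) := by gcongr
    _ = _ := by rw [← mul_pow]; ring

lemma matchingProb_hasDenseSet_le [Nonempty ι] {H : ℕ}
    (hV : 4 * Fintype.card ι + 4 * (H + 1) + 4 ≤ Fintype.card V) :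
    matchingProb (HasDenseSet (ι := ι) (V := V) H) ≤
      (H + 1) * (2 * Fintype.card ι * (H + 1) ^ 2) ^ (H + 1) / Fintype.card V := by
  set a : ℝ := 2 * Fintype.card ι * (H + 1) ^ 2
  have hN : (0 : ℝ) < Fintype.card V := by norm_cast; omega
  have ha_one : 1 ≤ a := by
    have hι : (1 : ℝ) ≤ Fintype.card ι := mod_cast Fintype.card_pos
    have hH : (1 : ℝ) ≤ (H + 1) ^ 2 := one_le_pow₀ (by linarith [(Nat.cast_nonneg H : (0 : ℝ) ≤ H)])
    nlinarith
  have hsize (w) (hw : w ∈ Finset.range (H + 1)) :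
      matchingProb (fun φ : ι → V → V => ∃ W ∈ Finset.powersetCard w (Finset.univ : Finset V),
        ∃ B ∈ Finset.powersetCard (w + 1) ((Finset.univ : Finset ι) ×ˢ W.sym2),
          ContainsEdges B φ) ≤ a ^ (H + 1) / Fintype.card V := by
    have hwH : w ≤ H := Nat.lt_succ_iff.1 (Finset.mem_range.1 hw)
    calc _ ≤ _ := uniformProb_exists_le _ _ _
      _ ≤ _ := Finset.sum_le_card_nsmul _ _ _ fun W hW =>
          matchingProb_spans_le hwH hV (Finset.mem_powersetCard.1 hW).2
      _ = ((Fintype.card V).choose w : ℝ) * (a / Fintype.card V) ^ (w + 1) := by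
          rw [Finset.card_powersetCard, nsmul_eq_mul, Finset.card_univ]
      _ ≤ (Fintype.card V : ℝ) ^ w * (a / Fintype.card V) ^ (w + 1) := by
          gcongr
          exact_mod_cast Nat.choose_le_pow _ _
      _ = a ^ (w + 1) / Fintype.card V := by
          rw [div_pow, pow_succ (Fintype.card V : ℝ) w]
          field_simp
      _ ≤ a ^ (H + 1) / Fintype.card V := by gcongr
  calc _ ≤ matchingProb (fun φ : ι → V → V => ∃ w ∈ Finset.range (H + 1),
            ∃ W ∈ Finset.powersetCard w (Finset.univ : Finset V),
            ∃ B ∈ Finset.powersetCard (w + 1) ((Finset.univ : Finset ι) ×ˢ W.sym2),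
              ContainsEdges B φ) := by
        refine uniformProb_mono fun φ _ ⟨W, B, hWH, hcard, hBW, hB⟩ => ?_
        refine ⟨W.card, Finset.mem_range.2 (Nat.lt_succ_of_le hWH), W, by simp, B, ?_, hB⟩
        refine Finset.mem_powersetCard.2 ⟨fun p hp => ?_, hcard⟩
        exact Finset.mem_product.2 ⟨Finset.mem_univ _, Finset.mem_sym2_iff.2 (hBW p hp)⟩
    _ ≤ _ := uniformProb_exists_le _ _ _
    _ ≤ _ := Finset.sum_le_card_nsmul _ _ _ hsize
    _ = (H + 1) * a ^ (H + 1) / Fintype.card V := by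
        rw [Finset.card_range, nsmul_eq_mul, mul_div_assoc]
        push_cast
        rfl

end Dense

/-! ### Matching systems and tuples of perfect matchings -/

section Graphs

variable {ι V : Type*} {φ : ι → V → V}

/-- The matching of colour `c` of a system, as a graph. -/
def matchingGraph (hφ : IsMatchingSystem φ) (c : ι) : SimpleGraph V where
  Adj x y := φ c x = y
  symm := ⟨fun x y h => by rw [← h, hφ.involutive c x]⟩
  loopless := ⟨hφ.ne_self c⟩

variable {N d : ℕ}

lemma isPMTuple_matchingGraph {φ : Fin d → Fin N → Fin N} (hφ : IsMatchingSystem φ) :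
    IsPMTuple (matchingGraph hφ) := by
  refine ⟨fun c v => ?_, fun c c' hc => SimpleGraph.disjoint_left.2 fun x y h h' => ?_⟩
  · have hneighbor : (matchingGraph hφ c).neighborSet v = {φ c v} :=
      Set.ext fun y => eq_comm (a := φ c v)
    rw [hneighbor, Nat.card_unique]
  · exact hc (hφ.color_inj (Eq.trans h (Eq.symm h')))

lemma exists_matchingGraph_eq {M : Fin d → SimpleGraph (Fin N)} (hM : IsPMTuple M) :
    ∃ φ, ∃ hφ : IsMatchingSystem φ, matchingGraph hφ = M := by
  have hpartner (c v) : ∃ y, ∀ z, (M c).Adj v z ↔ z = y := by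
    obtain ⟨⟨y, hy⟩, huniq⟩ := Nat.card_eq_one_iff_exists.1 (hM.1 c v)
    exact ⟨y, fun z => ⟨fun hz => congrArg Subtype.val (huniq ⟨z, hz⟩), fun hz => hz ▸ hy⟩⟩
  choose φ hφ using hpartner
  have hadj (c x) : (M c).Adj x (φ c x) := (hφ c x _).2 rfl
  have hsystem : IsMatchingSystem φ :=
    { involutive := fun c x => ((hφ c _ _).1 (hadj c x).symm).symm
      ne_self := fun c x => (hadj c x).ne'
      color_inj := fun {c c' x} h => by
        by_contra hc
        exact SimpleGraph.disjoint_left.1 (hM.2 c c' hc) x _ (hadj c x) (h ▸ hadj c' x) }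
  refine ⟨φ, hsystem, funext fun c => SimpleGraph.ext (funext₂ fun x y => ?_)⟩
  rw [hφ c x y]
  exact propext eq_comm

lemma card_isPMTuple_and_eq (A : (Fin d → SimpleGraph (Fin N)) → Prop) :
    (outcomes fun M => IsPMTuple M ∧ A M).card =
      (outcomes fun φ => IsMatchingSystem φ ∧
        ∃ hφ : IsMatchingSystem φ, A (matchingGraph hφ)).card := by
  symm
  refine Finset.card_bij (fun φ hφ => matchingGraph (mem_outcomes.1 hφ).1) ?_ ?_ ?_
  · intro φ hφ
    obtain ⟨hφ, hφ', hA⟩ := mem_outcomes.1 hφ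
    exact mem_outcomes.2 ⟨isPMTuple_matchingGraph hφ, hA⟩
  · intro φ hφ ψ hψ h
    funext c x
    have hadj : (matchingGraph (mem_outcomes.1 hφ).1 c).Adj x (φ c x) := rfl
    rw [h] at hadj
    exact Eq.symm hadj
  · intro M hM
    obtain ⟨hM, hA⟩ := mem_outcomes.1 hM
    obtain ⟨φ, hφ, rfl⟩ := exists_matchingGraph_eq hM
    exact ⟨φ, mem_outcomes.2 ⟨hφ, hφ, hA⟩, rfl⟩

lemma tupleProb_eq_matchingProb (A : (Fin d → SimpleGraph (Fin N)) → Prop) :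
    tupleProb N d A = matchingProb fun φ => ∃ hφ : IsMatchingSystem φ, A (matchingGraph hφ) := by
  have htotal := card_isPMTuple_and_eq (N := N) (d := d) fun _ => True
  simp only [and_true, exists_prop, and_self] at htotal
  rw [matchingProb, uniformProb, ← card_isPMTuple_and_eq, ← htotal, tupleProb, outcomes, outcomes]
  congr!

/-- The `c`-th matching joins the vertex `a` of the first half to `a + c` in the second half. -/
lemma exists_isMatchingSystem {m : ℕ} (hm : m ≠ 0) (hd : d ≤ m) :
    ∃ φ : Fin d → Fin (m + m) → Fin (m + m), IsMatchingSystem φ := by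
  have : NeZero m := ⟨hm⟩
  let e : Fin (m + m) ≃ Fin m ⊕ Fin m := finSumFinEquiv.symm
  let shift (c : Fin d) : Fin m ⊕ Fin m → Fin m ⊕ Fin m :=
    Sum.elim (fun a => Sum.inr (a + c.castLE hd)) fun a => Sum.inl (a - c.castLE hd)
  refine ⟨fun c x => e.symm (shift c (e x)), fun c x => ?_, fun c x h => ?_, fun {c c' x} h => ?_⟩
  · have hshift : shift c (shift c (e x)) = e x := by rcases e x with a | a <;> simp [shift]
    simp only [Equiv.apply_symm_apply, hshift, Equiv.symm_apply_apply]
  · have hshift : shift c (e x) = e x := e.symm_apply_eq.1 h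
    rcases hx : e x with a | a <;> simp [hx, shift] at hshift
  · have hshift : shift c (e x) = shift c' (e x) := e.symm.injective h
    rcases hx : e x with a | a <;> simpa [hx, shift] using hshift

end Graphs

/-! ### Maximal edge sets of large girth -/

section Girth

variable {α V : Type*} {φ : α → V → V} {F : Set (α × Sym2 V)} {a a' c : α} {x x' z : V}
  {w u : List α} {h l : ℕ}

/-- The coloured edge traversed by the step of colour `a` from `x`. -/
def stepEdge (φ : α → V → V) (a : α) (x : V) : α × Sym2 V := (a, s(x, φ a x))

/-- The step of colour `a` from `x` traverses an edge of `F`. -/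
def StepIn (φ : α → V → V) (F : Set (α × Sym2 V)) (a : α) (x : V) : Prop := stepEdge φ a x ∈ F

/-- No reduced closed walk of positive length at most `2 * h` stays inside `F`. -/
def HasGirthAbove (φ : α → V → V) (h : ℕ) (F : Set (α × Sym2 V)) : Prop :=
  ∀ w x, IsReduced w → w ≠ [] → w.length ≤ 2 * h → AlongWord φ (StepIn φ F) w x → wordAct φ w x ≠ x

lemma stepEdge_apply (hφ : ∀ a, (φ a).Involutive) (a : α) (x : V) :
    stepEdge φ a (φ a x) = stepEdge φ a x := by
  rw [stepEdge, hφ a x, Sym2.eq_swap, stepEdge]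

lemma stepIn_apply (hφ : ∀ a, (φ a).Involutive) (h : StepIn φ F a x) : StepIn φ F a (φ a x) := by
  rwa [StepIn, stepEdge_apply hφ]

lemma eq_of_stepEdge_eq (h : stepEdge φ c z = stepEdge φ a x) : c = a ∧ (z = x ∨ z = φ a x) := by
  simp only [stepEdge, Prod.mk.injEq, Sym2.eq_iff] at h
  tauto

lemma exists_maximal_hasGirthAbove [Finite α] [Finite V] (φ : α → V → V) (h : ℕ) :
    ∃ F, Maximal (HasGirthAbove φ h) F := by
  have hempty : HasGirthAbove φ h ∅ := by
    intro w x _ hw _ hs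
    cases w with
    | nil => exact absurd rfl hw
    | cons a w => exact absurd hs.2 (Set.notMem_empty _)
  have : Finite (Sym2 V) := Quot.finite _
  obtain ⟨F, -, hF⟩ :=
    Set.Finite.exists_le_maximal (Set.toFinite {F | HasGirthAbove φ h F}) hempty
  exact ⟨F, hF⟩

/-- A maximal set of coloured edges without short cycles. -/
noncomputable def maxGirthSubset [Finite α] [Finite V] (φ : α → V → V) (h : ℕ) :
    Set (α × Sym2 V) := (exists_maximal_hasGirthAbove φ h).choose

lemma maximal_maxGirthSubset [Finite α] [Finite V] (φ : α → V → V) (h : ℕ) :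
    Maximal (HasGirthAbove φ h) (maxGirthSubset φ h) :=
  (exists_maximal_hasGirthAbove φ h).choose_spec

lemma alongWord_or_exists_first_use {e : α × Sym2 V}
    (hs : AlongWord φ (StepIn φ (insert e F)) w x) :
    AlongWord φ (StepIn φ F) w x ∨ ∃ w₂ c w₁, w = w₂ ++ c :: w₁ ∧
      AlongWord φ (StepIn φ F) w₁ x ∧ stepEdge φ c (wordAct φ w₁ x) = e := by
  induction w with
  | nil => exact Or.inl trivial
  | cons a w ih =>
    obtain hw | ⟨w₂, c, w₁, rfl, hw₁, he⟩ := ih hs.1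
    · obtain he | hF := hs.2
      · exact Or.inr ⟨[], a, w, rfl, hw, he⟩
      · exact Or.inl ⟨hw, hF⟩
    · exact Or.inr ⟨a :: w₂, c, w₁, rfl, hw₁, he⟩

/-- Consider the first two passages of a short closed walk through the new edge. -/
lemma exists_closing_word_of_not_hasGirthAbove_insert (hφ : ∀ a, (φ a).Involutive)
    (hF : HasGirthAbove φ h F) (hins : ¬HasGirthAbove φ h (insert (stepEdge φ a x) F)) :
    ∃ w z, w.length + 1 ≤ 2 * h ∧ AlongWord φ (StepIn φ F) w (φ a z) ∧
      wordAct φ w (φ a z) = z ∧ (z = x ∨ z = φ a x) := by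
  unfold HasGirthAbove at hins
  push Not at hins
  obtain ⟨w, y, hred, hne, hlen, hs, hclosed⟩ := hins
  obtain hw | ⟨w₂, c, w₁, rfl, hw₁, he⟩ := alongWord_or_exists_first_use hs
  · exact absurd hclosed (hF w y hred hne hlen hw)
  obtain ⟨rfl, hz⟩ := eq_of_stepEdge_eq he
  replace hs := (alongWord_append.1 hs).2
  rw [wordAct_append] at hclosed
  simp only [List.length_append, List.length_cons] at hlen
  rw [wordAct_cons] at hs hclosed
  set z := wordAct φ w₁ y
  obtain hw₂ | ⟨w₄, c', w₃, rfl, hw₃, he'⟩ := alongWord_or_exists_first_use hs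
  · refine ⟨w₁ ++ w₂, z, by rw [List.length_append]; omega, ?_, ?_, hz⟩
    · exact alongWord_append.2 ⟨hw₂, by rwa [hclosed]⟩
    · rw [wordAct_append, hclosed]
  obtain ⟨rfl, hz'⟩ := eq_of_stepEdge_eq he'
  simp only [List.length_append, List.length_cons] at hlen
  have hreturn : wordAct φ w₃ (φ c' z) = z ∨ wordAct φ w₃ (φ c' z) = φ c' z := by
    rcases hz with hz | hz <;> rcases hz' with hz' | hz'
    · exact Or.inl (hz'.trans hz.symm)
    · exact Or.inr (hz'.trans (by rw [hz]))
    · exact Or.inr (hz'.trans (by rw [hz, hφ c' x]))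
    · exact Or.inl (hz'.trans hz.symm)
  obtain hreturn | hreturn := hreturn
  · exact ⟨w₃, z, by omega, hw₃, hreturn, hz⟩
  · have hsplit : w₄ ++ c' :: w₃ ++ c' :: w₁ = w₄ ++ [c'] ++ (w₃ ++ c' :: w₁) := by simp
    have hred₃ : IsReduced (w₃ ++ c' :: w₁) := IsReduced.of_append_right (hsplit ▸ hred)
    obtain rfl : w₃ = [] := by
      by_contra hne₃
      exact hF w₃ _ hred₃.of_append_left hne₃ (by omega) hw₃ hreturn
    have hsplit' : w₄ ++ [c'] ++ c' :: w₁ = w₄ ++ c' :: c' :: w₁ := by simp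
    exact absurd rfl (isReduced_cons.1 (IsReduced.of_append_right (hsplit' ▸ hred))).1

lemma not_hasGirthAbove_insert {e : α × Sym2 V} (hF : Maximal (HasGirthAbove φ h) F) (he : e ∉ F) :
    ¬HasGirthAbove φ h (insert e F) :=
  fun hins => he (hF.le_of_ge hins (Set.subset_insert e F) (Set.mem_insert e F))

lemma word_eq_of_wordAct_eq (hφ : ∀ a, (φ a).Involutive) (hF : HasGirthAbove φ h F)
    (hw : IsReduced w) (hu : IsReduced u) (hsw : AlongWord φ (StepIn φ F) w x)
    (hsu : AlongWord φ (StepIn φ F) u x) (hlen : w.length + u.length ≤ 2 * h)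
    (heq : wordAct φ w x = wordAct φ u x) : w = u := by
  classical
  have hs : AlongWord φ (StepIn φ F) (u.reverse ++ w) x :=
    alongWord_append.2 ⟨hsw, heq ▸ hsu.reverse hφ fun _ _ => stepIn_apply hφ⟩
  have hclosed : wordAct φ (u.reverse ++ w) x = x := by
    rw [wordAct_append, heq, wordAct_reverse_wordAct hφ]
  have hnil : reduceWord (u.reverse ++ w) = [] := by
    by_contra hne
    refine hF _ x (isReduced_reduceWord _) hne ((length_reduceWord_le _).trans ?_)
      (hs.reduceWord hφ) (by rw [wordAct_reduceWord hφ, hclosed])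
    rw [List.length_append, List.length_reverse]
    omega
  simpa only [hw.reduceWord_eq, hu.reduceWord_eq] using reduceWord_eq_of_reverse_append hnil

lemma exists_closing_word (hφ : ∀ a, (φ a).Involutive) (hF : Maximal (HasGirthAbove φ h) F)
    (hx : stepEdge φ a x ∉ F) :
    ∃ w, w.length + 1 ≤ 2 * h ∧ IsReduced w ∧ AlongWord φ (StepIn φ F) w (φ a x) ∧
      wordAct φ w (φ a x) = x := by
  classical
  obtain ⟨w, z, hlen, hs, hclosed, rfl | rfl⟩ := exists_closing_word_of_not_hasGirthAbove_insert hφ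
    hF.prop (not_hasGirthAbove_insert hF hx)
  · have hle := length_reduceWord_le w
    exact ⟨reduceWord w, by omega, isReduced_reduceWord w, hs.reduceWord hφ, by
      rw [wordAct_reduceWord hφ, hclosed]⟩
  · rw [hφ a x] at hs hclosed
    have hle := length_reduceWord_le w.reverse
    have hs' := hs.reverse hφ fun _ _ => stepIn_apply hφ
    have hclosed' := wordAct_reverse_wordAct hφ w x
    rw [List.length_reverse] at hle
    rw [hclosed] at hs' hclosed'
    exact ⟨reduceWord w.reverse, by omega, isReduced_reduceWord _, hs'.reduceWord hφ, by
      rw [wordAct_reduceWord hφ, hclosed']⟩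

variable [DecidableEq α]

/-- Every short closed walk at `x` cancels to the empty word. -/
def IsTame (φ : α → V → V) (l : ℕ) (x : V) : Prop :=
  ∀ w, w.length ≤ l → wordAct φ w x = x → reduceWord w = []

lemma IsTame.wordAct {l' : ℕ} (hx : IsTame φ l x) (hφ : ∀ a, (φ a).Involutive) (u : List α)
    (hl : l' + 2 * u.length ≤ l) : IsTame φ l' (wordAct φ u x) := by
  intro w hw hclosed
  refine reduceWord_eq_nil_of_conj (u := u) (hx _ ?_ ?_)
  · simp only [List.length_append, List.length_reverse]
    omega
  · rw [wordAct_append, wordAct_append, hclosed, wordAct_reverse_wordAct hφ]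

lemma stepEdge_mem_of_isTame (hφ : ∀ a, (φ a).Involutive) (hF : Maximal (HasGirthAbove φ h) F)
    (hx : IsTame φ (2 * h) x) (a : α) : stepEdge φ a x ∈ F := by
  by_contra ha
  obtain ⟨w, hlen, hred, hs, hclosed⟩ := exists_closing_word hφ hF ha
  have hnil : reduceWord (w.reverse.reverse ++ [a]) = [] := by
    rw [List.reverse_reverse]
    refine hx _ ?_ ?_
    · rwa [List.length_append]
    · rwa [wordAct_append]
  have hrev : [a] = w.reverse := by
    have ha : IsReduced [a] := List.isChain_singleton a
    simpa only [ha.reduceWord_eq, hred.reverse.reduceWord_eq] using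
      reduceWord_eq_of_reverse_append hnil
  obtain rfl : w = [a] := by rw [← List.reverse_reverse w, ← hrev, List.reverse_singleton]
  have hstep : stepEdge φ a (φ a x) ∈ F := hs.2
  rw [stepEdge_apply hφ] at hstep
  exact ha hstep

end Girth

section TraversedEdges

variable {α V : Type*} [DecidableEq V] {φ : α → V → V} {F : Set (α × Sym2 V)}
  {a a' : α} {x x' z : V} {h : ℕ}

/-- The vertices on the walk from `x` spelled by a word. -/
def visited (φ : α → V → V) : List α → V → Finset V
  | [], x => {x}
  | a :: w, x => insert (φ a (wordAct φ w x)) (visited φ w x)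

lemma wordAct_mem_visited (φ : α → V → V) (w : List α) (x : V) :
    wordAct φ w x ∈ visited φ w x := by
  cases w with
  | nil => exact Finset.mem_singleton_self x
  | cons a w => exact Finset.mem_insert_self _ _

lemma visited_subset_visited_append (φ : α → V → V) (w u : List α) (x : V) :
    visited φ u x ⊆ visited φ (w ++ u) x := by
  induction w with
  | nil => exact subset_rfl
  | cons a w ih => exact ih.trans (Finset.subset_insert _ _)

lemma wordAct_mem_visited_append (φ : α → V → V) (w u : List α) (x : V) :
    wordAct φ u x ∈ visited φ (w ++ u) x :=
  visited_subset_visited_append φ w u x (wordAct_mem_visited φ u x)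

lemma card_visited_le (φ : α → V → V) (w : List α) (x : V) :
    (visited φ w x).card ≤ w.length + 1 := by
  induction w with
  | nil => rfl
  | cons a w ih => exact (Finset.card_insert_le _ _).trans (Nat.succ_le_succ ih)

variable [DecidableEq α]

/-- The coloured edges on the walk from `x` spelled by a word. -/
def traversed (φ : α → V → V) : List α → V → Finset (α × Sym2 V)
  | [], _ => ∅
  | a :: w, x => insert (stepEdge φ a (wordAct φ w x)) (traversed φ w x)

lemma containsEdges_insert_stepEdge (hφ : ∀ a, (φ a).Involutive) {B : Finset (α × Sym2 V)}
    (hB : ContainsEdges B φ) (a : α) (x : V) : ContainsEdges (insert (stepEdge φ a x) B) φ := by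
  intro p hp z hz
  obtain rfl | hp := Finset.mem_insert.1 hp
  · obtain rfl | rfl := Sym2.mem_iff.1 hz
    exacts [rfl, congrArg Prod.snd (stepEdge_apply hφ a x)]
  · exact hB p hp z hz

lemma containsEdges_traversed (hφ : ∀ a, (φ a).Involutive) (w : List α) (x : V) :
    ContainsEdges (traversed φ w x) φ := by
  induction w with
  | nil => exact fun p hp => absurd hp (Finset.notMem_empty p)
  | cons a w ih => exact containsEdges_insert_stepEdge hφ ih a _

lemma mem_visited_of_mem_traversed {w : List α} {p : α × Sym2 V} (hp : p ∈ traversed φ w x)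
    (hz : z ∈ p.2) : z ∈ visited φ w x := by
  induction w with
  | nil => exact absurd hp (Finset.notMem_empty p)
  | cons a w ih =>
    obtain rfl | hp := Finset.mem_insert.1 hp
    · obtain rfl | rfl := Sym2.mem_iff.1 hz
      exacts [Finset.mem_insert_of_mem (wordAct_mem_visited φ w x), Finset.mem_insert_self _ _]
    · exact Finset.mem_insert_of_mem (ih hp)

lemma mem_of_mem_traversed {w : List α} {p : α × Sym2 V} (hs : AlongWord φ (StepIn φ F) w x)
    (hp : p ∈ traversed φ w x) : p ∈ F := by
  induction w with
  | nil => exact absurd hp (Finset.notMem_empty p)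
  | cons a w ih =>
    obtain rfl | hp := Finset.mem_insert.1 hp
    exacts [hs.2, ih hs.1 hp]

lemma card_visited_le_card_traversed_add_one (φ : α → V → V) (w : List α) (x : V) :
    (visited φ w x).card ≤ (traversed φ w x).card + 1 := by
  induction w with
  | nil => rfl
  | cons a w ih =>
    rw [visited, traversed]
    by_cases hmem : φ a (wordAct φ w x) ∈ visited φ w x
    · rw [Finset.insert_eq_of_mem hmem]
      exact ih.trans (Nat.succ_le_succ (Finset.card_le_card (Finset.subset_insert _ _)))
    · have hnew : stepEdge φ a (wordAct φ w x) ∉ traversed φ w x :=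
        fun h => hmem (mem_visited_of_mem_traversed h (Sym2.mem_mk_right _ _))
      rw [Finset.card_insert_of_notMem hmem, Finset.card_insert_of_notMem hnew]
      omega

end TraversedEdges

section MissingEdges

variable {α V : Type*} {φ : α → V → V} {F : Set (α × Sym2 V)} {a a' : α} {x x' : V} {h : ℕ}

lemma hasDenseSet_of_word (hφ : ∀ a, (φ a).Involutive) [DecidableEq V] {w : List α}
    {y : V} {H : ℕ}
    (hs : AlongWord φ (StepIn φ F) w y) (hlen : w.length + 1 ≤ H) (ha : stepEdge φ a x ∉ F)
    (ha' : stepEdge φ a' x' ∉ F) (hne : stepEdge φ a x ≠ stepEdge φ a' x')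
    (hx : x ∈ visited φ w y) (hax : φ a x ∈ visited φ w y) (hx' : x' ∈ visited φ w y)
    (hax' : φ a' x' ∈ visited φ w y) : HasDenseSet H φ := by
  classical
  set edges := insert (stepEdge φ a x) (insert (stepEdge φ a' x') (traversed φ w y)) with hedges
  have hcard : (visited φ w y).card + 1 ≤ edges.card := by
    have hnew' : stepEdge φ a' x' ∉ traversed φ w y := fun h => ha' (mem_of_mem_traversed hs h)
    have hnew : stepEdge φ a x ∉ insert (stepEdge φ a' x') (traversed φ w y) := by
      rw [Finset.mem_insert, not_or]
      exact ⟨hne, fun h => ha (mem_of_mem_traversed hs h)⟩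
    rw [hedges, Finset.card_insert_of_notMem hnew, Finset.card_insert_of_notMem hnew']
    exact Nat.succ_le_succ (card_visited_le_card_traversed_add_one φ w y)
  have hcontains : ContainsEdges edges φ := containsEdges_insert_stepEdge hφ
    (containsEdges_insert_stepEdge hφ (containsEdges_traversed hφ w y) a' x') a x
  obtain ⟨B, hB, hBcard⟩ := Finset.exists_subset_card_eq hcard
  refine ⟨visited φ w y, B, (card_visited_le φ w y).trans hlen, hBcard, fun p hp z hz => ?_,
    fun p hp => hcontains p (hB hp)⟩
  obtain rfl | hp := Finset.mem_insert.1 (hB hp)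
  · obtain rfl | rfl := Sym2.mem_iff.1 hz <;> assumption
  obtain rfl | hp := Finset.mem_insert.1 hp
  · obtain rfl | rfl := Sym2.mem_iff.1 hz <;> assumption
  · exact mem_visited_of_mem_traversed hp hz

/-- Two missing edges close two short cycles that are at distance at most one. -/
lemma hasDenseSet_of_two_missing_edges (hφ : ∀ a, (φ a).Involutive)
    (hF : Maximal (HasGirthAbove φ h) F) (ha : stepEdge φ a x ∉ F) (ha' : stepEdge φ a' x' ∉ F)
    (hne : stepEdge φ a x ≠ stepEdge φ a' x')
    (hxx' : x' = x ∨ ∃ c, x' = φ c x ∧ StepIn φ F c x) : HasDenseSet (4 * h) φ := by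
  classical
  obtain ⟨w, hlen, -, hs, hclosed⟩ := exists_closing_word hφ hF ha
  obtain ⟨w', hlen', -, hs', hclosed'⟩ := exists_closing_word hφ hF ha'
  obtain ⟨v, hvlen, hv, hvx⟩ :
      ∃ v, v.length ≤ 1 ∧ AlongWord φ (StepIn φ F) v x ∧ wordAct φ v x = x' := by
    obtain rfl | ⟨c, rfl, hc⟩ := hxx'
    · exact ⟨[], zero_le_one, trivial, rfl⟩
    · exact ⟨[c], le_rfl, ⟨trivial, hc⟩, rfl⟩
  have hrev := hs'.reverse hφ fun _ _ => stepIn_apply hφ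
  have hback := wordAct_reverse_wordAct hφ w' (φ a' x')
  rw [hclosed'] at hrev hback
  have hvw : wordAct φ (v ++ w) (φ a x) = x' := by rw [wordAct_append, hclosed, hvx]
  refine hasDenseSet_of_word hφ (w := w'.reverse ++ (v ++ w)) (y := φ a x) ?_ ?_ ha ha' hne
    ?_ ?_ ?_ ?_
  · refine alongWord_append.2 ⟨alongWord_append.2 ⟨hs, ?_⟩, ?_⟩
    exacts [hclosed.symm ▸ hv, hvw.symm ▸ hrev]
  · simp only [List.length_append, List.length_reverse]
    omega
  · have hmem := wordAct_mem_visited_append φ (w'.reverse ++ v) w (φ a x)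
    rwa [hclosed, List.append_assoc] at hmem
  · simpa using wordAct_mem_visited_append φ (w'.reverse ++ (v ++ w)) [] (φ a x)
  · have hmem := wordAct_mem_visited_append φ w'.reverse (v ++ w) (φ a x)
    rwa [hvw] at hmem
  · have hmem := wordAct_mem_visited φ (w'.reverse ++ (v ++ w)) (φ a x)
    rwa [wordAct_append, hvw, hback] at hmem

end MissingEdges

/-! ### The tree cores at a root -/

section TernaryWords

variable {κ : Type*} {j : κ} {bs bs' : List Bool}

/-- Binary words encoded as reduced ternary words: each bit selects one of the two letters that
differ from the preceding one. -/
def ternaryWord : List Bool → List (Fin 3)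
  | [] => []
  | b :: bs => ((ternaryWord bs).headD 0 + if b then 1 else 2) :: ternaryWord bs

/-- The ternary word of `bs` in the letters of the `j`-th triple. -/
def branchWord (j : κ) (bs : List Bool) : List (κ × Fin 3) := (ternaryWord bs).map (Prod.mk j)

lemma length_ternaryWord (bs : List Bool) : (ternaryWord bs).length = bs.length := by
  induction bs with
  | nil => rfl
  | cons _ bs ih => exact congrArg (· + 1) ih

lemma ternaryWord_injective : ternaryWord.Injective := by
  intro bs bs' h
  induction bs generalizing bs' with
  | nil => exact (List.length_eq_zero_iff.1 (by rw [← length_ternaryWord, ← h]; rfl)).symm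
  | cons b bs ih =>
    cases bs' with
    | nil => simp [ternaryWord] at h
    | cons b' bs' =>
      simp only [ternaryWord, List.cons.injEq] at h
      obtain rfl := ih h.2
      have hbit := add_left_cancel h.1
      cases b <;> cases b' <;> simp at hbit ⊢

lemma isReduced_ternaryWord (bs : List Bool) : IsReduced (ternaryWord bs) := by
  induction bs with
  | nil => exact List.isChain_nil
  | cons b bs ih =>
    have add_ne_self : ∀ (z : Fin 3) (b : Bool), z ≠ z + (if b then 1 else 2) := by decide
    refine isReduced_cons.2 ⟨?_, ih⟩
    cases ternaryWord bs with
    | nil => simp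
    | cons z t => simpa using add_ne_self z b

lemma exists_branchWord_cons (j : κ) (b : Bool) (bs : List Bool) :
    ∃ t, branchWord j (b :: bs) = (j, t) :: branchWord j bs := ⟨_, rfl⟩

lemma length_branchWord (j : κ) (bs : List Bool) : (branchWord j bs).length = bs.length := by
  rw [branchWord, List.length_map, length_ternaryWord]

lemma branchWord_injective (j : κ) : (branchWord j).Injective :=
  (List.map_injective_iff.2 (Prod.mk_right_injective j)).comp ternaryWord_injective

lemma isReduced_branchWord (j : κ) (bs : List Bool) : IsReduced (branchWord j bs) := by
  rw [branchWord, IsReduced, List.isChain_map]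
  exact (isReduced_ternaryWord bs).imp fun _ _ h => (Prod.mk_right_injective j).ne h

lemma fst_eq_of_mem_branchWord {a : κ × Fin 3} (h : a ∈ branchWord j bs) : a.1 = j := by
  obtain ⟨t, -, rfl⟩ := List.mem_map.1 h
  rfl

lemma exists_eq_branchWord_of_suffix {σ : List (κ × Fin 3)} (h : σ <:+ branchWord j bs) :
    ∃ bs', bs' <:+ bs ∧ σ = branchWord j bs' := by
  induction bs with
  | nil => exact ⟨[], List.suffix_rfl, List.suffix_nil.1 h⟩
  | cons b bs ih =>
    obtain ⟨t, ht⟩ := exists_branchWord_cons j b bs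
    rw [ht, List.suffix_cons_iff] at h
    obtain h | h := h
    · exact ⟨b :: bs, List.suffix_rfl, h.trans ht.symm⟩
    · obtain ⟨bs', hbs', hσ⟩ := ih h
      exact ⟨bs', hbs'.trans (List.suffix_cons b bs), hσ⟩

end TernaryWords

section Core

variable {κ V : Type*} [DecidableEq κ]

/-- The walk from `r` spelled by `σ` is *colliding* if at most three further steps lead to a branch
of length at most `R` in an unexpected way, or if its endpoint is not tame up to length `l`. Both
failures are recorded as fixed points of words with nonempty reduced form. -/
def IsColliding (φ : κ × Fin 3 → V → V) (R l : ℕ) (r : V) (σ : List (κ × Fin 3)) : Prop :=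
  (∃ ρ : List (κ × Fin 3), ρ.length ≤ 3 ∧ ∃ j bs, List.length bs ≤ R ∧
    reduceWord ((branchWord j bs).reverse ++ (ρ ++ σ)) ≠ [] ∧
    wordAct φ ((branchWord j bs).reverse ++ (ρ ++ σ)) r = r) ∨
  ∃ τ : List (κ × Fin 3), τ.length ≤ l ∧ reduceWord (σ.reverse ++ (τ ++ σ)) ≠ [] ∧
    wordAct φ (σ.reverse ++ (τ ++ σ)) r = r

/-- A branch of length at most `R` none of whose initial segments is colliding. -/
def IsGoodBranch (φ : κ × Fin 3 → V → V) (R l : ℕ) (r : V) (j : κ) (bs : List Bool) : Prop :=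
  bs.length ≤ R ∧ ∀ bs', bs' <:+ bs → ¬IsColliding φ R l r (branchWord j bs')

/-- The endpoints of the nonempty good branches in the `j`-th triple of colours. -/
def core (φ : κ × Fin 3 → V → V) (R l : ℕ) (r : V) (j : κ) : Set V :=
  {x | ∃ bs, bs ≠ [] ∧ IsGoodBranch φ R l r j bs ∧ x = wordAct φ (branchWord j bs) r}

/-- The union of all cores, together with the root if it is itself good. -/
def coreUnion (φ : κ × Fin 3 → V → V) (R l : ℕ) (r : V) : Set V :=
  {x | ∃ j bs, IsGoodBranch φ R l r j bs ∧ x = wordAct φ (branchWord j bs) r}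

variable {φ : κ × Fin 3 → V → V} {R l : ℕ} {r x : V} {i j : κ} {bs bs' : List Bool}

lemma IsGoodBranch.of_suffix (h : IsGoodBranch φ R l r j bs) (hs : bs' <:+ bs) :
    IsGoodBranch φ R l r j bs' :=
  ⟨hs.length_le.trans h.1, fun b hb => h.2 b (hb.trans hs)⟩

lemma core_subset_coreUnion (j : κ) : core φ R l r j ⊆ coreUnion φ R l r :=
  fun _ ⟨bs, _, hbs, hx⟩ => ⟨j, bs, hbs, hx⟩

lemma eq_or_mem_core_of_mem_coreUnion (h : x ∈ coreUnion φ R l r) :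
    x = r ∨ ∃ j, x ∈ core φ R l r j := by
  obtain ⟨j, bs, hbs, hx⟩ := h
  obtain rfl | hne := eq_or_ne bs []
  exacts [Or.inl hx, Or.inr ⟨j, bs, hne, hbs, hx⟩]

lemma root_mem_coreUnion (h : x ∈ core φ R l r j) : r ∈ coreUnion φ R l r := by
  obtain ⟨bs, -, hbs, -⟩ := h
  exact ⟨j, [], hbs.of_suffix List.nil_suffix, rfl⟩

lemma IsGoodBranch.reduceWord_append_eq (hφ : ∀ a, (φ a).Involutive)
    (h : IsGoodBranch φ R l r i bs) (h' : IsGoodBranch φ R l r j bs') {ρ : List (κ × Fin 3)}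
    (hρ : ρ.length ≤ 3)
    (heq : wordAct φ (ρ ++ branchWord i bs) r = wordAct φ (branchWord j bs') r) :
    reduceWord (ρ ++ branchWord i bs) = branchWord j bs' := by
  have hnil : reduceWord ((branchWord j bs').reverse ++ (ρ ++ branchWord i bs)) = [] := by
    by_contra hne
    refine h.2 bs List.suffix_rfl (Or.inl ⟨ρ, hρ, j, bs', h'.1, hne, ?_⟩)
    rw [wordAct_append, heq, wordAct_reverse_wordAct hφ]
  rw [reduceWord_eq_of_reverse_append hnil, (isReduced_branchWord j bs').reduceWord_eq]

lemma IsGoodBranch.branchWord_eq (hφ : ∀ a, (φ a).Involutive) (h : IsGoodBranch φ R l r i bs)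
    (h' : IsGoodBranch φ R l r j bs')
    (heq : wordAct φ (branchWord i bs) r = wordAct φ (branchWord j bs') r) :
    branchWord i bs = branchWord j bs' :=
  (isReduced_branchWord i bs).reduceWord_eq.symm.trans
    (h.reduceWord_append_eq hφ h' (ρ := []) (Nat.zero_le 3) heq)

lemma eq_of_mem_core (hφ : ∀ a, (φ a).Involutive) (h : x ∈ core φ R l r i)
    (h' : x ∈ core φ R l r j) : i = j := by
  obtain ⟨bs, hne, hbs, rfl⟩ := h
  obtain ⟨bs', -, hbs', heq⟩ := h'
  obtain ⟨b, bs, rfl⟩ := List.exists_cons_of_ne_nil hne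
  obtain ⟨t, ht⟩ := exists_branchWord_cons i b bs
  have hmem : (i, t) ∈ branchWord j bs' := by
    rw [← hbs.branchWord_eq hφ hbs' heq, ht]
    exact List.mem_cons_self
  exact fst_eq_of_mem_branchWord hmem

lemma root_notMem_core (hφ : ∀ a, (φ a).Involutive) : r ∉ core φ R l r i := by
  rintro ⟨bs, hne, hbs, heq⟩
  exact hne (branchWord_injective i
    (hbs.branchWord_eq hφ (hbs.of_suffix List.nil_suffix) heq.symm))

lemma isTame_of_mem_coreUnion (hφ : ∀ a, (φ a).Involutive) (h : x ∈ coreUnion φ R l r) :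
    IsTame φ l x := by
  obtain ⟨j, bs, hbs, rfl⟩ := h
  intro w hw heq
  refine reduceWord_eq_nil_of_conj (u := branchWord j bs) ?_
  by_contra hne
  refine hbs.2 bs List.suffix_rfl (Or.inr ⟨w, hw, hne, ?_⟩)
  rw [wordAct_append, wordAct_append, heq, wordAct_reverse_wordAct hφ]

lemma apply_mem_coreUnion_of_wordAct_mem (hφ : ∀ a, (φ a).Involutive) (hx : x ∈ coreUnion φ R l r)
    {ρ : List (κ × Fin 3)} {c : κ × Fin 3} (hρ : IsReduced (ρ ++ [c])) (hlen : ρ.length ≤ 2)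
    (hy : wordAct φ (ρ ++ [c]) x ∈ coreUnion φ R l r) :
    φ c x ∈ coreUnion φ R l r := by
  obtain ⟨j, bs, hbs, rfl⟩ := hx
  obtain ⟨j', bs', hbs', heq⟩ := hy
  rw [← wordAct_append] at heq
  have hword := hbs.reduceWord_append_eq hφ hbs'
    (by rw [List.length_append, List.length_singleton]; omega) heq
  by_cases hc : (branchWord j bs).head? = some c
  · obtain ⟨σ, hσ⟩ := List.head?_eq_some_iff.1 hc
    obtain ⟨bs₀, hsuff, rfl⟩ :=
      exists_eq_branchWord_of_suffix (j := j) (bs := bs) (hσ ▸ List.suffix_cons c σ)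
    exact ⟨j, bs₀, hbs.of_suffix hsuff, by rw [hσ, wordAct_cons, hφ c]⟩
  · have hred : IsReduced (ρ ++ c :: branchWord j bs) := by
      have hcons : IsReduced (c :: branchWord j bs) :=
        isReduced_cons.2 ⟨hc, isReduced_branchWord j bs⟩
      rw [IsReduced, List.isChain_append] at hρ ⊢
      exact ⟨hρ.1, hcons, fun z hz y hy => hρ.2.2 z hz y hy⟩
    rw [List.append_assoc, List.singleton_append, hred.reduceWord_eq] at hword
    obtain ⟨bs₀, hsuff, heq₀⟩ := exists_eq_branchWord_of_suffix ⟨ρ, hword⟩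
    exact ⟨j', bs₀, hbs'.of_suffix hsuff, by rw [← heq₀, wordAct_cons]⟩

lemma apply_notMem_coreUnion (hφ : ∀ a, (φ a).Involutive) (hij : i ≠ j) (hx : x ∈ core φ R l r j)
    (t : Fin 3) : φ (i, t) x ∉ coreUnion φ R l r := by
  rintro ⟨j', bs', hbs', heq⟩
  obtain ⟨bs, hne, hbs, rfl⟩ := hx
  obtain ⟨b, bs, rfl⟩ := List.exists_cons_of_ne_nil hne
  obtain ⟨t', ht⟩ := exists_branchWord_cons j b bs
  have hword := hbs.reduceWord_append_eq hφ hbs' (ρ := [(i, t)]) (by simp) heq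
  have hred : IsReduced ((i, t) :: (j, t') :: branchWord j bs) :=
    isReduced_cons.2 ⟨by simp [hij.symm], ht ▸ isReduced_branchWord j (b :: bs)⟩
  rw [List.singleton_append, ht, hred.reduceWord_eq] at hword
  have hi : (i, t) ∈ branchWord j' bs' := by simp [← hword]
  have hj : (j, t') ∈ branchWord j' bs' := by simp [← hword]
  exact hij ((fst_eq_of_mem_branchWord hi).trans (fst_eq_of_mem_branchWord hj).symm)

lemma exists_depth_core (hφ : ∀ a, (φ a).Involutive) (i : κ) :
    ∃ depth : V → ℕ, ∀ x ∈ core φ R l r i, depth x ≤ R ∧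
      ∃ a, φ a x = r ∨ φ a x ∈ core φ R l r i ∧ depth (φ a x) < depth x := by
  classical
  let depth : V → ℕ := fun x => if h : x ∈ core φ R l r i then h.choose.length else 0
  have hdepth (bs) (hne : bs ≠ []) (hbs : IsGoodBranch φ R l r i bs) :
      depth (wordAct φ (branchWord i bs) r) = bs.length := by
    have hmem : wordAct φ (branchWord i bs) r ∈ core φ R l r i := ⟨bs, hne, hbs, rfl⟩
    obtain ⟨-, hchoose, heq⟩ := hmem.choose_spec
    simp only [depth, dif_pos hmem]
    rw [← branchWord_injective i (hbs.branchWord_eq hφ hchoose heq)]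
  refine ⟨depth, ?_⟩
  rintro x ⟨bs, hne, hbs, rfl⟩
  rw [hdepth bs hne hbs]
  refine ⟨hbs.1, ?_⟩
  obtain ⟨b, bs, rfl⟩ := List.exists_cons_of_ne_nil hne
  obtain ⟨t, ht⟩ := exists_branchWord_cons i b bs
  have hparent :
      φ (i, t) (wordAct φ (branchWord i (b :: bs)) r) = wordAct φ (branchWord i bs) r := by
    rw [ht, wordAct_cons, hφ (i, t)]
  refine ⟨(i, t), ?_⟩
  rw [hparent]
  obtain rfl | hne := eq_or_ne bs []
  · exact Or.inl rfl
  · have hgood := hbs.of_suffix (List.suffix_cons b bs)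
    exact Or.inr ⟨⟨bs, hne, hgood, rfl⟩, by rw [hdepth bs hne hgood]; exact Nat.lt_succ_self _⟩

end Core

/-! ### Binary growth in one triple of colours -/

section Growth

variable {κ V : Type*}

/-- The step of colour `a` from `x` is in the `i`-th triple, traverses an edge of `F` and does not
enter `Γ`. -/
def AllowedStep (φ : κ × Fin 3 → V → V) (F : Set ((κ × Fin 3) × Sym2 V)) (i : κ) (Γ : Set V)
    (a : κ × Fin 3) (x : V) : Prop := a.1 = i ∧ StepIn φ F a x ∧ φ a x ∉ Γ

open Classical in
/-- The endpoints of the walks of `m` allowed steps from `v`. -/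
noncomputable def reachable [Fintype V] (φ : κ × Fin 3 → V → V) (F : Set ((κ × Fin 3) × Sym2 V))
    (i : κ) (Γ : Set V) (m : ℕ) (v : V) : Finset V :=
  {x | ∃ w, w.length = m ∧ AlongWord φ (AllowedStep φ F i Γ) w v ∧ wordAct φ w v = x}

/-- Outside `Γ`, at most one of the three steps is forbidden at every vertex, and no two forbidden
steps occur at the ends of an allowed one. -/
structure IsBranching (φ : κ × Fin 3 → V → V) (F : Set ((κ × Fin 3) × Sym2 V)) (i : κ)
    (Γ : Set V) : Prop where
  eq_of_not_allowed : ∀ x ∉ Γ, ∀ t t', ¬AllowedStep φ F i Γ (i, t) x →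
    ¬AllowedStep φ F i Γ (i, t') x → t = t'
  allowed_of_not_allowed : ∀ x ∉ Γ, ∀ s t t', t ≠ s → t' ≠ s → AllowedStep φ F i Γ (i, s) x →
    ¬AllowedStep φ F i Γ (i, t) x → AllowedStep φ F i Γ (i, t') (φ (i, s) x)

/-- Two allowed steps of colours `(i, t)`, `(i, u)` from `x` that neither undo an initial step of
colour `(i, s)` nor backtrack. -/
def IsTwoStep (φ : κ × Fin 3 → V → V) (F : Set ((κ × Fin 3) × Sym2 V)) (i : κ) (Γ : Set V) (x : V)
    (s t u : Fin 3) : Prop :=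
  t ≠ s ∧ u ≠ t ∧ AllowedStep φ F i Γ (i, t) x ∧ AllowedStep φ F i Γ (i, u) (φ (i, t) x)

variable {φ : κ × Fin 3 → V → V} {F : Set ((κ × Fin 3) × Sym2 V)} {i : κ} {Γ : Set V} {x v : V}
  {b : ℕ}

lemma mem_reachable [Fintype V] {m : ℕ} : x ∈ reachable φ F i Γ m v ↔
    ∃ w, w.length = m ∧ AlongWord φ (AllowedStep φ F i Γ) w v ∧ wordAct φ w v = x := by
  simp [reachable]

lemma exists_ne_ne_ne (s : Fin 3) : ∃ t t' : Fin 3, t ≠ s ∧ t' ≠ s ∧ t ≠ t' := by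
  revert s
  decide

namespace IsBranching

lemma exists_allowed_ne (h : IsBranching φ F i Γ) (hx : x ∉ Γ) (s : Fin 3) :
    ∃ t, t ≠ s ∧ AllowedStep φ F i Γ (i, t) x := by
  obtain ⟨t, t', hts, hts', htt'⟩ := exists_ne_ne_ne s
  by_contra! hnone
  exact htt' (h.eq_of_not_allowed x hx t t' (hnone t hts) (hnone t' hts'))

lemma exists_two_isTwoStep (h : IsBranching φ F i Γ) (hx : x ∉ Γ) (s : Fin 3) :
    ∃ t u t' u', (u, t) ≠ (u', t') ∧ IsTwoStep φ F i Γ x s t u ∧ IsTwoStep φ F i Γ x s t' u' := by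
  have of_not_allowed (t t' : Fin 3) (hts' : t' ≠ s) (htt' : t ≠ t')
      (ht : ¬AllowedStep φ F i Γ (i, t) x) : ∃ t u t' u', (u, t) ≠ (u', t') ∧
        IsTwoStep φ F i Γ x s t u ∧ IsTwoStep φ F i Γ x s t' u' := by
    have ht' : AllowedStep φ F i Γ (i, t') x := by
      by_contra ht'
      exact htt' (h.eq_of_not_allowed x hx t t' ht ht')
    obtain ⟨u, u', hu, hu', huu'⟩ := exists_ne_ne_ne t'
    exact ⟨t', u, t', u', fun heq => huu' (congrArg Prod.fst heq),
      ⟨hts', hu, ht', h.allowed_of_not_allowed x hx t' t u htt' hu ht' ht⟩,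
      ⟨hts', hu', ht', h.allowed_of_not_allowed x hx t' t u' htt' hu' ht' ht⟩⟩
  obtain ⟨t, t', hts, hts', htt'⟩ := exists_ne_ne_ne s
  by_cases ht : AllowedStep φ F i Γ (i, t) x
  · by_cases ht' : AllowedStep φ F i Γ (i, t') x
    · obtain ⟨u, hu, hu_allowed⟩ := h.exists_allowed_ne ht.2.2 t
      obtain ⟨u', hu', hu'_allowed⟩ := h.exists_allowed_ne ht'.2.2 t'
      exact ⟨t, u, t', u', fun heq => htt' (congrArg Prod.snd heq), ⟨hts, hu, ht, hu_allowed⟩,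
        ⟨hts', hu', ht', hu'_allowed⟩⟩
    · exact of_not_allowed t' t hts htt'.symm ht'
  · exact of_not_allowed t t' hts' htt' ht

/-- The words of `2 * b` allowed steps from `x` that can follow a step of colour `(i, s)`. -/
def Extends (φ : κ × Fin 3 → V → V) (F : Set ((κ × Fin 3) × Sym2 V)) (i : κ) (Γ : Set V) (b : ℕ)
    (x : V) (s : Fin 3) (w : List (κ × Fin 3)) : Prop :=
  w.length = 2 * b ∧ AlongWord φ (AllowedStep φ F i Γ) w x ∧ IsReduced (w ++ [(i, s)])

lemma Extends.append_twoStep {s t u : Fin 3} {w : List (κ × Fin 3)}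
    (hw : Extends φ F i Γ b (φ (i, u) (φ (i, t) x)) u w) (htu : IsTwoStep φ F i Γ x s t u) :
    Extends φ F i Γ (b + 1) x s (w ++ [(i, u), (i, t)]) := by
  obtain ⟨hlen, halong, hred⟩ := hw
  obtain ⟨hts, hut, ht, hu⟩ := htu
  refine ⟨by rw [List.length_append, hlen]; rfl,
    alongWord_append.2 ⟨⟨⟨trivial, ht⟩, hu⟩, halong⟩, ?_⟩
  rw [IsReduced, List.isChain_append] at hred
  rw [IsReduced, List.append_assoc, List.isChain_append]
  exact ⟨hred.1, by simp [hts, hut], fun z hz y hy => hred.2.2 z hz y (by simpa using hy)⟩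

lemma exists_finset_extends (h : IsBranching φ F i Γ) (b : ℕ) (hx : x ∉ Γ) (s : Fin 3) :
    ∃ W : Finset (List (κ × Fin 3)), W.card = 2 ^ b ∧ ∀ w ∈ W, Extends φ F i Γ b x s w := by
  classical
  induction b generalizing x s with
  | zero =>
    refine ⟨{[]}, rfl, fun w hw => ?_⟩
    rw [Finset.mem_singleton.1 hw]
    exact ⟨rfl, trivial, List.isChain_singleton _⟩
  | succ b ih =>
    obtain ⟨t, u, t', u', hne, htu, htu'⟩ := h.exists_two_isTwoStep hx s
    obtain ⟨W, hcard, hW⟩ := ih htu.2.2.2.2.2 u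
    obtain ⟨W', hcard', hW'⟩ := ih htu'.2.2.2.2.2 u'
    refine ⟨W.image (· ++ [(i, u), (i, t)]) ∪ W'.image (· ++ [(i, u'), (i, t')]), ?_, ?_⟩
    · rw [Finset.card_union_of_disjoint, Finset.card_image_of_injective _
        (List.append_left_injective _), Finset.card_image_of_injective _
        (List.append_left_injective _), hcard, hcard', pow_succ, mul_two]
      rw [Finset.disjoint_left]
      intro w hw hw'
      obtain ⟨v, -, rfl⟩ := Finset.mem_image.1 hw
      obtain ⟨v', -, heq⟩ := Finset.mem_image.1 hw'
      have htail := (List.append_inj' heq rfl).2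
      simp only [List.cons.injEq, Prod.mk.injEq, true_and, and_true] at htail
      exact hne (by rw [htail.1, htail.2])
    · intro w hw
      obtain hw | hw := Finset.mem_union.1 hw
      · obtain ⟨v, hv, rfl⟩ := Finset.mem_image.1 hw
        exact (hW v hv).append_twoStep htu
      · obtain ⟨v, hv, rfl⟩ := Finset.mem_image.1 hw
        exact (hW' v hv).append_twoStep htu'

lemma two_pow_le_card_reachable [Fintype V] (h : IsBranching φ F i Γ)
    (hφ : ∀ a, (φ a).Involutive) (hF : HasGirthAbove φ (2 * b + 1) F) {s : Fin 3}
    (hs : AllowedStep φ F i Γ (i, s) v) : 2 ^ b ≤ (reachable φ F i Γ (2 * b + 1) v).card := by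
  obtain ⟨W, hcard, hW⟩ := h.exists_finset_extends b hs.2.2 s
  have halong (w) (hw : w ∈ W) : AlongWord φ (AllowedStep φ F i Γ) (w ++ [(i, s)]) v :=
    alongWord_append.2 ⟨⟨trivial, hs⟩, (hW w hw).2.1⟩
  have hlen (w) (hw : w ∈ W) : (w ++ [(i, s)]).length = 2 * b + 1 := by
    rw [List.length_append, (hW w hw).1]
    rfl
  rw [← hcard]
  refine Finset.card_le_card_of_injOn (fun w => wordAct φ (w ++ [(i, s)]) v) ?_ ?_
  · intro w hw
    exact mem_reachable.2 ⟨w ++ [(i, s)], hlen w hw, halong w hw, rfl⟩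
  · intro w hw w' hw' heq
    refine List.append_cancel_right (word_eq_of_wordAct_eq hφ hF (hW w hw).2.2 (hW w' hw').2.2
      ((halong w hw).mono fun _ _ h => h.2.1) ((halong w' hw').mono fun _ _ h => h.2.1) ?_ heq)
    rw [hlen w hw, hlen w' hw']
    omega

end IsBranching

end Growth

section Scattered

variable {κ V : Type*} [DecidableEq κ]

/-- A set of tame vertices that are far from the cores and from each other, in the sense of the
words of length at most three that lead from one to another. -/
structure IsScattered (φ : κ × Fin 3 → V → V) (R l : ℕ) (r : V) (S : Set V) : Prop where
  isTame : ∀ y ∈ S, IsTame φ l y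
  notMem_coreUnion : ∀ y ∈ S, ∀ ρ : List (κ × Fin 3), ρ.length ≤ 3 →
    wordAct φ ρ y ∉ coreUnion φ R l r
  notMem_self : ∀ y ∈ S, ∀ ρ : List (κ × Fin 3), IsReduced ρ → 2 ≤ ρ.length → ρ.length ≤ 3 →
    wordAct φ ρ y ∉ S

variable {φ : κ × Fin 3 → V → V} {F : Set ((κ × Fin 3) × Sym2 V)} {i : κ} {x y v r : V}
  {R l h : ℕ} {S : Set V}

namespace IsScattered

lemma isTame_of_mem (hS : IsScattered φ R l r S) (hφ : IsMatchingSystem φ)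
    (hy : y ∈ coreUnion φ R l r ∪ S) : IsTame φ l y :=
  hy.elim (isTame_of_mem_coreUnion hφ.involutive) (hS.isTame y)

lemma apply_mem_of_wordAct_mem (hS : IsScattered φ R l r S) (hφ : IsMatchingSystem φ)
    (hy : y ∈ coreUnion φ R l r ∪ S) {ρ : List (κ × Fin 3)} {c : κ × Fin 3}
    (hred : IsReduced (ρ ++ [c])) (hne : ρ ≠ []) (hlen : ρ.length ≤ 2)
    (hz : wordAct φ (ρ ++ [c]) y ∈ coreUnion φ R l r ∪ S) :
    φ c y ∈ coreUnion φ R l r ∪ S := by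
  have hpos := List.length_pos_of_ne_nil hne
  have hlen' : (ρ ++ [c]).length ≤ 3 := by rw [List.length_append, List.length_singleton]; omega
  obtain hy | hy := hy
  · obtain hz | hz := hz
    · exact Or.inl (apply_mem_coreUnion_of_wordAct_mem hφ.involutive hy hred hlen hz)
    · refine absurd ?_ (hS.notMem_coreUnion _ hz (ρ ++ [c]).reverse (by rwa [List.length_reverse]))
      rwa [wordAct_reverse_wordAct hφ.involutive]
  · obtain hz | hz := hz
    · exact absurd hz (hS.notMem_coreUnion y hy _ hlen')
    · refine absurd hz (hS.notMem_self y hy _ hred ?_ hlen')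
      rw [List.length_append, List.length_singleton]
      omega

lemma stepIn_of_wordAct_mem (hS : IsScattered φ R l r S) (hφ : IsMatchingSystem φ)
    (hF : Maximal (HasGirthAbove φ h) F) (hl : 2 * h + 4 ≤ l) {ρ : List (κ × Fin 3)}
    (hρ : ρ.length ≤ 2) (hx : wordAct φ ρ x ∈ coreUnion φ R l r ∪ S) (a : κ × Fin 3) :
    StepIn φ F a x := by
  refine stepEdge_mem_of_isTame hφ.involutive hF ?_ a
  have htame := (hS.isTame_of_mem hφ hx).wordAct (l' := 2 * h) hφ.involutive ρ.reverse
    (by rw [List.length_reverse]; omega)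
  rwa [wordAct_reverse_wordAct hφ.involutive] at htame

lemma eq_of_not_allowed (hS : IsScattered φ R l r S) (hφ : IsMatchingSystem φ)
    (hF : Maximal (HasGirthAbove φ h) F) (hl : 2 * h + 4 ≤ l) (hsparse : ¬HasDenseSet (4 * h) φ)
    (hx : x ∉ coreUnion φ R l r ∪ S) {t t' : Fin 3}
    (ht : ¬AllowedStep φ F i (coreUnion φ R l r ∪ S) (i, t) x)
    (ht' : ¬AllowedStep φ F i (coreUnion φ R l r ∪ S) (i, t') x) : t = t' := by
  by_contra hne
  have hne' : ((i, t') : κ × Fin 3) ≠ (i, t) := fun h => hne (congrArg Prod.snd h).symm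
  simp only [AllowedStep, true_and, not_and, not_not] at ht ht'
  by_cases hstep : StepIn φ F (i, t) x
  · have hstep' := hS.stepIn_of_wordAct_mem hφ hF hl (ρ := [(i, t)]) (by simp) (ht hstep) (i, t')
    have hback := hS.apply_mem_of_wordAct_mem hφ (ht hstep) (ρ := [(i, t')]) (c := (i, t))
      (by simpa using Ne.symm hne) (List.cons_ne_nil _ _) (by simp)
      (by simpa only [List.singleton_append, wordAct_cons, wordAct_nil, hφ.involutive (i, t) x]
        using ht' hstep')
    rw [hφ.involutive] at hback
    exact hx hback
  · have hstep' : ¬StepIn φ F (i, t') x := fun hstep' =>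
      hstep (hS.stepIn_of_wordAct_mem hφ hF hl (ρ := [(i, t')]) (by simp) (ht' hstep') (i, t))
    exact hsparse (hasDenseSet_of_two_missing_edges hφ.involutive hF hstep hstep'
      (fun h => hne' (congrArg Prod.fst h).symm) (Or.inl rfl))

lemma allowed_of_not_allowed (hS : IsScattered φ R l r S) (hφ : IsMatchingSystem φ)
    (hF : Maximal (HasGirthAbove φ h) F) (hl : 2 * h + 4 ≤ l) (hsparse : ¬HasDenseSet (4 * h) φ)
    (hx : x ∉ coreUnion φ R l r ∪ S) {s t t' : Fin 3} (hts : t ≠ s) (hts' : t' ≠ s)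
    (hs : AllowedStep φ F i (coreUnion φ R l r ∪ S) (i, s) x)
    (ht : ¬AllowedStep φ F i (coreUnion φ R l r ∪ S) (i, t) x) :
    AllowedStep φ F i (coreUnion φ R l r ∪ S) (i, t') (φ (i, s) x) := by
  by_contra ht'
  have hts_pair : ((i, t) : κ × Fin 3) ≠ (i, s) := fun h => hts (congrArg Prod.snd h)
  simp only [AllowedStep, true_and, not_and, not_not] at ht ht'
  by_cases hstep : StepIn φ F (i, t) x
  · have hstep' := hS.stepIn_of_wordAct_mem hφ hF hl (x := φ (i, s) x) (ρ := [(i, t), (i, s)])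
      (by simp) (by simpa [hφ.involutive (i, s) x] using ht hstep) (i, t')
    have hback := hS.apply_mem_of_wordAct_mem hφ (ht hstep) (ρ := [(i, t'), (i, s)]) (c := (i, t))
      (by simp [hts', hts.symm]) (List.cons_ne_nil _ _) (by simp)
      (by simpa [hφ.involutive (i, t) x] using ht' hstep')
    rw [hφ.involutive] at hback
    exact hx hback
  · have hstep' : ¬StepIn φ F (i, t') (φ (i, s) x) := fun hstep' =>
      hstep (hS.stepIn_of_wordAct_mem hφ hF hl (ρ := [(i, t'), (i, s)]) (by simp)
        (ht' hstep') (i, t))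
    refine hsparse (hasDenseSet_of_two_missing_edges hφ.involutive hF hstep hstep' (fun heq => ?_)
      (Or.inr ⟨(i, s), rfl, hs.2.1⟩))
    obtain ⟨-, hsx | hsx⟩ := eq_of_stepEdge_eq heq.symm
    · exact hφ.ne_self _ _ hsx
    · exact hts_pair (hφ.color_inj hsx).symm

lemma isBranching (hS : IsScattered φ R l r S) (hφ : IsMatchingSystem φ)
    (hF : Maximal (HasGirthAbove φ h) F) (hl : 2 * h + 4 ≤ l) (hsparse : ¬HasDenseSet (4 * h) φ)
    (i : κ) : IsBranching φ F i (coreUnion φ R l r ∪ S) where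
  eq_of_not_allowed _ hx _ _ := hS.eq_of_not_allowed hφ hF hl hsparse hx
  allowed_of_not_allowed _ hx _ _ _ := hS.allowed_of_not_allowed hφ hF hl hsparse hx

lemma exists_allowedStep (hS : IsScattered φ R l r S) (hφ : IsMatchingSystem φ)
    (hF : Maximal (HasGirthAbove φ h) F) (hl : 2 * h + 4 ≤ l) (hsparse : ¬HasDenseSet (4 * h) φ)
    (hv : v ∉ core φ R l r i) (hvr : v ≠ r) :
    ∃ s, AllowedStep φ F i (coreUnion φ R l r ∪ S) (i, s) v := by
  by_cases hmem : v ∈ coreUnion φ R l r ∪ S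
  swap
  · obtain ⟨s, -, hs⟩ := (hS.isBranching hφ hF hl hsparse i).exists_allowed_ne hmem 0
    exact ⟨s, hs⟩
  have hstep (t : Fin 3) : StepIn φ F (i, t) v :=
    hS.stepIn_of_wordAct_mem hφ hF hl (ρ := []) (by simp) hmem (i, t)
  obtain hcore | hvS := hmem
  · obtain rfl | ⟨j, hj⟩ := eq_or_mem_core_of_mem_coreUnion hcore
    · exact absurd rfl hvr
    have hij : i ≠ j := by
      rintro rfl
      exact hv hj
    refine ⟨0, rfl, hstep 0, ?_⟩
    rintro (hentry | hentry)
    · exact apply_notMem_coreUnion hφ.involutive hij hj 0 hentry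
    · exact hS.notMem_coreUnion _ hentry [(i, 0)] (by simp)
        (by simpa [hφ.involutive _ v] using hcore)
  · have hnotCore (t : Fin 3) : φ (i, t) v ∉ coreUnion φ R l r :=
      hS.notMem_coreUnion v hvS [(i, t)] (by simp)
    by_cases hzero : φ (i, 0) v ∈ S
    · refine ⟨1, rfl, hstep 1, not_or_intro (hnotCore 1) fun hone => ?_⟩
      exact hS.notMem_self _ hzero [(i, 1), (i, 0)] (by simp) (by simp) (by simp)
        (by simpa [hφ.involutive _ v] using hone)
    · exact ⟨0, rfl, hstep 0, not_or_intro (hnotCore 0) hzero⟩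

end IsScattered

end Scattered

/-! ### Spanning trees from parent functions -/

section ParentTree

variable {V : Type*}

/-- `x` lies on the path from `v` to `r` obtained by iterating `parent`. -/
def IsAncestor (r : V) (parent : V → V) : V → V → Prop :=
  Relation.ReflTransGen fun x y => x ≠ r ∧ y = parent x

/-- The graph joining every vertex other than `r` to its parent. -/
def parentTree (r : V) (parent : V → V) : SimpleGraph V :=
  SimpleGraph.fromRel fun x y => x ≠ r ∧ y = parent x

variable {r v x : V} {parent : V → V} {rank : V → ℕ}

lemma forall_parentTree_adj {p : V → V → Prop} (hp : ∀ x y, p x y → p y x)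
    (h : ∀ x ≠ r, p x (parent x)) {x y : V} (hxy : (parentTree r parent).Adj x y) : p x y := by
  obtain ⟨hx, rfl⟩ | ⟨hy, rfl⟩ := ((SimpleGraph.fromRel_adj _ _ _).1 hxy).2
  · exact h x hx
  · exact hp _ _ (h y hy)

lemma parentTree_adj (hrank : ∀ x ≠ r, rank (parent x) < rank x) (hx : x ≠ r) :
    (parentTree r parent).Adj x (parent x) := by
  refine (SimpleGraph.fromRel_adj _ _ _).2 ⟨fun heq => ?_, Or.inl ⟨hx, rfl⟩⟩
  exact (hrank x hx).ne (congrArg rank heq.symm)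

lemma exists_walk_to_root (hrank : ∀ x ≠ r, rank (parent x) < rank x) (v : V) :
    ∃ p : (parentTree r parent).Walk v r, ∀ x ∈ p.support, IsAncestor r parent v x := by
  induction v using (measure rank).wf.induction with
  | _ v ih =>
    by_cases hvr : v = r
    · subst hvr
      refine ⟨SimpleGraph.Walk.nil, fun x hx => ?_⟩
      rw [SimpleGraph.Walk.support_nil, List.mem_singleton] at hx
      exact hx ▸ Relation.ReflTransGen.refl
    · obtain ⟨p, hp⟩ := ih (parent v) (hrank v hvr)
      refine ⟨SimpleGraph.Walk.cons (parentTree_adj hrank hvr) p, fun x hx => ?_⟩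
      rw [SimpleGraph.Walk.support_cons, List.mem_cons] at hx
      obtain rfl | hx := hx
      · exact Relation.ReflTransGen.refl
      · exact Relation.ReflTransGen.head ⟨hvr, rfl⟩ (hp x hx)

lemma connected_parentTree (hrank : ∀ x ≠ r, rank (parent x) < rank x) :
    (parentTree r parent).Connected :=
  have : Nonempty V := ⟨r⟩
  ⟨fun u v => (exists_walk_to_root hrank u).choose.reachable.trans
    (exists_walk_to_root hrank v).choose.reachable.symm⟩

lemma card_edgeSet_parentTree_le [Finite V] :
    Nat.card (parentTree r parent).edgeSet ≤ Nat.card V - 1 := by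
  have hsub : (parentTree r parent).edgeSet ⊆ (fun x => s(x, parent x)) '' {r}ᶜ := by
    intro e he
    induction e with | _ x y
    rw [SimpleGraph.mem_edgeSet, parentTree, SimpleGraph.fromRel_adj] at he
    obtain ⟨hx, rfl⟩ | ⟨hy, rfl⟩ := he.2
    · exact ⟨x, hx, rfl⟩
    · exact ⟨y, hy, Sym2.eq_swap⟩
  calc Nat.card (parentTree r parent).edgeSet
    _ ≤ ((fun x => s(x, parent x)) '' {r}ᶜ).ncard := Set.ncard_le_ncard hsub (Set.toFinite _)
    _ ≤ ({r}ᶜ : Set V).ncard := Set.ncard_image_le (Set.toFinite _)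
    _ = Nat.card V - 1 := by rw [Set.ncard_compl, Set.ncard_singleton]

lemma isTree_parentTree [Finite V] (hrank : ∀ x ≠ r, rank (parent x) < rank x) :
    (parentTree r parent).IsTree := by
  have hconn := connected_parentTree hrank
  refine SimpleGraph.isTree_iff_connected_and_card.2 ⟨hconn, ?_⟩
  have hlower := hconn.card_vert_le_card_edgeSet_add_one
  have hupper := card_edgeSet_parentTree_le (r := r) (parent := parent)
  have : Nonempty V := ⟨r⟩
  have hpos : 0 < Nat.card V := Nat.card_pos
  omega

lemma isAncestor_of_mem_support [Finite V] (hrank : ∀ x ≠ r, rank (parent x) < rank x)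
    {p : (parentTree r parent).Walk v r} (hp : p.IsPath) (hx : x ∈ p.support) :
    IsAncestor r parent v x := by
  classical
  obtain ⟨q, hq⟩ := exists_walk_to_root hrank v
  have heq := ((isTree_parentTree hrank).2.subsingleton_path v r).elim ⟨p, hp⟩
    ⟨q.bypass, q.bypass_isPath⟩
  rw [show p = q.bypass from congrArg Subtype.val heq] at hx
  exact hq x (q.support_bypass_subset_support hx)

end ParentTree

theorem hasStrongISTs_of_parents {N t : ℕ} {L M : SimpleGraph (Fin N)} {r : Fin N}
    {parent : Fin t → Fin N → Fin N} {rank : Fin t → Fin N → ℕ}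
    (hrank : ∀ i, ∀ x ≠ r, rank i (parent i x) < rank i x)
    (hL : ∀ i, ∀ x ≠ r, L.Adj x (parent i x)) (hM : ∀ i, ∀ x ≠ r, parent i x ∉ M.support)
    (hr : r ∉ M.support)
    (hsame : ∀ i j, i ≠ j → ∀ v x, v ≠ r → IsAncestor r (parent i) v x →
      IsAncestor r (parent j) v x → x = v ∨ x = r)
    (hdistinct : ∀ i j, i ≠ j → ∀ u v x, u ∈ M.support → v ∈ M.support → u ≠ v →
      IsAncestor r (parent i) u x → IsAncestor r (parent j) v x → x = r) :
    HasStrongISTs L M r t := by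
  refine ⟨fun i => parentTree r (parent i), ⟨fun i => ⟨fun x y hxy => ?_,
    isTree_parentTree (hrank i)⟩, ?_⟩, fun i => ?_, ?_⟩
  · exact forall_parentTree_adj (p := L.Adj) (fun _ _ => SimpleGraph.Adj.symm) (hL i) hxy
  · exact fun v hv i j hij p q hp hq x hx hx' => hsame i j hij v x hv
      (isAncestor_of_mem_support (hrank i) hp hx) (isAncestor_of_mem_support (hrank j) hq hx')
  · refine SimpleGraph.disjoint_left.2 fun x y hxy hMxy => ?_
    exact forall_parentTree_adj (p := fun x y => ¬M.Adj x y) (fun x y h hyx => h hyx.symm)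
      (fun x hx hMx => hM i x hx ⟨x, hMx.symm⟩) hxy hMxy
  · intro i j hij u v hu hv p q hp hq
    have hur : u ≠ r := fun h => hr (h ▸ hu)
    split_ifs with huv
    · subst huv
      refine Set.Subset.antisymm (fun x hx => ?_) ?_
      · exact hsame i j hij u x hur (isAncestor_of_mem_support (hrank i) hp hx.1)
          (isAncestor_of_mem_support (hrank j) hq hx.2)
      · rintro x (rfl | rfl)
        · exact ⟨p.start_mem_support, q.start_mem_support⟩
        · exact ⟨p.end_mem_support, q.end_mem_support⟩
    · refine Set.Subset.antisymm (fun x hx => ?_) ?_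
      · exact hdistinct i j hij u v x hu hv huv (isAncestor_of_mem_support (hrank i) hp hx.1)
          (isAncestor_of_mem_support (hrank j) hq hx.2)
      · rintro x rfl
        exact ⟨p.end_mem_support, q.end_mem_support⟩

section LinkDist

variable {α V : Type*}

/-- `w` is a word of steps satisfying `P` whose endpoint is mapped into `C` by the link `ν`. -/
def LinksTo (φ : α → V → V) (P : α → V → Prop) (ν : V → V) (C : Set V) (w : List α) (v : V) :
    Prop :=
  AlongWord φ P w v ∧ ν (wordAct φ w v) ∈ C

/-- The least length of a word linking `v` to `C` (`0` if there is none). -/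
noncomputable def linkDist (φ : α → V → V) (P : α → V → Prop) (ν : V → V) (C : Set V) (v : V) : ℕ :=
  sInf {m | ∃ w : List α, w.length = m ∧ LinksTo φ P ν C w v}

/-- The possible parents `y` of `x` in a tree that consists of steps inside `C ∪ {r}`, links into
`C`, and steps satisfying `P` towards the links. -/
def IsTreeStep (φ : α → V → V) (P : α → V → Prop) (ν : V → V) (C : Set V) (r x y : V) : Prop :=
  (y ∈ C ∨ y = r) ∧ (y = ν x ∨ ∃ a, y = φ a x) ∨
    x ∉ C ∧ ∃ a, P a x ∧ y = φ a x ∧ linkDist φ P ν C y + 1 ≤ linkDist φ P ν C x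

open Classical in
/-- A function decreasing along a tree step: first the distance to the links, then the depth
in `C`. -/
noncomputable def treeRank (φ : α → V → V) (P : α → V → Prop) (ν : V → V) (C : Set V) (r : V)
    (R : ℕ) (depth : V → ℕ) (x : V) : ℕ :=
  if x = r then 0 else if x ∈ C then depth x + 1 else R + 2 + linkDist φ P ν C x

variable {φ : α → V → V} {P : α → V → Prop} {ν : V → V} {C : Set V} {r v x : V} {w : List α}
  {R h : ℕ} {depth : V → ℕ} {parent : V → V}

lemma linkDist_le_length (hw : LinksTo φ P ν C w v) : linkDist φ P ν C v ≤ w.length :=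
  Nat.sInf_le ⟨w, rfl, hw⟩

lemma LinksTo.exists_length_eq_linkDist (hw : LinksTo φ P ν C w v) :
    ∃ w : List α, w.length = linkDist φ P ν C v ∧ LinksTo φ P ν C w v :=
  Nat.sInf_mem (s := {m | ∃ w : List α, w.length = m ∧ LinksTo φ P ν C w v}) ⟨_, w, rfl, hw⟩

lemma treeRank_root : treeRank φ P ν C r R depth r = 0 := if_pos rfl

lemma treeRank_of_mem (hr : r ∉ C) (hx : x ∈ C) : treeRank φ P ν C r R depth x = depth x + 1 := by
  rw [treeRank, if_neg (ne_of_mem_of_not_mem hx hr), if_pos hx]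

lemma treeRank_of_notMem (hxr : x ≠ r) (hx : x ∉ C) :
    treeRank φ P ν C r R depth x = R + 2 + linkDist φ P ν C x := by
  rw [treeRank, if_neg hxr, if_neg hx]

lemma exists_isTreeStep_of_mem (hr : r ∉ C) (hx : x ∈ C)
    (hdepth : ∃ a, φ a x = r ∨ φ a x ∈ C ∧ depth (φ a x) < depth x) :
    ∃ y, treeRank φ P ν C r R depth y < treeRank φ P ν C r R depth x ∧
      IsTreeStep φ P ν C r x y := by
  obtain ⟨a, hroot | ⟨hmem, hlt⟩⟩ := hdepth
  · refine ⟨φ a x, ?_, Or.inl ⟨Or.inr hroot, Or.inr ⟨a, rfl⟩⟩⟩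
    rw [hroot, treeRank_root, treeRank_of_mem hr hx]
    omega
  · refine ⟨φ a x, ?_, Or.inl ⟨Or.inl hmem, Or.inr ⟨a, rfl⟩⟩⟩
    rw [treeRank_of_mem hr hmem, treeRank_of_mem hr hx]
    omega

lemma exists_isTreeStep_of_notMem (hr : r ∉ C) (hdepth : ∀ x ∈ C, depth x ≤ R)
    (hP : ∀ a x, P a x → φ a x ≠ r ∧ φ a x ∉ C) (hxr : x ≠ r) (hx : x ∉ C)
    (hlink : LinksTo φ P ν C w x) :
    ∃ y, treeRank φ P ν C r R depth y < treeRank φ P ν C r R depth x ∧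
      IsTreeStep φ P ν C r x y := by
  obtain ⟨w, hlen, halong, hend⟩ := hlink.exists_length_eq_linkDist
  obtain rfl | ⟨w, a, rfl⟩ := List.eq_nil_or_concat' w
  · rw [wordAct_nil] at hend
    refine ⟨ν x, ?_, Or.inl ⟨Or.inl hend, Or.inl rfl⟩⟩
    rw [treeRank_of_mem hr hend, treeRank_of_notMem hxr hx]
    exact Nat.lt_add_right _ (Nat.succ_lt_succ (Nat.lt_succ_of_le (hdepth _ hend)))
  · rw [alongWord_append] at halong
    rw [wordAct_append] at hend
    have hstep : P a x := halong.1.2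
    have hle : linkDist φ P ν C (φ a x) + 1 ≤ linkDist φ P ν C x := by
      rw [← hlen, List.length_append]
      exact Nat.succ_le_succ (linkDist_le_length ⟨halong.2, hend⟩)
    refine ⟨φ a x, ?_, Or.inr ⟨hx, a, hstep, rfl, hle⟩⟩
    rw [treeRank_of_notMem (hP a x hstep).1 (hP a x hstep).2, treeRank_of_notMem hxr hx]
    omega

/-- `x` is reached from `v` by a nonempty reduced word of at most `h` steps satisfying `P`. -/
def OnBranch (φ : α → V → V) (P : α → V → Prop) (h : ℕ) (v x : V) : Prop :=
  ∃ w : List α, w ≠ [] ∧ IsReduced w ∧ w.length ≤ h ∧ AlongWord φ P w v ∧ wordAct φ w v = x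

/-- The vertices that can occur on the path from `v` to the root `r` in a tree of tree steps. -/
def OnTreePath (φ : α → V → V) (P : α → V → Prop) (C : Set V) (r : V) (h : ℕ) (v x : V) : Prop :=
  x = v ∨ x = r ∨ x ∈ C ∨ OnBranch φ P h v x

lemma mem_or_eq_of_isAncestor (hparent : ∀ x ≠ r, IsTreeStep φ P ν C r x (parent x))
    (hvx : IsAncestor r parent v x) (hv : v ∈ C ∨ v = r) : x ∈ C ∨ x = r := by
  induction hvx with
  | refl => exact hv
  | tail _ hstep ih =>
    obtain ⟨hne, rfl⟩ := hstep
    obtain ⟨hmem, -⟩ | ⟨hnot, -⟩ := hparent _ hne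
    · exact hmem
    · exact absurd (ih.resolve_right hne) hnot

lemma exists_word_of_isAncestor (hparent : ∀ x ≠ r, IsTreeStep φ P ν C r x (parent x))
    (hvx : IsAncestor r parent v x) : (x ∈ C ∨ x = r) ∨
      ∃ w : List α, w.length + linkDist φ P ν C x ≤ linkDist φ P ν C v ∧ AlongWord φ P w v ∧
        wordAct φ w v = x := by
  induction hvx with
  | refl => exact Or.inr ⟨[], by simp, trivial, rfl⟩
  | tail _ hstep ih =>
    obtain ⟨hne, rfl⟩ := hstep
    obtain ⟨hmem, -⟩ | ⟨hnot, a, ha, hparent_eq, hle⟩ := hparent _ hne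
    · exact Or.inl hmem
    obtain hmem | ⟨w, hlen, halong, rfl⟩ := ih
    · exact absurd hmem (not_or_intro hnot hne)
    · refine Or.inr ⟨a :: w, ?_, ⟨halong, ha⟩, hparent_eq.symm⟩
      rw [List.length_cons]
      omega

lemma onTreePath_of_isAncestor (hφ : ∀ a, (φ a).Involutive)
    (hlink : ∀ v ≠ r, v ∉ C → ∃ w : List α, w.length ≤ h ∧ LinksTo φ P ν C w v)
    (hparent : ∀ x ≠ r, IsTreeStep φ P ν C r x (parent x)) (hvx : IsAncestor r parent v x) :
    OnTreePath φ P C r h v x := by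
  classical
  by_cases hv : v ∈ C ∨ v = r
  · obtain hx | hx := mem_or_eq_of_isAncestor hparent hvx hv
    exacts [Or.inr (Or.inr (Or.inl hx)), Or.inr (Or.inl hx)]
  rw [not_or] at hv
  obtain ⟨u, hu, hlinks⟩ := hlink v hv.2 hv.1
  have hdist := (linkDist_le_length hlinks).trans hu
  obtain (hx | hx) | ⟨w, hlen, halong, rfl⟩ := exists_word_of_isAncestor hparent hvx
  · exact Or.inr (Or.inr (Or.inl hx))
  · exact Or.inr (Or.inl hx)
  rw [← wordAct_reduceWord hφ]
  by_cases hw : reduceWord w = []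
  · exact Or.inl (by rw [hw, wordAct_nil])
  · have := length_reduceWord_le w
    exact Or.inr (Or.inr (Or.inr ⟨reduceWord w, hw, isReduced_reduceWord w, by omega,
      halong.reduceWord hφ, rfl⟩))

lemma OnBranch.exists_step (hx : OnBranch φ P h v x) : ∃ a y, P a y ∧ φ a y = x := by
  obtain ⟨_ | ⟨a, w⟩, hne, -, -, halong, rfl⟩ := hx
  · exact absurd rfl hne
  · exact ⟨a, _, halong.2, rfl⟩

lemma IsTreeStep.adj {L : SimpleGraph V} {y : V} (hlinkAdj : ∀ x, L.Adj x (ν x))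
    (hadj : ∀ a x, L.Adj x (φ a x)) (hxy : IsTreeStep φ P ν C r x y) : L.Adj x y := by
  obtain ⟨-, rfl | ⟨a, rfl⟩⟩ | ⟨-, a, -, rfl, -⟩ := hxy
  exacts [hlinkAdj x, hadj a x, hadj a x]

end LinkDist

section CoreTrees

variable {κ V : Type*} {φ : κ × Fin 3 → V → V}
  {F : Set ((κ × Fin 3) × Sym2 V)} {i j : κ} {R l h : ℕ} {r u v x : V} {S Γ : Set V}

lemma OnBranch.notMem (hx : OnBranch φ (AllowedStep φ F i Γ) h v x) : x ∉ Γ := by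
  obtain ⟨a, y, hy, rfl⟩ := hx.exists_step
  exact hy.2.2

lemma OnBranch.color_eq (hφ : ∀ a, (φ a).Involutive) (hF : HasGirthAbove φ h F)
    (hx : OnBranch φ (AllowedStep φ F i Γ) h v x) (hx' : OnBranch φ (AllowedStep φ F j Γ) h v x) :
    i = j := by
  obtain ⟨w, hne, hred, hlen, halong, rfl⟩ := hx
  obtain ⟨w', -, hred', hlen', halong', heq⟩ := hx'
  obtain rfl := word_eq_of_wordAct_eq hφ hF hred' hred (halong'.mono fun _ _ h => h.2.1)
    (halong.mono fun _ _ h => h.2.1) (by omega) heq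
  obtain _ | ⟨a, w⟩ := w'
  · exact absurd rfl hne
  · exact halong.2.1.symm.trans halong'.2.1

variable [DecidableEq κ]

lemma eq_or_eq_root_of_onTreePath (hφ : ∀ a, (φ a).Involutive) (hF : HasGirthAbove φ h F)
    (hΓ : coreUnion φ R l r ⊆ Γ) (hij : i ≠ j)
    (hx : OnTreePath φ (AllowedStep φ F i Γ) (core φ R l r i) r h v x)
    (hx' : OnTreePath φ (AllowedStep φ F j Γ) (core φ R l r j) r h v x) : x = v ∨ x = r := by
  obtain hx | hx | hx | hx := hx
  · exact Or.inl hx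
  · exact Or.inr hx
  all_goals obtain hx' | hx' | hx' | hx' := hx'
  · exact Or.inl hx'
  · exact Or.inr hx'
  · exact absurd (eq_of_mem_core hφ hx hx') hij
  · exact absurd (hΓ (core_subset_coreUnion i hx)) hx'.notMem
  · exact Or.inl hx'
  · exact Or.inr hx'
  · exact absurd (hΓ (core_subset_coreUnion j hx')) hx.notMem
  · exact absurd (hx.color_eq hφ hF hx') hij

lemma eq_root_of_onTreePath (hφ : ∀ a, (φ a).Involutive) (hΓ : coreUnion φ R l r ⊆ Γ)
    (hu : u ∈ Γ \ coreUnion φ R l r) (hv : v ∈ Γ \ coreUnion φ R l r) (huv : u ≠ v) (hij : i ≠ j)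
    (hbranch : OnBranch φ (AllowedStep φ F i Γ) h u x → ¬OnBranch φ (AllowedStep φ F j Γ) h v x)
    (hx : OnTreePath φ (AllowedStep φ F i Γ) (core φ R l r i) r h u x)
    (hx' : OnTreePath φ (AllowedStep φ F j Γ) (core φ R l r j) r h v x) : x = r := by
  obtain hx | hx | hx | hx := hx
  case inr.inl => exact hx
  all_goals obtain hx' | hx' | hx' | hx' := hx'
  · exact absurd (hx.symm.trans hx') huv
  · exact hx'
  · exact absurd (core_subset_coreUnion j hx') (hx ▸ hu.2)
  · exact absurd (hx ▸ hu.1) hx'.notMem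
  · exact absurd (core_subset_coreUnion i hx) (hx' ▸ hv.2)
  · exact hx'
  · exact absurd (eq_of_mem_core hφ hx hx') hij
  · exact absurd (hΓ (core_subset_coreUnion i hx)) hx'.notMem
  · exact absurd (hx' ▸ hv.1) hx.notMem
  · exact hx'
  · exact absurd (hΓ (core_subset_coreUnion j hx')) hx.notMem
  · exact absurd hx' (hbranch hx)

lemma exists_parent_of_linksTo {ν : V → V} (hφ : ∀ a, (φ a).Involutive)
    (hr : r ∈ coreUnion φ R l r) (hΓ : coreUnion φ R l r ⊆ Γ)
    (hlink : ∀ v ≠ r, v ∉ core φ R l r i →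
      ∃ w, LinksTo φ (AllowedStep φ F i Γ) ν (core φ R l r i) w v) :
    ∃ (parent : V → V) (rank : V → ℕ), ∀ x ≠ r, rank (parent x) < rank x ∧
      IsTreeStep φ (AllowedStep φ F i Γ) ν (core φ R l r i) r x (parent x) := by
  obtain ⟨depth, hdepth⟩ := exists_depth_core (R := R) (l := l) (r := r) hφ i
  have hrcore : r ∉ core φ R l r i := root_notMem_core hφ
  have hP (a : κ × Fin 3) (x : V) (hx : AllowedStep φ F i Γ a x) :
      φ a x ≠ r ∧ φ a x ∉ core φ R l r i :=
    ⟨fun h => hx.2.2 (h ▸ hΓ hr), fun h => hx.2.2 (hΓ (core_subset_coreUnion i h))⟩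
  have hstep (x : V) (hxr : x ≠ r) : ∃ y, treeRank φ (AllowedStep φ F i Γ) ν (core φ R l r i) r R
      depth y < treeRank φ (AllowedStep φ F i Γ) ν (core φ R l r i) r R depth x ∧
        IsTreeStep φ (AllowedStep φ F i Γ) ν (core φ R l r i) r x y := by
    by_cases hx : x ∈ core φ R l r i
    · exact exists_isTreeStep_of_mem hrcore hx (hdepth x hx).2
    · obtain ⟨w, hw⟩ := hlink x hxr hx
      exact exists_isTreeStep_of_notMem hrcore (fun x hx => (hdepth x hx).1) hP hxr hx hw
  choose! parent hparent using hstep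
  exact ⟨parent, _, hparent⟩

lemma IsTreeStep.notMem {ν : V → V} {y : V} (hr : r ∈ coreUnion φ R l r)
    (hS : Disjoint S (coreUnion φ R l r))
    (hxy : IsTreeStep φ (AllowedStep φ F i (coreUnion φ R l r ∪ S)) ν (core φ R l r i) r x y) :
    y ∉ S := by
  intro hyS
  obtain ⟨hy | rfl, -⟩ | ⟨-, a, ha, rfl, -⟩ := hxy
  · exact hS.notMem_of_mem_left hyS (core_subset_coreUnion i hy)
  · exact hS.notMem_of_mem_left hyS hr
  · exact ha.2.2 (Or.inr hyS)

end CoreTrees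

theorem hasStrongISTs_of_linksTo {k N R l h : ℕ} {φ : Fin k × Fin 3 → Fin N → Fin N}
    {F : Set ((Fin k × Fin 3) × Sym2 (Fin N))} {ν : Fin k → Fin N → Fin N} {r : Fin N}
    {L M : SimpleGraph (Fin N)} (hφ : ∀ a, (φ a).Involutive) (hr : r ∈ coreUnion φ R l r)
    (hF : HasGirthAbove φ h F)
    (hlink : ∀ i, ∀ v ≠ r, v ∉ core φ R l r i → ∃ w, w.length ≤ h ∧
      LinksTo φ (AllowedStep φ F i (coreUnion φ R l r ∪ M.support)) (ν i) (core φ R l r i) w v)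
    (hlinkAdj : ∀ i x, L.Adj x (ν i x)) (hadj : ∀ a x, L.Adj x (φ a x))
    (hM : Disjoint M.support (coreUnion φ R l r))
    (hbranch : ∀ i j, i ≠ j → ∀ u ∈ M.support, ∀ v ∈ M.support, u ≠ v → ∀ x,
      OnBranch φ (AllowedStep φ F i (coreUnion φ R l r ∪ M.support)) h u x →
      ¬OnBranch φ (AllowedStep φ F j (coreUnion φ R l r ∪ M.support)) h v x) :
    HasStrongISTs L M r k := by
  have hΓ : coreUnion φ R l r ⊆ coreUnion φ R l r ∪ M.support := Set.subset_union_left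
  choose parent rank hparent using fun i => exists_parent_of_linksTo (i := i) hφ hr hΓ
    fun v hvr hv => (hlink i v hvr hv).imp fun _ hw => hw.2
  have honPath (i) {v x} : IsAncestor r (parent i) v x → _ :=
    onTreePath_of_isAncestor hφ (hlink i) fun x hx => (hparent i x hx).2
  have hmem {v} (hv : v ∈ M.support) :
      v ∈ (coreUnion φ R l r ∪ M.support) \ coreUnion φ R l r :=
    ⟨Or.inr hv, hM.notMem_of_mem_left hv⟩
  refine hasStrongISTs_of_parents (fun i x hx => (hparent i x hx).1)
    (fun i x hx => (hparent i x hx).2.adj (hlinkAdj i) hadj)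
    (fun i x hx => (hparent i x hx).2.notMem hr hM) (hM.notMem_of_mem_right hr) ?_ ?_
  · exact fun i j hij v x _ hx hx' =>
      eq_or_eq_root_of_onTreePath hφ hF hΓ hij (honPath i hx) (honPath j hx')
  · exact fun i j hij u v x hu hv huv hx hx' => eq_root_of_onTreePath hφ hΓ (hmem hu) (hmem hv)
      huv hij (hbranch i j hij u hu v hv huv x) (honPath i hx) (honPath j hx')

/-! ### Strong independent spanning trees from links -/

section Linked

variable {κ V : Type*}

variable {φ : κ × Fin 3 → V → V} {F : Set ((κ × Fin 3) × Sym2 V)} {i : κ} {R l b h : ℕ}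
  {v r : V} {S T Γ : Set V}

lemma exists_union_eq_union_pair (hΓ : Γ.Nonempty)
    (hT : ∀ x ∈ T, ∀ y ∈ T, ∀ z ∈ T, y ≠ x → z ≠ x → y = z) :
    ∃ y₁ y₂, Γ ∪ T = Γ ∪ {y₁, y₂} := by
  obtain rfl | ⟨x, hx⟩ := T.eq_empty_or_nonempty
  · obtain ⟨g, hg⟩ := hΓ
    exact ⟨g, g, by simp [hg]⟩
  by_cases hsub : ∃ y ∈ T, y ≠ x
  · obtain ⟨y, hy, hyx⟩ := hsub
    refine ⟨x, y, congrArg _ (Set.Subset.antisymm (fun z hz => ?_) ?_)⟩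
    · exact or_iff_not_imp_left.2 fun hzx => hT x hx z hz y hy hzx hyx
    · exact Set.insert_subset hx (Set.singleton_subset_iff.2 hy)
  · push Not at hsub
    refine ⟨x, x, congrArg _ ?_⟩
    rw [Set.pair_eq_singleton]
    exact Set.eq_singleton_iff_unique_mem.2 ⟨hx, hsub⟩

/-- The vertices reached from `v` by words of length at most `h`. -/
def nearby (φ : κ × Fin 3 → V → V) (h : ℕ) (v : V) : Set V :=
  {y | ∃ w : List (κ × Fin 3), w.length ≤ h ∧ wordAct φ w v = y}

lemma alongWord_of_alongWord_inter_nearby {w : List (κ × Fin 3)} (hw : w.length ≤ h)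
    (halong : AlongWord φ (AllowedStep φ F i (Γ ∪ S ∩ nearby φ h v)) w v) :
    AlongWord φ (AllowedStep φ F i (Γ ∪ S)) w v := by
  induction w with
  | nil => trivial
  | cons a w ih =>
    refine ⟨ih ((Nat.le_succ _).trans hw) halong.1, halong.2.1, halong.2.2.1, ?_⟩
    rintro (hmem | hmem)
    · exact halong.2.2.2 (Or.inl hmem)
    · exact halong.2.2.2 (Or.inr ⟨hmem, a :: w, hw, rfl⟩)

variable [DecidableEq κ]

/-- Each link `ν i` leads into the `i`-th core from every set reached by binary growth in a maximal
subset of large girth that avoids the cores and at most two further vertices. -/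
def IsLinked [Finite κ] [Fintype V] (φ : κ × Fin 3 → V → V) (ν : κ → V → V) (b R l : ℕ) (r : V) :
    Prop :=
  ∀ i v y₁ y₂, 2 ^ b ≤ (reachable φ (maxGirthSubset φ (2 * b + 1)) i
      (coreUnion φ R l r ∪ {y₁, y₂}) (2 * b + 1) v).card →
    ∃ x ∈ reachable φ (maxGirthSubset φ (2 * b + 1)) i (coreUnion φ R l r ∪ {y₁, y₂})
      (2 * b + 1) v, ν i x ∈ core φ R l r i

lemma IsScattered.mono (hS : IsScattered φ R l r S) (hTS : T ⊆ S) : IsScattered φ R l r T where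
  isTame y hy := hS.isTame y (hTS hy)
  notMem_coreUnion y hy := hS.notMem_coreUnion y (hTS hy)
  notMem_self y hy ρ hred hlen hlen' hmem := hS.notMem_self y (hTS hy) ρ hred hlen hlen' (hTS hmem)

/-- Only the at most two points of `S` near `v` matter, which is why two exceptional vertices in
`IsLinked` suffice. -/
lemma IsLinked.exists_linksTo [Finite κ] [Fintype V] {ν : κ → V → V} (hφ : IsMatchingSystem φ)
    (hr : r ∈ coreUnion φ R l r) (hl : 2 * (2 * b + 1) + 4 ≤ l)
    (hsparse : ¬HasDenseSet (4 * (2 * b + 1)) φ) (hlink : IsLinked φ ν b R l r)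
    (hS : IsScattered φ R l r S)
    (hpair : ∀ x ∈ S, ∀ y ∈ S, ∀ z ∈ S, y ≠ x → z ≠ x → y ∈ nearby φ (2 * (2 * b + 1)) x →
      z ∈ nearby φ (2 * (2 * b + 1)) x → y = z) (hvr : v ≠ r) (hv : v ∉ core φ R l r i) :
    ∃ w, w.length ≤ 2 * b + 1 ∧ LinksTo φ (AllowedStep φ (maxGirthSubset φ (2 * b + 1)) i
      (coreUnion φ R l r ∪ S)) (ν i) (core φ R l r i) w v := by
  have hT : IsScattered φ R l r (S ∩ nearby φ (2 * b + 1) v) := hS.mono Set.inter_subset_left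
  have hnear {x y : V} (hx : x ∈ nearby φ (2 * b + 1) v) (hy : y ∈ nearby φ (2 * b + 1) v) :
      y ∈ nearby φ (2 * (2 * b + 1)) x := by
    obtain ⟨w, hw, rfl⟩ := hx
    obtain ⟨w', hw', rfl⟩ := hy
    refine ⟨w' ++ w.reverse, ?_, ?_⟩
    · rw [List.length_append, List.length_reverse]
      omega
    · rw [wordAct_append, wordAct_reverse_wordAct hφ.involutive]
  obtain ⟨y₁, y₂, hy⟩ := exists_union_eq_union_pair (T := S ∩ nearby φ (2 * b + 1) v) ⟨r, hr⟩
    fun x hx y hy z hz hyx hzx =>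
      hpair x hx.1 y hy.1 z hz.1 hyx hzx (hnear hx.2 hy.2) (hnear hx.2 hz.2)
  have hF := maximal_maxGirthSubset φ (2 * b + 1)
  obtain ⟨s, hs⟩ := hT.exists_allowedStep hφ hF hl hsparse hv hvr
  have hcard := (hT.isBranching hφ hF hl hsparse i).two_pow_le_card_reachable hφ.involutive
    hF.prop hs
  rw [hy] at hcard
  obtain ⟨x, hx, hxcore⟩ := hlink i v y₁ y₂ hcard
  rw [← hy] at hx
  obtain ⟨w, hlen, halong, rfl⟩ := mem_reachable.1 hx
  exact ⟨w, hlen.le, alongWord_of_alongWord_inter_nearby hlen.le halong, hxcore⟩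

end Linked

section Remote

variable {ι κ V : Type*}

variable {ψ : ι → V → V} {col : κ × Fin 3 → ι} {F : Set ((κ × Fin 3) × Sym2 V)} {i j : κ}
  {R l h : ℕ} {r u v x : V} {M : SimpleGraph V} {Γ : Set V}

lemma OnBranch.exists_word (hcol : col.Injective)
    (hx : OnBranch (fun a => ψ (col a)) (AllowedStep (fun a => ψ (col a)) F i Γ) h v x) :
    ∃ w : List ι, IsReduced w ∧ w.length ≤ h ∧ wordAct ψ w v = x ∧
      ∀ c, w.getLast? = some c → ψ c v ∉ Γ := by
  obtain ⟨w, -, hred, hlen, halong, rfl⟩ := hx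
  refine ⟨w.map col, hred.map hcol, by rwa [List.length_map], wordAct_map col ψ w v, ?_⟩
  intro c hc
  obtain rfl | ⟨w, a, rfl⟩ := List.eq_nil_or_concat' w
  · simp at hc
  · rw [List.map_append, List.map_singleton, List.getLast?_concat, Option.some.injEq] at hc
    exact hc ▸ (alongWord_append.1 halong).1.2.2.2

variable [DecidableEq ι]

/-- A matching in the union of the matchings `ψ c` whose vertices are tame, far from `Γ`, and, apart
from matched pairs, far from each other. -/
structure IsRemoteMatching (ψ : ι → V → V) (l h : ℕ) (Γ : Set V) (M : SimpleGraph V) : Prop where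
  exists_color : ∀ x y, M.Adj x y → ∃ c, ψ c x = y
  eq_of_adj : ∀ v w x, M.Adj v w → M.Adj v x → w = x
  isTame : ∀ y ∈ M.support, IsTame ψ l y
  notMem : ∀ y ∈ M.support, ∀ ρ : List ι, ρ.length ≤ 3 → wordAct ψ ρ y ∉ Γ
  adj : ∀ y ∈ M.support, ∀ z ∈ M.support, y ≠ z → ∀ w : List ι, w.length ≤ 2 * h →
    wordAct ψ w y = z → M.Adj y z

lemma IsTame.comp [DecidableEq κ] (hv : IsTame ψ l v) (hcol : col.Injective) :
    IsTame (fun a => ψ (col a)) l v := by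
  intro w hlen hw
  rw [← wordAct_map] at hw
  have hnil := hv _ (by rwa [List.length_map]) hw
  rwa [reduceWord_map hcol, List.map_eq_nil_iff] at hnil

lemma getLast?_eq_of_isTame {c : ι} {w w' : List ι} (hv : IsTame ψ l v)
    (hψ : ∀ c, (ψ c).Involutive) (hw : IsReduced w) (hw' : IsReduced w')
    (hlen : w.length + w'.length + 1 ≤ l) (heq : wordAct ψ w (ψ c v) = wordAct ψ w' v) :
    w.getLast? = some c ∨ w'.getLast? = some c := by
  refine or_iff_not_imp_left.2 fun hlast => ?_
  have hred : IsReduced (w ++ [c]) := by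
    refine List.isChain_append.2 ⟨hw, List.isChain_singleton c, ?_⟩
    rintro a ha b hb rfl
    rw [List.head?_singleton, Option.mem_some_iff] at hb
    exact hlast (hb ▸ ha)
  have hnil : reduceWord (w'.reverse ++ (w ++ [c])) = [] := by
    refine hv _ (by simp only [List.length_append, List.length_reverse, List.length_singleton]
                    omega) ?_
    rw [wordAct_append, wordAct_append, wordAct_cons, wordAct_nil, heq,
      wordAct_reverse_wordAct hψ]
  have hconcat := reduceWord_eq_of_reverse_append hnil
  rw [hred.reduceWord_eq, hw'.reduceWord_eq] at hconcat
  rw [← hconcat, List.getLast?_concat]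

namespace IsRemoteMatching

lemma not_onBranch (hM : IsRemoteMatching ψ l h Γ M) (hψ : IsMatchingSystem ψ)
    (hcol : col.Injective) (hl : 2 * h + 1 ≤ l) {Δ : Set V} (hΔ : M.support ⊆ Δ)
    (hu : u ∈ M.support) (hv : v ∈ M.support) (huv : u ≠ v)
    (hx : OnBranch (fun a => ψ (col a)) (AllowedStep (fun a => ψ (col a)) F i Δ) h u x) :
    ¬OnBranch (fun a => ψ (col a)) (AllowedStep (fun a => ψ (col a)) F j Δ) h v x := by
  intro hx'
  obtain ⟨w, hred, hlen, rfl, hstep⟩ := hx.exists_word hcol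
  obtain ⟨w', hred', hlen', heq, hstep'⟩ := hx'.exists_word hcol
  have hadj : M.Adj v u := by
    refine hM.adj v hv u hu huv.symm (w.reverse ++ w') ?_ ?_
    · rw [List.length_append, List.length_reverse]
      omega
    · rw [wordAct_append, heq, wordAct_reverse_wordAct hψ.involutive]
  obtain ⟨c, rfl⟩ := hM.exists_color v u hadj
  obtain hlast | hlast := getLast?_eq_of_isTame (hM.isTame v hv) hψ.involutive hred hred'
    (by omega) heq.symm
  · exact hstep c hlast (hΔ (by rwa [hψ.involutive c v]))
  · exact hstep' c hlast (hΔ hu)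

variable [DecidableEq κ]

lemma isScattered (hM : IsRemoteMatching ψ l h (coreUnion (fun a => ψ (col a)) R l r) M)
    (hψ : IsMatchingSystem ψ) (hcol : col.Injective) (hh : 3 ≤ 2 * h) (hl : 4 ≤ l) :
    IsScattered (fun a => ψ (col a)) R l r M.support where
  isTame y hy := (hM.isTame y hy).comp hcol
  notMem_coreUnion y hy ρ hρ := by
    rw [← wordAct_map]
    exact hM.notMem y hy _ (by rwa [List.length_map])
  notMem_self y hy ρ hred hlen hlen' hmem := by
    have htame := hM.isTame y hy
    rw [← wordAct_map] at hmem
    have hred' := hred.map hcol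
    rw [← List.length_map (f := col)] at hlen hlen'
    generalize ρ.map col = σ at hmem hred' hlen hlen'
    by_cases hfix : y = wordAct ψ σ y
    · have hnil := htame σ (by omega) hfix.symm
      rw [hred'.reduceWord_eq] at hnil
      rw [hnil, List.length_nil] at hlen
      omega
    · obtain ⟨c, hc⟩ := hM.exists_color _ _ (hM.adj y hy _ hmem hfix σ (by omega) rfl)
      have hnil : reduceWord ([c].reverse ++ σ) = [] := by
        refine htame _ (by simpa using by omega) ?_
        rw [wordAct_append, ← hc, List.reverse_singleton, wordAct_cons, wordAct_nil,
          hψ.involutive c y]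
      have hσ := reduceWord_eq_of_reverse_append hnil
      rw [hred'.reduceWord_eq] at hσ
      have := length_reduceWord_le [c]
      rw [← hσ, List.length_singleton] at this
      omega

end IsRemoteMatching

end Remote

theorem IsRemoteMatching.hasStrongISTs {d k N b R l : ℕ} {ψ : Fin d → Fin N → Fin N}
    {hψ : IsMatchingSystem ψ} {col : Fin k × Fin 3 → Fin d} {link : Fin k → Fin d} {r : Fin N}
    {M : SimpleGraph (Fin N)}
    (hM : IsRemoteMatching ψ l (2 * b + 1) (coreUnion (fun a => ψ (col a)) R l r) M)
    (hcol : col.Injective) (hb : 1 ≤ b) (hl : 2 * (2 * b + 1) + 4 ≤ l)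
    (hr : r ∈ coreUnion (fun a => ψ (col a)) R l r)
    (hsparse : ¬HasDenseSet (4 * (2 * b + 1)) fun a => ψ (col a))
    (hlink : IsLinked (fun a => ψ (col a)) (fun i => ψ (link i)) b R l r) :
    HasStrongISTs (⨆ c, matchingGraph hψ c) M r k := by
  have hφ := hψ.comp hcol
  have hadj (c : Fin d) (x : Fin N) : (⨆ c, matchingGraph hψ c).Adj x (ψ c x) :=
    SimpleGraph.iSup_adj.2 ⟨c, rfl⟩
  have hS := hM.isScattered hψ hcol (by omega) (by omega)
  have hnear {x y} (hx : x ∈ M.support) (hy : y ∈ M.support) (hyx : y ≠ x)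
      (hxy : y ∈ nearby (fun a => ψ (col a)) (2 * (2 * b + 1)) x) : M.Adj x y := by
    obtain ⟨w, hlen, hw⟩ := hxy
    exact hM.adj x hx y hy hyx.symm (w.map col) (by rwa [List.length_map])
      ((wordAct_map col ψ w x).trans hw)
  refine hasStrongISTs_of_linksTo (F := maxGirthSubset _ (2 * b + 1)) hφ.involutive hr
    (maximal_maxGirthSubset _ _).prop (fun i v hvr hv => ?_) (fun i => hadj (link i))
    (fun a => hadj (col a)) (Set.disjoint_left.2 fun y hy => hS.notMem_coreUnion y hy [] (by simp))
    (fun i j _ u hu v hv huv x => hM.not_onBranch hψ hcol (by omega) Set.subset_union_right hu hv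
      huv)
  exact hlink.exists_linksTo hφ hr hl hsparse hS (fun x hx y hy z hz hyx hzx hxy hxz =>
    hM.eq_of_adj x y z (hnear hx hy hyx hxy) (hnear hx hz hzx hxz)) hvr hv

/-! ### Most roots have large cores -/

section ShortWords

variable {α : Type*} [Fintype α] [DecidableEq α] {n q : ℕ}

/-- The words of length at most `n` over a finite alphabet. -/
def wordsUpTo (α : Type*) [Fintype α] [DecidableEq α] (n : ℕ) : Finset (List α) :=
  (Finset.range (n + 1)).biUnion fun j => (Finset.univ : Finset (Fin j → α)).image List.ofFn

lemma mem_wordsUpTo {w : List α} : w ∈ wordsUpTo α n ↔ w.length ≤ n := by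
  simp only [wordsUpTo, Finset.mem_biUnion, Finset.mem_range, Finset.mem_image, Finset.mem_univ,
    true_and, Nat.lt_succ_iff]
  constructor
  · rintro ⟨j, hj, f, rfl⟩
    rwa [List.length_ofFn]
  · exact fun hw => ⟨w.length, hw, w.get, List.ofFn_get w⟩

lemma sum_range_succ_pow_le_two_mul_pow (hq : 2 ≤ q) (n : ℕ) :
    ∑ j ∈ Finset.range (n + 1), q ^ j ≤ 2 * q ^ n := by
  induction n with
  | zero => simp
  | succ n ih =>
    rw [Finset.sum_range_succ]
    have hstep : 2 * q ^ n ≤ q ^ (n + 1) := by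
      rw [pow_succ']
      exact Nat.mul_le_mul_right _ hq
    omega

lemma card_wordsUpTo_le (hq : 2 ≤ q) (hα : Fintype.card α ≤ q) (n : ℕ) :
    (wordsUpTo α n).card ≤ 2 * q ^ n := by
  refine (Finset.card_biUnion_le.trans (Finset.sum_le_sum fun j _ => ?_)).trans
    (sum_range_succ_pow_le_two_mul_pow hq n)
  refine Finset.card_image_le.trans ?_
  rw [Finset.card_univ, Fintype.card_fun, Fintype.card_fin]
  exact Nat.pow_le_pow_left hα j

end ShortWords

section FixedPoints

variable {α ι V T : Type*} [Fintype ι] [DecidableEq ι] [Fintype V] [DecidableEq V] [DecidableEq α]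
  {col : α → ι} {Q : ℕ}

lemma matchingProb_wordAct_comp_eq_self_le (hcol : col.Injective) {w : List α}
    (hw : reduceWord w ≠ []) (hQ : w.length + 1 ≤ Q)
    (hV : 4 * Fintype.card ι + 4 * Q + 4 ≤ Fintype.card V) (r : V) :
    matchingProb (fun ψ : ι → V → V => wordAct (fun a => ψ (col a)) w r = r) ≤
      2 * Q ^ 2 / Fintype.card V := by
  have hN : (0 : ℝ) < Fintype.card V := by norm_cast; omega
  have hV' : (4 * Fintype.card ι + 4 * Q + 4 : ℝ) ≤ Fintype.card V := mod_cast hV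
  have hQ' : (w.length + 1 : ℝ) ≤ Q := mod_cast hQ
  have hw_map : reduceWord (w.map col) ≠ [] := by
    rwa [reduceWord_map hcol, Ne, List.map_eq_nil_iff]
  have hprob := matchingProb_wordAct_eq_self_le (D := Fintype.card V / 2) hw_map r (by positivity)
    (by rw [List.length_map]; linarith)
  simp only [wordAct_map, List.length_map] at hprob
  refine hprob.trans ?_
  rw [div_div_eq_mul_div]
  gcongr ?_ / _
  nlinarith [(Nat.cast_nonneg w.length : (0 : ℝ) ≤ w.length)]

lemma matchingProb_exists_wordAct_eq_self_le (hcol : col.Injective) (s : Finset T)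
    (w : T → List α) (hQ : ∀ t ∈ s, (w t).length + 1 ≤ Q)
    (hV : 4 * Fintype.card ι + 4 * Q + 4 ≤ Fintype.card V) (r : V) :
    matchingProb (fun ψ : ι → V → V =>
        ∃ t ∈ s, reduceWord (w t) ≠ [] ∧ wordAct (fun a => ψ (col a)) (w t) r = r) ≤
      s.card * (2 * Q ^ 2 / Fintype.card V) := by
  rw [← nsmul_eq_mul]
  refine (uniformProb_exists_le s _ _).trans (Finset.sum_le_card_nsmul _ _ _ fun t ht => ?_)
  by_cases hw : reduceWord (w t) = []
  · rw [uniformProb_eq_zero fun _ _ h => h.1 hw]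
    positivity
  · exact (uniformProb_mono fun _ _ h => h.2).trans
      (matchingProb_wordAct_comp_eq_self_le hcol hw (hQ t ht) hV r)

lemma matchingProb_not_isTame_le {l : ℕ} (hι : 2 ≤ Fintype.card ι)
    (hV : 4 * Fintype.card ι + 4 * (l + 1) + 4 ≤ Fintype.card V) (x : V) :
    matchingProb (fun ψ : ι → V → V => ¬IsTame ψ l x) ≤
      2 * Fintype.card ι ^ l * (2 * (l + 1) ^ 2 / Fintype.card V) := by
  have hcard : ((wordsUpTo ι l).card : ℝ) ≤ 2 * Fintype.card ι ^ l :=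
    mod_cast card_wordsUpTo_le hι le_rfl l
  have hprob := matchingProb_exists_wordAct_eq_self_le (Function.injective_id (α := ι))
    (wordsUpTo ι l) (fun w => w) (fun w hw => Nat.succ_le_succ (mem_wordsUpTo.1 hw)) hV x
  push_cast at hprob
  refine ((uniformProb_mono fun ψ _ h => ?_).trans hprob).trans (by gcongr)
  rw [IsTame] at h
  push Not at h
  obtain ⟨w, hlen, hfix, hred⟩ := h
  exact ⟨w, mem_wordsUpTo.2 hlen, hred, hfix⟩

end FixedPoints

section CoreSize

variable {κ ι V : Type*} {R l : ℕ}

lemma card_le_of_triples_injective [Fintype κ] [Fintype ι] {col : κ × Fin 3 → ι}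
    (hcol : col.Injective) : 3 * Fintype.card κ ≤ Fintype.card ι := by
  simpa [mul_comm] using Fintype.card_le_of_injective col hcol

/-- Bounds the probability that a given walk of length at most `R` in a random system of `d`
matchings of `N` vertices is colliding. The summands in the first factor count the walks `ρ`
and branches, and the walks `τ`, in `IsColliding`. -/
noncomputable def collisionBound (d N R l : ℕ) : ℝ :=
  (4 * d ^ 4 * 2 ^ R + 2 * d ^ l) * (2 * (2 * R + l + 4) ^ 2 / N)

lemma collisionBound_nonneg (d N R l : ℕ) : 0 ≤ collisionBound d N R l := by
  unfold collisionBound; positivity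

variable [DecidableEq κ]

lemma matchingProb_isColliding_le [Nonempty κ] [Fintype ι] [DecidableEq ι] [Fintype V]
    [DecidableEq V] {col : κ × Fin 3 → ι} (hcol : col.Injective)
    (hV : 4 * Fintype.card ι + 4 * (2 * R + l + 4) + 4 ≤ Fintype.card V) (r : V)
    {σ : List (κ × Fin 3)} (hσ : σ.length ≤ R) :
    matchingProb (fun ψ : ι → V → V => IsColliding (fun a => ψ (col a)) R l r σ) ≤
      collisionBound (Fintype.card ι) (Fintype.card V) R l := by
  classical
  have := Fintype.ofInjective (fun i => col (i, 0)) (hcol.comp (Prod.mk_left_injective 0))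
  have hκ : 3 * Fintype.card κ ≤ Fintype.card ι := card_le_of_triples_injective hcol
  have hκ_pos : 0 < Fintype.card κ := Fintype.card_pos
  have hwords (n : ℕ) : (wordsUpTo (κ × Fin 3) n).card ≤ 2 * Fintype.card ι ^ n :=
    card_wordsUpTo_le (by omega) (Fintype.card_le_of_injective col hcol) n
  have hbits : (wordsUpTo Bool R).card ≤ 2 * 2 ^ R := card_wordsUpTo_le le_rfl (by simp) R
  have hbranch := matchingProb_exists_wordAct_eq_self_le (Q := 2 * R + l + 4) hcol
    (wordsUpTo (κ × Fin 3) 3 ×ˢ (Finset.univ : Finset κ) ×ˢ wordsUpTo Bool R)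
    (fun t => (branchWord t.2.1 t.2.2).reverse ++ (t.1 ++ σ)) (fun t ht => by
      simp only [Finset.mem_product, mem_wordsUpTo] at ht
      simp only [List.length_append, List.length_reverse, length_branchWord]
      omega) hV r
  have hreturn := matchingProb_exists_wordAct_eq_self_le (Q := 2 * R + l + 4) hcol
    (wordsUpTo (κ × Fin 3) l) (fun τ => σ.reverse ++ (τ ++ σ)) (fun τ hτ => by
      have hlen := mem_wordsUpTo.1 hτ
      simp only [List.length_append, List.length_reverse]
      omega) hV r
  have hcard : ((wordsUpTo (κ × Fin 3) 3 ×ˢ (Finset.univ : Finset κ) ×ˢ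
      wordsUpTo Bool R).card : ℝ) ≤ 4 * Fintype.card ι ^ 4 * 2 ^ R := by
    have hle : (wordsUpTo (κ × Fin 3) 3).card * (Fintype.card κ * (wordsUpTo Bool R).card) ≤
        2 * Fintype.card ι ^ 3 * (Fintype.card ι * (2 * 2 ^ R)) :=
      Nat.mul_le_mul (hwords 3) (Nat.mul_le_mul (by omega) hbits)
    rw [Finset.card_product, Finset.card_product, Finset.card_univ]
    calc _ ≤ ((2 * Fintype.card ι ^ 3 * (Fintype.card ι * (2 * 2 ^ R)) : ℕ) : ℝ) := mod_cast hle
      _ = _ := by push_cast; ring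
  have hcard' : ((wordsUpTo (κ × Fin 3) l).card : ℝ) ≤ 2 * Fintype.card ι ^ l := mod_cast hwords l
  refine (uniformProb_or_le _ _ _).trans ?_
  rw [collisionBound, add_mul]
  push_cast at hbranch hreturn
  refine add_le_add ((uniformProb_mono ?_).trans (hbranch.trans (by gcongr)))
    ((uniformProb_mono ?_).trans (hreturn.trans (by gcongr)))
  · rintro ψ - ⟨ρ, hρ, j, bs, hbs, h⟩
    refine ⟨(ρ, j, bs), ?_, h⟩
    simp only [Finset.mem_product, mem_wordsUpTo, Finset.mem_univ]
    exact ⟨hρ, trivial, hbs⟩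
  · rintro ψ - ⟨τ, hτ, h⟩
    exact ⟨τ, mem_wordsUpTo.2 hτ, h⟩

open Classical in
lemma two_pow_le_ncard_core_add [Finite V] {φ : κ × Fin 3 → V → V} (hφ : ∀ a, (φ a).Involutive)
    (hR : R ≠ 0) (r : V) (j : κ) :
    2 ^ R ≤ (core φ R l r j).ncard +
      (Finset.univ.filter fun f : Fin R → Bool => ¬IsGoodBranch φ R l r j (List.ofFn f)).card := by
  have hle : (Finset.univ.filter fun f : Fin R → Bool =>
      IsGoodBranch φ R l r j (List.ofFn f)).card ≤ (core φ R l r j).ncard := by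
    rw [← Set.ncard_coe_finset]
    refine Set.ncard_le_ncard_of_injOn (fun f => wordAct φ (branchWord j (List.ofFn f)) r) ?_ ?_
    · intro f hf
      refine ⟨List.ofFn f, fun hnil => hR ?_, (Finset.mem_filter.1 hf).2, rfl⟩
      rw [← List.length_ofFn (f := f), hnil, List.length_nil]
    · intro f hf f' hf' heq
      exact List.ofFn_injective (branchWord_injective j
        ((Finset.mem_filter.1 hf).2.branchWord_eq hφ (Finset.mem_filter.1 hf').2 heq))
  have hsplit := Finset.card_filter_add_card_filter_not (s := Finset.univ)
    fun f : Fin R → Bool => IsGoodBranch φ R l r j (List.ofFn f)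
  rw [Finset.card_univ, Fintype.card_fun, Fintype.card_bool, Fintype.card_fin] at hsplit
  omega

variable [Fintype ι] [DecidableEq ι] [Fintype V] [DecidableEq V] {col : κ × Fin 3 → ι}

lemma matchingProb_not_isGoodBranch_le (hcol : col.Injective)
    (hV : 4 * Fintype.card ι + 4 * (2 * R + l + 4) + 4 ≤ Fintype.card V) (r : V) (j : κ)
    {bs : List Bool} (hbs : bs.length ≤ R) :
    matchingProb (fun ψ : ι → V → V => ¬IsGoodBranch (fun a => ψ (col a)) R l r j bs) ≤
      (R + 1) * collisionBound (Fintype.card ι) (Fintype.card V) R l := by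
  have : Nonempty κ := ⟨j⟩
  have hdrop : matchingProb (fun ψ : ι → V → V => ¬IsGoodBranch (fun a => ψ (col a)) R l r j bs) ≤
      matchingProb fun ψ : ι → V → V => ∃ m ∈ Finset.range (R + 1),
        IsColliding (fun a => ψ (col a)) R l r (branchWord j (bs.drop m)) := by
    refine uniformProb_mono fun ψ _ hbad => ?_
    simp only [IsGoodBranch, hbs, true_and, not_forall, not_not] at hbad
    obtain ⟨bs', hsuffix, hcoll⟩ := hbad
    refine ⟨bs.length - bs'.length, Finset.mem_range.2 (by omega), ?_⟩
    rwa [← List.suffix_iff_eq_drop.1 hsuffix]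
  refine (hdrop.trans (uniformProb_exists_le _ _ _)).trans ((Finset.sum_le_card_nsmul _ _ _
    fun m _ => matchingProb_isColliding_le hcol hV r ?_).trans ?_)
  · rw [length_branchWord, List.length_drop]
    exact (Nat.sub_le _ m).trans hbs
  · rw [nsmul_eq_mul, Finset.card_range]
    push_cast
    rfl

/-- Markov's inequality for the number of branches of length `R` that are not good. -/
lemma matchingProb_ncard_core_lt_le (hcol : col.Injective) (hR : R ≠ 0)
    (hV : 4 * Fintype.card ι + 4 * (2 * R + l + 4) + 4 ≤ Fintype.card V) (r : V) (j : κ) :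
    matchingProb (fun ψ : ι → V → V => (core (fun a => ψ (col a)) R l r j).ncard < 2 ^ (R - 1)) ≤
      2 * ((R + 1) * collisionBound (Fintype.card ι) (Fintype.card V) R l) := by
  classical
  have hsum := (uniformProb_le_card_filter_mul_le (Finset.univ : Finset (Fin R → Bool))
    (IsMatchingSystem (ι := ι) (V := V))
    (fun f ψ => ¬IsGoodBranch (fun a => ψ (col a)) R l r j (List.ofFn f)) (2 ^ (R - 1))).trans
    (Finset.sum_le_card_nsmul _ _ _ fun f _ =>
      matchingProb_not_isGoodBranch_le hcol hV r j (List.length_ofFn (f := f)).le)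
  have hpow : 2 ^ R = 2 ^ (R - 1) * 2 := by rw [← pow_succ, Nat.sub_one_add_one hR]
  rw [nsmul_eq_mul, Finset.card_univ, Fintype.card_fun, Fintype.card_bool, Fintype.card_fin, hpow,
    mul_comm] at hsum
  push_cast at hsum
  rw [mul_assoc] at hsum
  refine (uniformProb_mono fun ψ hψ h => ?_).trans (le_of_mul_le_mul_left hsum (by positivity))
  have hle := two_pow_le_ncard_core_add (l := l) (fun a => hψ.involutive (col a)) hR r j
  have hle' : 2 ^ (R - 1) ≤ (Finset.univ.filter fun f : Fin R → Bool =>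
      ¬IsGoodBranch (fun a => ψ (col a)) R l r j (List.ofFn f)).card := by omega
  rw [← Nat.cast_two, ← Nat.cast_pow, Nat.cast_le]
  convert hle'

lemma matchingProb_exists_ncard_core_lt_le (hcol : col.Injective) (hR : R ≠ 0)
    (hV : 4 * Fintype.card ι + 4 * (2 * R + l + 4) + 4 ≤ Fintype.card V) (r : V) :
    matchingProb (fun ψ : ι → V → V =>
        ∃ j, (core (fun a => ψ (col a)) R l r j).ncard < 2 ^ (R - 1)) ≤
      2 * Fintype.card ι * (R + 1) * collisionBound (Fintype.card ι) (Fintype.card V) R l := by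
  have := Fintype.ofInjective (fun i => col (i, 0)) (hcol.comp (Prod.mk_left_injective 0))
  have hκ : (Fintype.card κ : ℝ) ≤ Fintype.card ι := by
    have := card_le_of_triples_injective hcol
    norm_cast
    omega
  have hb := collisionBound_nonneg (Fintype.card ι) (Fintype.card V) R l
  have hunion := (uniformProb_exists_le (Finset.univ : Finset κ) IsMatchingSystem _).trans
    (Finset.sum_le_card_nsmul _ _ _ fun j _ =>
      matchingProb_ncard_core_lt_le (l := l) hcol hR hV r j)
  simp only [Finset.mem_univ, true_and, nsmul_eq_mul, Finset.card_univ] at hunion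
  calc _ ≤ _ := hunion
    _ ≤ Fintype.card ι *
        (2 * ((R + 1) * collisionBound (Fintype.card ι) (Fintype.card V) R l)) := by gcongr
    _ = _ := by ring

end CoreSize

/-! ### Links fail rarely -/

section Links

variable {α κ ι V : Type*}

lemma HasDenseSet.of_comp {ψ : ι → V → V} {col : α → ι} {H : ℕ} (hcol : col.Injective)
    (h : HasDenseSet H fun a => ψ (col a)) : HasDenseSet H ψ := by
  classical
  obtain ⟨W, B, hW, hB, hBW, hedges⟩ := h
  refine ⟨W, B.image (Prod.map col id), hW, ?_, ?_, ?_⟩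
  · rw [Finset.card_image_of_injective _ (hcol.prodMap Function.injective_id), hB]
  · exact Finset.forall_mem_image.2 hBW
  · exact Finset.forall_mem_image.2 hedges

lemma sub_div_sub_half_pow_le_exp {x y : ℝ} (hx : 0 < x) (hyx : y ≤ x) (q : ℕ) :
    ((x - y) / (x - y / 2)) ^ q ≤ Real.exp (-(q * (y / (2 * x)))) := by
  have hD : 0 < x - y / 2 := by linarith
  have hbase : (x - y) / (x - y / 2) ≤ Real.exp (-(y / (2 * x))) := by
    refine le_trans ?_ (Real.add_one_le_exp _)
    rw [div_le_iff₀ hD]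
    have hexpand : (-(y / (2 * x)) + 1) * (x - y / 2) = x - y + y ^ 2 / (4 * x) := by
      field_simp
      ring
    have hsq : 0 ≤ y ^ 2 / (4 * x) := by positivity
    linarith
  calc _ ≤ Real.exp (-(y / (2 * x))) ^ q :=
        pow_le_pow_left₀ (div_nonneg (by linarith) hD.le) hbase q
    _ = _ := by rw [← Real.exp_nat_mul, mul_neg]

variable [Fintype ι] [DecidableEq ι] [Fintype V] [DecidableEq V] {c : ι} {q m : ℕ}

lemma matchingProb_forall_apply_notMem_le_exp {col : α → ι} (hc : ∀ a, col a ≠ c)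
    (X : (α → V → V) → Finset V) (Y : (α → V → V) → Set V)
    (hm : 4 * Fintype.card ι + 4 * q + 4 ≤ m) :
    matchingProb (fun ψ => (2 * q ≤ (X fun a => ψ (col a)).card ∧
        m ≤ (Y fun a => ψ (col a)).ncard) ∧
          ∀ x ∈ X fun a => ψ (col a), ψ c x ∉ Y fun a => ψ (col a)) ≤
      Real.exp (-(q * (m / (2 * Fintype.card V)))) := by
  obtain hlt | hmV := lt_or_ge (Fintype.card V) m
  · rw [matchingProb, uniformProb_eq_zero fun ψ _ h => ?_]
    · exact (Real.exp_pos _).le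
    · exact (h.1.2.trans_lt' hlt).not_ge (Nat.card_eq_fintype_card (α := V) ▸ Set.ncard_le_card _)
  have hm' : (4 * Fintype.card ι + 4 * q + 4 : ℝ) ≤ m := mod_cast hm
  have hmV' : (m : ℝ) ≤ Fintype.card V := mod_cast hmV
  have hcomp {φ ψ : ι → V → V} (h : ∀ c', c' ≠ c → ψ c' = φ c') :
      (fun a => ψ (col a)) = fun a => φ (col a) := funext fun a => h _ (hc a)
  have hprob := matchingProb_forall_apply_notMem_le (c := c) (q := q) (m := Fintype.card V - m)
    (D := Fintype.card V - m / 2) (fun ψ => X fun a => ψ (col a))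
    (fun ψ => (Set.toFinite (Y fun a => ψ (col a))).toFinset)
    (fun φ ψ h => by simp only [hcomp h]) (fun φ ψ h => by simp only [hcomp h])
    (by linarith) (by linarith)
  rw [Nat.cast_sub hmV] at hprob
  refine (uniformProb_mono fun ψ _ h => ?_).trans (hprob.trans
    (sub_div_sub_half_pow_le_exp (by linarith) hmV' q))
  simp only [Finset.card_compl, ← Set.ncard_eq_toFinset_card, Set.Finite.mem_toFinset]
  exact ⟨⟨h.1.1, Nat.sub_le_sub_left h.1.2 _⟩, h.2⟩

variable [Fintype κ] [DecidableEq κ] {b R l : ℕ}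

lemma matchingProb_not_isLinked_le {col : κ × Fin 3 → ι} {link : κ → ι}
    (hlink : ∀ i a, col a ≠ link i) (hb : b ≠ 0) (r : V)
    (hR : 4 * Fintype.card ι + 4 * 2 ^ (b - 1) + 4 ≤ 2 ^ (R - 1)) :
    matchingProb (fun ψ : ι → V → V =>
        (∀ j, 2 ^ (R - 1) ≤ (core (fun a => ψ (col a)) R l r j).ncard) ∧
          ¬IsLinked (fun a => ψ (col a)) (fun i => ψ (link i)) b R l r) ≤
      Fintype.card κ * Fintype.card V ^ 3 *
        Real.exp (-(2 ^ (b - 1) * (2 ^ (R - 1) / (2 * Fintype.card V)))) := by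
  set X : κ × V × V × V → (κ × Fin 3 → V → V) → Finset V := fun p φ =>
    reachable φ (maxGirthSubset φ (2 * b + 1)) p.1 (coreUnion φ R l r ∪ {p.2.2.1, p.2.2.2})
      (2 * b + 1) p.2.1
  have htuple (p : κ × V × V × V) :=
    matchingProb_forall_apply_notMem_le_exp (hlink p.1) (X p) (fun φ => core φ R l r p.1) hR
  have hunion := (uniformProb_exists_le Finset.univ IsMatchingSystem _).trans
    (Finset.sum_le_card_nsmul _ _ _ fun p _ => htuple p)
  rw [nsmul_eq_mul, Finset.card_univ] at hunion
  simp only [Fintype.card_prod, Nat.cast_mul, Nat.cast_pow, Nat.cast_ofNat] at hunion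
  refine (uniformProb_mono fun ψ _ ⟨hcore, hnot⟩ => ?_).trans (hunion.trans_eq (by ring))
  simp only [IsLinked] at hnot
  push Not at hnot
  obtain ⟨i, v, y₁, y₂, hcard, hmiss⟩ := hnot
  have hpow : 2 ^ b = 2 * 2 ^ (b - 1) := by rw [← pow_succ', Nat.sub_one_add_one hb]
  exact ⟨(i, v, y₁, y₂), Finset.mem_univ _, ⟨hpow ▸ hcard, hcore i⟩, hmiss⟩

end Links

/-! ### Counting edge sets -/

section Counting

variable {β : Type*} {N m a s t : ℕ}

lemma mul_choose_le_choose_succ (h : N * (t + 1) ≤ s + 1) :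
    N * s.choose t ≤ (s + 1).choose (t + 1) := by
  refine Nat.le_of_mul_le_mul_left ?_ t.succ_pos
  calc (t + 1) * (N * s.choose t) = N * (t + 1) * s.choose t := by ring
    _ ≤ (s + 1) * s.choose t := Nat.mul_le_mul_right _ h
    _ = (t + 1) * (s + 1).choose (t + 1) := by rw [Nat.add_one_mul_choose_eq, mul_comm]

lemma pow_mul_choose_sub_le (ha : a ≤ m) :
    N ^ a * (N * m - a).choose (m - a) ≤ (N * m).choose m := by
  obtain rfl | hN := N.eq_zero_or_pos
  · obtain rfl | ha0 := a.eq_zero_or_pos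
    · simp
    · simp [ha0.ne']
  induction a with
  | zero => simp
  | succ a ih =>
    refine le_trans ?_ (ih (by omega))
    rw [pow_succ, mul_assoc]
    refine Nat.mul_le_mul_left _ ?_
    have hle : m ≤ N * m := Nat.le_mul_of_pos_left m hN
    obtain ⟨t, rfl⟩ := Nat.exists_eq_add_of_le ha
    have hs : N * (a + 1 + t) - a = N * (a + 1 + t) - (a + 1) + 1 := by omega
    have ht : a + 1 + t - a = a + 1 + t - (a + 1) + 1 := by omega
    rw [hs, ht]
    refine mul_choose_le_choose_succ ?_
    rw [← hs, ← ht]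
    have hmul : N * (a + 1 + t) = N * (t + 1) + N * a := by ring
    have hNa : a ≤ N * a := Nat.le_mul_of_pos_left a hN
    rw [show a + 1 + t - a = t + 1 by omega]
    omega

lemma pow_mul_one_sub_le_choose (hN : 1 ≤ N) (m : ℕ) :
    ((N + 1 : ℝ) * m) ^ m / m.factorial * (1 - 2 * m / (N + 1)) ≤ (N * m).choose m := by
  have hdesc : ((N - 1) * m) ^ m ≤ (N * m).choose m * m.factorial := by
    rw [mul_comm ((N * m).choose m), ← Nat.descFactorial_eq_factorial_mul_choose]
    refine (Nat.pow_le_pow_left ?_ m).trans (Nat.pow_sub_le_descFactorial (N * m) m)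
    rw [Nat.sub_one_mul]
    omega
  have hdesc' : (((N : ℝ) - 1) * m) ^ m ≤ (N * m).choose m * m.factorial := by
    rw [← Nat.cast_one, ← Nat.cast_sub hN]
    exact_mod_cast hdesc
  have hbernoulli : 1 + (m : ℝ) * -(2 / (N + 1)) ≤ (1 + -(2 / (N + 1))) ^ m := by
    refine one_add_mul_le_pow ?_ m
    rw [neg_le_neg_iff]
    exact div_le_self zero_le_two (by linarith [(Nat.cast_nonneg N : (0 : ℝ) ≤ N)])
  rw [div_mul_eq_mul_div, div_le_iff₀ (by positivity)]
  refine le_trans ?_ hdesc'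
  calc ((N + 1 : ℝ) * m) ^ m * (1 - 2 * m / (N + 1))
      = ((N + 1 : ℝ) * m) ^ m * (1 + (m : ℝ) * -(2 / (N + 1))) := by ring
    _ ≤ ((N + 1 : ℝ) * m) ^ m * (1 + -(2 / (N + 1))) ^ m := by gcongr
    _ = _ := by
        rw [← mul_pow]
        congr 1
        field_simp
        ring

variable {E : Finset β}

lemma pow_mul_card_filter_subset_le [DecidableEq β] (hE : E.card = N * m) (A : Finset β) :
    N ^ A.card * ((E.powersetCard m).filter (A ⊆ ·)).card ≤ (N * m).choose m := by
  obtain hempty | ⟨T, hT⟩ := ((E.powersetCard m).filter (A ⊆ ·)).eq_empty_or_nonempty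
  · simp [hempty]
  · rw [Finset.mem_filter, Finset.mem_powersetCard] at hT
    obtain ⟨⟨hTE, hTm⟩, hAT⟩ := hT
    have hAm : A.card ≤ m := (Finset.card_le_card hAT).trans_eq hTm
    rw [Finset.card_filter_powersetCard_subset A E m (hAT.trans hTE) hAm, hE]
    exact pow_mul_choose_sub_le hAm

lemma choose_mul_one_sub_sum_le_card_filter (hN : N ≠ 0) (hE : E.card = N * m)
    (𝒜 : Finset (Finset β)) {P : Finset β → Prop} [DecidablePred P]
    (hP : ∀ T ∈ E.powersetCard m, (∀ A ∈ 𝒜, ¬A ⊆ T) → P T) :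
    ((N * m).choose m : ℝ) * (1 - ∑ A ∈ 𝒜, 1 / (N : ℝ) ^ A.card) ≤
      ((E.powersetCard m).filter P).card := by
  classical
  have hcover : E.powersetCard m ⊆ (E.powersetCard m).filter P ∪
      𝒜.biUnion fun A => (E.powersetCard m).filter (A ⊆ ·) := by
    intro T hT
    by_cases hPT : P T
    · exact Finset.mem_union_left _ (Finset.mem_filter.2 ⟨hT, hPT⟩)
    · have hex : ∃ A ∈ 𝒜, A ⊆ T := by
        by_contra! h
        exact hPT (hP T hT h)
      obtain ⟨A, hA, hAT⟩ := hex
      exact Finset.mem_union_right _ (Finset.mem_biUnion.2 ⟨A, hA, Finset.mem_filter.2 ⟨hT, hAT⟩⟩)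
  have hcard := (Finset.card_le_card hcover).trans ((Finset.card_union_le _ _).trans
    (Nat.add_le_add_left Finset.card_biUnion_le _))
  rw [Finset.card_powersetCard, hE] at hcard
  have hcard' : ((N * m).choose m : ℝ) ≤ ((E.powersetCard m).filter P).card +
      ∑ A ∈ 𝒜, (((E.powersetCard m).filter (A ⊆ ·)).card : ℝ) := mod_cast hcard
  have hsum : ∑ A ∈ 𝒜, (((E.powersetCard m).filter (A ⊆ ·)).card : ℝ) ≤
      ∑ A ∈ 𝒜, (N * m).choose m * (1 / (N : ℝ) ^ A.card) := by
    refine Finset.sum_le_sum fun A _ => ?_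
    rw [mul_one_div, le_div_iff₀' (by positivity)]
    exact_mod_cast pow_mul_card_filter_subset_le hE A
  rw [← Finset.mul_sum] at hsum
  linarith

end Counting

section Edges

variable {ι V : Type*} [Fintype ι] [DecidableEq V]

/-- The singletons of the edges meeting `B`. -/
def edgesMeeting (ψ : ι → V → V) (B : Finset V) : Finset (Finset (Sym2 V)) :=
  (Finset.univ ×ˢ B).image fun p : ι × V => {s(p.2, ψ p.1 p.2)}

lemma sum_edgesMeeting_le (ψ : ι → V → V) (B : Finset V) (N : ℕ) :
    ∑ A ∈ edgesMeeting ψ B, 1 / (N : ℝ) ^ A.card ≤ Fintype.card ι * B.card / N := by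
  have hcard : (edgesMeeting ψ B).card ≤ Fintype.card ι * B.card := by
    rw [← Finset.card_univ, ← Finset.card_product]
    exact Finset.card_image_le
  have hterm (A) (hA : A ∈ edgesMeeting ψ B) : 1 / (N : ℝ) ^ A.card = 1 / N := by
    obtain ⟨p, -, rfl⟩ := Finset.mem_image.1 hA
    rw [Finset.card_singleton, pow_one]
  rw [Finset.sum_congr rfl hterm, Finset.sum_const, nsmul_eq_mul, mul_one_div]
  gcongr
  exact_mod_cast hcard

variable [Fintype V] {ψ : ι → V → V}

/-- The edges of the union of the matchings `ψ c`. -/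
def edges (ψ : ι → V → V) : Finset (Sym2 V) :=
  Finset.univ.image fun p : ι × V => s(p.2, ψ p.1 p.2)

lemma mk_mem_edges (c : ι) (x : V) : s(x, ψ c x) ∈ edges ψ :=
  Finset.mem_image_of_mem (fun p : ι × V => s(p.2, ψ p.1 p.2)) (Finset.mem_univ (c, x))

lemma exists_eq_mk_of_mem_edges (hψ : IsMatchingSystem ψ) {e : Sym2 V} (he : e ∈ edges ψ) {u : V}
    (hu : u ∈ e) : ∃ c, e = s(u, ψ c u) := by
  obtain ⟨⟨c, x⟩, -, rfl⟩ := Finset.mem_image.1 he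
  refine ⟨c, ?_⟩
  obtain rfl | rfl := Sym2.mem_iff.1 hu
  · rfl
  · rw [hψ.involutive c x, Sym2.eq_swap]

lemma not_isDiag_of_mem_edges (hψ : IsMatchingSystem ψ) {e : Sym2 V} (he : e ∈ edges ψ) :
    ¬e.IsDiag := by
  obtain ⟨⟨c, x⟩, -, rfl⟩ := Finset.mem_image.1 he
  exact fun h => hψ.ne_self c x (Sym2.mk_isDiag_iff.1 h).symm

lemma filter_mk_eq_mk [DecidableEq ι] (hψ : IsMatchingSystem ψ) (c : ι) (x : V) :
    Finset.univ.filter (fun p : ι × V => s(p.2, ψ p.1 p.2) = s(x, ψ c x)) =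
      {(c, x), (c, ψ c x)} := by
  ext ⟨c', x'⟩
  simp only [Finset.mem_filter, Finset.mem_univ, true_and, Finset.mem_insert,
    Finset.mem_singleton, Prod.mk.injEq, Sym2.eq_iff]
  constructor
  · rintro (⟨rfl, heq⟩ | ⟨rfl, heq⟩)
    · exact Or.inl ⟨hψ.color_inj heq, rfl⟩
    · exact Or.inr ⟨hψ.color_inj (heq.trans (hψ.involutive c x).symm), rfl⟩
  · rintro (⟨rfl, rfl⟩ | ⟨rfl, rfl⟩)
    · exact Or.inl ⟨rfl, rfl⟩
    · exact Or.inr ⟨rfl, hψ.involutive _ _⟩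

lemma two_mul_card_edges (hψ : IsMatchingSystem ψ) :
    2 * (edges ψ).card = Fintype.card ι * Fintype.card V := by
  classical
  have hfiber (e) (he : e ∈ edges ψ) :
      (Finset.univ.filter fun p : ι × V => s(p.2, ψ p.1 p.2) = e).card = 2 := by
    obtain ⟨⟨c, x⟩, -, rfl⟩ := Finset.mem_image.1 he
    rw [filter_mk_eq_mk hψ]
    exact Finset.card_pair fun h => hψ.ne_self c x (Prod.mk.inj h).2.symm
  have hsum := Finset.card_eq_sum_card_fiberwise (s := Finset.univ) (t := edges ψ)
    (f := fun p : ι × V => s(p.2, ψ p.1 p.2)) fun p _ => mk_mem_edges _ _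
  rw [Finset.sum_congr rfl hfiber, Finset.sum_const, smul_eq_mul, Finset.card_univ,
    Fintype.card_prod] at hsum
  rw [hsum, mul_comm]

/-- A set of edges avoiding the vertices in `B`, whose distinct members are not joined by a word of
length at most `n`. -/
structure IsSeparated (ψ : ι → V → V) (B : Set V) (n : ℕ) (T : Set (Sym2 V)) : Prop where
  notMem : ∀ e ∈ T, ∀ x ∈ e, x ∉ B
  wordAct_ne : ∀ e ∈ T, ∀ e' ∈ T, e ≠ e' → ∀ u ∈ e, ∀ v ∈ e', ∀ w : List ι, w.length ≤ n →
    wordAct ψ w u ≠ v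

lemma edgeSet_fromEdgeSet_of_subset_edges (hψ : IsMatchingSystem ψ) {T : Set (Sym2 V)}
    (hT : T ⊆ edges ψ) : (SimpleGraph.fromEdgeSet T).edgeSet = T := by
  rw [SimpleGraph.edgeSet_fromEdgeSet, sdiff_eq_left]
  exact Set.disjoint_left.2 fun e he hdiag => not_isDiag_of_mem_edges hψ (hT he) hdiag

lemma IsSeparated.isRemoteMatching [DecidableEq ι] {B Γ : Set V} {T : Set (Sym2 V)} {l h : ℕ}
    (hT : IsSeparated ψ B (2 * h) T) (hψ : IsMatchingSystem ψ) (hTψ : T ⊆ edges ψ)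
    (htame : ∀ x ∉ B, IsTame ψ l x)
    (hΓ : ∀ x ∉ B, ∀ ρ : List ι, ρ.length ≤ 3 → wordAct ψ ρ x ∉ Γ) :
    IsRemoteMatching ψ l h Γ (SimpleGraph.fromEdgeSet T) := by
  have hadj (x y : V) : (SimpleGraph.fromEdgeSet T).Adj x y ↔ s(x, y) ∈ T := by
    rw [← SimpleGraph.mem_edgeSet, edgeSet_fromEdgeSet_of_subset_edges hψ hTψ]
  have hsupp {y} (hy : y ∈ (SimpleGraph.fromEdgeSet T).support) : ∃ e ∈ T, y ∈ e := by
    obtain ⟨z, hz⟩ := hy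
    exact ⟨_, (hadj y z).1 hz, Sym2.mem_mk_left _ _⟩
  have hB {y} (hy : y ∈ (SimpleGraph.fromEdgeSet T).support) : y ∉ B := by
    obtain ⟨e, he, hye⟩ := hsupp hy
    exact hT.notMem e he y hye
  refine ⟨fun x y hxy => ?_, fun v w x hvw hvx => ?_, fun y hy => htame y (hB hy),
    fun y hy => hΓ y (hB hy), fun y hy z hz hyz w hw hwz => ?_⟩
  · obtain ⟨c, hc⟩ := exists_eq_mk_of_mem_edges hψ (hTψ ((hadj x y).1 hxy)) (Sym2.mem_mk_left x y)
    exact ⟨c, (Sym2.congr_right.1 hc).symm⟩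
  · by_contra hne
    exact hT.wordAct_ne _ ((hadj v w).1 hvw) _ ((hadj v x).1 hvx) (mt Sym2.congr_right.1 hne)
      v (Sym2.mem_mk_left _ _) v (Sym2.mem_mk_left _ _) [] (Nat.zero_le _) rfl
  · obtain ⟨e, he, hye⟩ := hsupp hy
    obtain ⟨e', he', hze'⟩ := hsupp hz
    obtain rfl : e = e' := by
      by_contra hne
      exact hT.wordAct_ne e he e' he' hne y hye z hze' w hw hwz
    rwa [hadj, ← (Sym2.mem_and_mem_iff hyz).1 ⟨hye, hze'⟩]

/-- The pairs of distinct edges joined by a word of length at most `n`. -/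
def closePairs [DecidableEq ι] (ψ : ι → V → V) (n : ℕ) : Finset (Finset (Sym2 V)) :=
  (((Finset.univ : Finset (V × ι)) ×ˢ (wordsUpTo ι n ×ˢ Finset.univ)).image
    fun p : (V × ι) × (List ι × ι) => {s(p.1.1, ψ p.1.2 p.1.1),
      s(wordAct ψ p.2.1 p.1.1, ψ p.2.2 (wordAct ψ p.2.1 p.1.1))}).filter fun A => A.card = 2

lemma card_closePairs_le [DecidableEq ι] (hι : 2 ≤ Fintype.card ι) (n : ℕ) :
    (closePairs ψ n).card ≤ Fintype.card V * (2 * Fintype.card ι ^ (n + 2)) := by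
  refine (Finset.card_filter_le _ _).trans (Finset.card_image_le.trans ?_)
  rw [Finset.card_product, Finset.card_product, Finset.card_univ, Finset.card_univ,
    Fintype.card_prod]
  have hwords := card_wordsUpTo_le hι le_rfl n
  calc Fintype.card V * Fintype.card ι * ((wordsUpTo ι n).card * Fintype.card ι)
      ≤ Fintype.card V * Fintype.card ι * (2 * Fintype.card ι ^ n * Fintype.card ι) := by gcongr
    _ = _ := by ring

lemma isSeparated_of_forall_not_subset [DecidableEq ι] (hψ : IsMatchingSystem ψ) {B : Finset V}
    {n : ℕ} {T : Finset (Sym2 V)} (hTψ : T ⊆ edges ψ)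
    (hT : ∀ A ∈ edgesMeeting ψ B ∪ closePairs ψ n, ¬A ⊆ T) : IsSeparated ψ B n (T : Set _) := by
  refine ⟨fun e he x hx hxB => ?_, fun e he e' he' hne u hu v hv w hw hwv => ?_⟩
  · obtain ⟨c, rfl⟩ := exists_eq_mk_of_mem_edges hψ (hTψ he) hx
    refine hT {s(x, ψ c x)} (Finset.mem_union_left _ ?_) (Finset.singleton_subset_iff.2 he)
    exact Finset.mem_image.2 ⟨(c, x), Finset.mk_mem_product (Finset.mem_univ c) hxB, rfl⟩
  · obtain ⟨c, rfl⟩ := exists_eq_mk_of_mem_edges hψ (hTψ he) hu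
    obtain ⟨c', rfl⟩ := exists_eq_mk_of_mem_edges hψ (hTψ he') hv
    refine hT {s(u, ψ c u), s(v, ψ c' v)} (Finset.mem_union_right _ ?_)
      (Finset.insert_subset he (Finset.singleton_subset_iff.2 he'))
    refine Finset.mem_filter.2 ⟨Finset.mem_image.2 ⟨((u, c), w, c'), ?_, by rw [← hwv]⟩,
      Finset.card_pair hne⟩
    exact Finset.mk_mem_product (Finset.mem_univ _)
      (Finset.mk_mem_product (mem_wordsUpTo.2 hw) (Finset.mem_univ _))

lemma sum_closePairs_le [DecidableEq ι] (ψ : ι → V → V) (hι : 2 ≤ Fintype.card ι) (n : ℕ) :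
    ∑ A ∈ closePairs ψ n, 1 / (Fintype.card V : ℝ) ^ A.card ≤
      2 * Fintype.card ι ^ (n + 2) / Fintype.card V := by
  have hcard : ((closePairs ψ n).card : ℝ) ≤ Fintype.card V * (2 * Fintype.card ι ^ (n + 2)) :=
    mod_cast card_closePairs_le hι n
  have hterm (A) (hA : A ∈ closePairs ψ n) :
      1 / (Fintype.card V : ℝ) ^ A.card = 1 / Fintype.card V ^ 2 := by
    rw [(Finset.mem_filter.1 hA).2]
  rw [Finset.sum_congr rfl hterm, Finset.sum_const, nsmul_eq_mul, mul_one_div]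
  calc _ ≤ (Fintype.card V * (2 * Fintype.card ι ^ (n + 2)) : ℝ) / Fintype.card V ^ 2 := by gcongr
    _ ≤ _ := by
        rw [pow_two, mul_div_mul_comm]
        exact mul_le_of_le_one_left (by positivity) (div_self_le_one _)

open Classical in
lemma choose_mul_le_card_isSeparated [Nonempty V] (hψ : IsMatchingSystem ψ) {m : ℕ} (hm : m ≠ 0)
    (hι : Fintype.card ι = 2 * m) (B : Finset V) (n : ℕ) :
    ((Fintype.card V * m).choose m : ℝ) * (1 - Fintype.card ι * B.card / Fintype.card V -
      2 * Fintype.card ι ^ (n + 2) / Fintype.card V) ≤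
      (((edges ψ).powersetCard m).filter fun T : Finset _ => IsSeparated ψ B n ↑T).card := by
  have hE : (edges ψ).card = Fintype.card V * m := by
    refine Nat.eq_of_mul_eq_mul_left two_pos ?_
    rw [two_mul_card_edges hψ, hι]
    ring
  have hsum : ∑ A ∈ edgesMeeting ψ B ∪ closePairs ψ n, 1 / (Fintype.card V : ℝ) ^ A.card ≤
      Fintype.card ι * B.card / Fintype.card V +
        2 * Fintype.card ι ^ (n + 2) / Fintype.card V := by
    refine le_trans ?_ (add_le_add (sum_edgesMeeting_le ψ B _) (sum_closePairs_le ψ (by omega) n))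
    rw [← Finset.sum_union_inter]
    exact le_add_of_nonneg_right (Finset.sum_nonneg fun A _ => by positivity)
  have hcount := choose_mul_one_sub_sum_le_card_filter Fintype.card_ne_zero hE
    (edgesMeeting ψ B ∪ closePairs ψ n) (P := fun T => IsSeparated ψ B n ↑T) fun T hT =>
      isSeparated_of_forall_not_subset hψ (Finset.mem_powersetCard.1 hT).1
  refine (mul_le_mul_of_nonneg_left ?_ (Nat.cast_nonneg _)).trans hcount
  linarith

end Edges

lemma IsRemoteMatching.isInducedMatching {d N l h : ℕ} {ψ : Fin d → Fin N → Fin N}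
    {hψ : IsMatchingSystem ψ} {Γ : Set (Fin N)} {M : SimpleGraph (Fin N)}
    (hM : IsRemoteMatching ψ l h Γ M) (hh : h ≠ 0) (hcard : Nat.card M.edgeSet = d / 2) :
    IsInducedMatching (⨆ c, matchingGraph hψ c) M d := by
  refine ⟨fun x y hxy => SimpleGraph.iSup_adj.2 (hM.exists_color x y hxy), hM.eq_of_adj, hcard,
    fun u v hu hv huv => ?_⟩
  obtain ⟨c, hc⟩ := SimpleGraph.iSup_adj.1 huv
  exact hM.adj u hu v hv huv.ne [c] (by rw [List.length_singleton]; omega) hc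

theorem choose_mul_le_card_hasStrongISTs {d k N m b R l : ℕ} {ψ : Fin d → Fin N → Fin N}
    (hψ : IsMatchingSystem ψ) {col : Fin k × Fin 3 → Fin d} {link : Fin k → Fin d} {r : Fin N}
    (hm : m ≠ 0) (hd : d = 2 * m) (hcol : col.Injective) (hb : 1 ≤ b)
    (hl : 2 * (2 * b + 1) + 4 ≤ l) (hr : r ∈ coreUnion (fun a => ψ (col a)) R l r)
    (hsparse : ¬HasDenseSet (4 * (2 * b + 1)) fun a => ψ (col a))
    (hlink : IsLinked (fun a => ψ (col a)) (fun i => ψ (link i)) b R l r) {B : Finset (Fin N)}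
    (htame : ∀ x ∉ B, IsTame ψ l x)
    (hcore : ∀ x ∉ B, ∀ ρ : List (Fin d), ρ.length ≤ 3 →
      wordAct ψ ρ x ∉ coreUnion (fun a => ψ (col a)) R l r) :
    ((N * m).choose m : ℝ) * (1 - d * B.card / N - 2 * d ^ (4 * b + 4) / N) ≤
      Nat.card {M : SimpleGraph (Fin N) // IsInducedMatching (⨆ c, matchingGraph hψ c) M d ∧
        HasStrongISTs (⨆ c, matchingGraph hψ c) M r k} := by
  classical
  have : Nonempty (Fin N) := ⟨r⟩
  have hcount := choose_mul_le_card_isSeparated hψ hm (by rw [Fintype.card_fin, hd]) B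
    (2 * (2 * b + 1))
  simp only [Fintype.card_fin] at hcount
  rw [show 4 * b + 4 = 2 * (2 * b + 1) + 2 by ring]
  refine hcount.trans (Nat.cast_le.2 ?_)
  set 𝒯 := ((edges ψ).powersetCard m).filter fun T : Finset _ =>
    IsSeparated ψ ↑B (2 * (2 * b + 1)) ↑T
  have hedgeSet (T) (hT : T ∈ 𝒯) :
      (SimpleGraph.fromEdgeSet (T : Set (Sym2 (Fin N)))).edgeSet = T :=
    edgeSet_fromEdgeSet_of_subset_edges hψ
      (Finset.coe_subset.2 (Finset.mem_powersetCard.1 (Finset.mem_filter.1 hT).1).1)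
  have hgood (T) (hT : T ∈ 𝒯) :
      IsInducedMatching (⨆ c, matchingGraph hψ c) (SimpleGraph.fromEdgeSet ↑T) d ∧
        HasStrongISTs (⨆ c, matchingGraph hψ c) (SimpleGraph.fromEdgeSet ↑T) r k := by
    obtain ⟨hTm, hsep⟩ := Finset.mem_filter.1 hT
    obtain ⟨hTψ, hTcard⟩ := Finset.mem_powersetCard.1 hTm
    have hM := hsep.isRemoteMatching hψ (Finset.coe_subset.2 hTψ) htame hcore
    refine ⟨hM.isInducedMatching (by omega) ?_, hM.hasStrongISTs hcol hb hl hr hsparse hlink⟩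
    rw [hedgeSet T hT, Nat.card_coe_set_eq, Set.ncard_coe_finset]
    omega
  rw [← Fintype.card_coe, ← Nat.card_eq_fintype_card]
  refine Nat.card_le_card_of_injective (fun T => ⟨_, hgood T.1 T.2⟩) ?_
  rintro ⟨T, hT⟩ ⟨T', hT'⟩ heq
  have hset := congrArg SimpleGraph.edgeSet (congrArg Subtype.val heq)
  rw [hedgeSet T hT, hedgeSet T' hT'] at hset
  exact Subtype.ext (Finset.coe_injective hset)

/-! ### Most roots are good -/

section Roots

variable {ι κ V : Type*} [DecidableEq κ] {b R l : ℕ}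

lemma ncard_setOf_wordAct_mem_coreUnion_le [Fintype ι] [Fintype κ] {ψ : ι → V → V}
    (hψ : ∀ c, (ψ c).Involutive) (hι : 2 ≤ Fintype.card ι) (φ : κ × Fin 3 → V → V) (r : V) :
    {x | ∃ ρ : List ι, ρ.length ≤ 3 ∧ wordAct ψ ρ x ∈ coreUnion φ R l r}.ncard ≤
      4 * Fintype.card ι ^ 3 * Fintype.card κ * 2 ^ R := by
  classical
  have hsub : {x | ∃ ρ : List ι, ρ.length ≤ 3 ∧ wordAct ψ ρ x ∈ coreUnion φ R l r} ⊆
      ((wordsUpTo ι 3 ×ˢ (Finset.univ ×ˢ wordsUpTo Bool R)).image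
        fun p : List ι × κ × List Bool =>
          wordAct ψ p.1 (wordAct φ (branchWord p.2.1 p.2.2) r)) := by
    rintro x ⟨ρ, hρ, j, bs, hbs, hx⟩
    refine Finset.mem_coe.2 (Finset.mem_image.2 ⟨(ρ.reverse, j, bs), ?_, ?_⟩)
    · exact Finset.mk_mem_product (mem_wordsUpTo.2 (by rwa [List.length_reverse]))
        (Finset.mk_mem_product (Finset.mem_univ j) (mem_wordsUpTo.2 hbs.1))
    · rw [← hx, wordAct_reverse_wordAct hψ]
  have hbits : (wordsUpTo Bool R).card ≤ 2 * 2 ^ R := card_wordsUpTo_le le_rfl (by simp) R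
  have hwords : (wordsUpTo ι 3).card ≤ 2 * Fintype.card ι ^ 3 := card_wordsUpTo_le hι le_rfl 3
  refine (Set.ncard_le_ncard hsub (Finset.finite_toSet _)).trans ?_
  rw [Set.ncard_coe_finset]
  refine Finset.card_image_le.trans ?_
  rw [Finset.card_product, Finset.card_product, Finset.card_univ]
  calc _ ≤ 2 * Fintype.card ι ^ 3 * (Fintype.card κ * (2 * 2 ^ R)) := by gcongr
    _ = _ := by ring

variable [Fintype V]

/-- A root with a small core, or around which some link is missing. -/
def IsBadRoot [Finite κ] (col : κ × Fin 3 → ι) (link : κ → ι) (b R l : ℕ) (r : V)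
    (ψ : ι → V → V) : Prop :=
  (∃ j, (core (fun a => ψ (col a)) R l r j).ncard < 2 ^ (R - 1)) ∨
    ¬IsLinked (fun a => ψ (col a)) (fun i => ψ (link i)) b R l r

/-- Bounds the probability that a given root is bad in a random system of `d` matchings of `N`
vertices. -/
noncomputable def badRootBound (d N b R l : ℕ) : ℝ :=
  2 * d * (R + 1) * collisionBound d N R l +
    d * N ^ 3 * Real.exp (-(2 ^ (b - 1) * (2 ^ (R - 1) / (2 * N))))

variable [DecidableEq V] [Fintype ι] [DecidableEq ι]

lemma matchingProb_isBadRoot_le [Finite κ] {col : κ × Fin 3 → ι} {link : κ → ι}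
    (hcol : col.Injective) (hlink : ∀ i a, col a ≠ link i) (hb : b ≠ 0)
    (hR : 4 * Fintype.card ι + 4 * 2 ^ (b - 1) + 4 ≤ 2 ^ (R - 1))
    (hV : 4 * Fintype.card ι + 4 * (2 * R + l + 4) + 4 ≤ Fintype.card V) (r : V) :
    matchingProb (IsBadRoot col link b R l r) ≤
      badRootBound (Fintype.card ι) (Fintype.card V) b R l := by
  have := Fintype.ofFinite κ
  have hR0 : R ≠ 0 := by
    rintro rfl
    omega
  have hκ : Fintype.card κ ≤ Fintype.card ι := by
    have := card_le_of_triples_injective hcol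
    omega
  refine (uniformProb_mono fun ψ _ hbad => ?_).trans ((uniformProb_or_le _ _ _).trans
    (add_le_add (matchingProb_exists_ncard_core_lt_le hcol hR0 hV r)
      ((matchingProb_not_isLinked_le (l := l) hlink hb r hR).trans ?_)))
  · refine or_iff_not_imp_left.2 fun hcore => ⟨?_, hbad.resolve_left hcore⟩
    push Not at hcore
    exact hcore
  · gcongr

open Classical in
lemma matchingProb_le_card_isBadRoot_le [Finite κ] {col : κ × Fin 3 → ι} {link : κ → ι}
    (hcol : col.Injective) (hlink : ∀ i a, col a ≠ link i) (hb : b ≠ 0)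
    (hR : 4 * Fintype.card ι + 4 * 2 ^ (b - 1) + 4 ≤ 2 ^ (R - 1))
    (hV : 4 * Fintype.card ι + 4 * (2 * R + l + 4) + 4 ≤ Fintype.card V) {θ : ℝ} (hθ : 0 < θ) :
    matchingProb (fun ψ : ι → V → V =>
        θ ≤ (Finset.univ.filter fun r => IsBadRoot col link b R l r ψ).card) ≤
      Fintype.card V * badRootBound (Fintype.card ι) (Fintype.card V) b R l / θ := by
  rw [le_div_iff₀ hθ]
  refine (uniformProb_le_card_filter_mul_le Finset.univ IsMatchingSystem
    (IsBadRoot col link b R l) θ).trans ?_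
  rw [← Finset.card_univ (α := V), ← nsmul_eq_mul]
  exact Finset.sum_le_card_nsmul _ _ _ fun r _ => matchingProb_isBadRoot_le hcol hlink hb hR hV r

open Classical in
lemma matchingProb_le_card_not_isTame_le (hι : 2 ≤ Fintype.card ι)
    (hV : 4 * Fintype.card ι + 4 * (l + 1) + 4 ≤ Fintype.card V) {ζ : ℝ} (hζ : 0 < ζ) :
    matchingProb (fun ψ : ι → V → V => ζ ≤ (Finset.univ.filter fun x => ¬IsTame ψ l x).card) ≤
      4 * Fintype.card ι ^ l * (l + 1) ^ 2 / ζ := by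
  have hV0 : (Fintype.card V : ℝ) ≠ 0 := by
    norm_cast
    omega
  rw [le_div_iff₀ hζ]
  refine (uniformProb_le_card_filter_mul_le Finset.univ IsMatchingSystem
    (fun x ψ => ¬IsTame ψ l x) ζ).trans ?_
  refine (Finset.sum_le_card_nsmul _ _ _ fun x _ => matchingProb_not_isTame_le hι hV x).trans_eq ?_
  rw [Finset.card_univ, nsmul_eq_mul]
  field_simp
  ring

end Roots

section Tuples

variable {d k N b R l : ℕ}

/-- The first three colours of each block of four colours, used inside the trees. -/
def treeColor (d : ℕ) (p : Fin (d / 4) × Fin 3) : Fin d :=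
  ⟨4 * p.1 + p.2, by omega⟩

/-- The last colour of each block of four colours, used to link vertices to the cores. -/
def linkColor (d : ℕ) (i : Fin (d / 4)) : Fin d :=
  ⟨4 * i + 3, by omega⟩

lemma treeColor_injective (d : ℕ) : (treeColor d).Injective := by
  rintro ⟨i, t⟩ ⟨i', t'⟩ heq
  have hval : 4 * (i : ℕ) + t = 4 * i' + t' := congrArg Fin.val heq
  refine Prod.ext (Fin.ext ?_) (Fin.ext ?_) <;> dsimp only <;> omega

lemma treeColor_ne_linkColor (i : Fin (d / 4)) (p : Fin (d / 4) × Fin 3) :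
    treeColor d p ≠ linkColor d i := by
  intro heq
  have hval : 4 * (p.1 : ℕ) + p.2 = 4 * i + 3 := congrArg Fin.val heq
  omega

/-- The size conditions under which the probabilistic estimates combine: `b`, `R` and `l` control
the length of the link paths, the depth of the cores and the tameness of the vertices. -/
structure IsAdmissible (d N b R l : ℕ) : Prop where
  one_le : 1 ≤ b
  le_tameness : 2 * (2 * b + 1) + 4 ≤ l
  le_two_pow : 4 * d + 4 * 2 ^ (b - 1) + 4 ≤ 2 ^ (R - 1)
  collision_le : 4 * d + 4 * (2 * R + l + 4) + 4 ≤ N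
  dense_le : 4 * d + 4 * (4 * (2 * b + 1) + 1) + 4 ≤ N

/-- Bounds the proportion of sets of `d / 2` edges which are not good matchings for a good root
when fewer than `ζ` vertices are not tame. -/
noncomputable def excludedFraction (d N b R : ℕ) (ζ : ℝ) : ℝ :=
  d * (ζ + 4 * d ^ 4 * 2 ^ R) / N + 2 * d ^ (4 * b + 4) / N

open Classical in
lemma choose_mul_le_of_not_isBadRoot (h : IsAdmissible d N b R l) (hd : Even d) (hk : k ≠ 0)
    {ψ : Fin d → Fin N → Fin N} (hψ : IsMatchingSystem ψ) {col : Fin k × Fin 3 → Fin d}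
    (hcol : col.Injective) {link : Fin k → Fin d} {r : Fin N}
    (hr : ¬IsBadRoot col link b R l r ψ) (hsparse : ¬HasDenseSet (4 * (2 * b + 1)) ψ) {ζ : ℝ}
    (hζ : ((Finset.univ.filter fun x => ¬IsTame ψ l x).card : ℝ) ≤ ζ) :
    ((N * (d / 2)).choose (d / 2) : ℝ) * (1 - excludedFraction d N b R ζ) ≤
      Nat.card {M : SimpleGraph (Fin N) // IsInducedMatching (⨆ c, matchingGraph hψ c) M d ∧
        HasStrongISTs (⨆ c, matchingGraph hψ c) M r k} := by
  simp only [IsBadRoot, not_or, not_exists, not_lt, not_not] at hr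
  obtain ⟨hcores, hlink⟩ := hr
  have hkd : 3 * k ≤ d := by simpa using card_le_of_triples_injective hcol
  have hroot : r ∈ coreUnion (fun a => ψ (col a)) R l r := by
    have hpos : 0 < (core (fun a => ψ (col a)) R l r ⟨0, by omega⟩).ncard :=
      (Nat.two_pow_pos _).trans_le (hcores _)
    obtain ⟨x, hx⟩ := (Set.ncard_pos (Set.toFinite _)).1 hpos
    exact root_mem_coreUnion hx
  set near : Finset (Fin N) := {x | ∃ ρ : List (Fin d), ρ.length ≤ 3 ∧
    wordAct ψ ρ x ∈ coreUnion (fun a => ψ (col a)) R l r}.toFinset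
  set untame : Finset (Fin N) := Finset.univ.filter fun x => ¬IsTame ψ l x
  have hnear : near.card ≤ 4 * d ^ 4 * 2 ^ R := by
    have hcard := ncard_setOf_wordAct_mem_coreUnion_le (R := R) (l := l) hψ.involutive
      (by rw [Fintype.card_fin]; omega) (fun a => ψ (col a)) r
    rw [Set.ncard_eq_toFinset_card', Fintype.card_fin, Fintype.card_fin] at hcard
    calc near.card ≤ 4 * d ^ 3 * k * 2 ^ R := hcard
      _ ≤ 4 * d ^ 3 * d * 2 ^ R := by gcongr; omega
      _ = _ := by ring
  have hB : ((untame ∪ near).card : ℝ) ≤ ζ + 4 * d ^ 4 * 2 ^ R := by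
    refine le_trans ?_ (add_le_add hζ (by exact_mod_cast hnear : (near.card : ℝ) ≤ _))
    exact_mod_cast Finset.card_union_le _ _
  have hcount := choose_mul_le_card_hasStrongISTs hψ (by omega : d / 2 ≠ 0)
    (Nat.two_mul_div_two_of_even hd).symm hcol h.one_le h.le_tameness hroot
    (mt (HasDenseSet.of_comp hcol) hsparse) hlink (B := untame ∪ near)
    (fun x hx => by simpa [untame] using (Finset.notMem_union.1 hx).1)
    (fun x hx ρ hρ hmem => (Finset.notMem_union.1 hx).2 (Set.mem_toFinset.2 ⟨ρ, hρ, hmem⟩))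
  refine le_trans (mul_le_mul_of_nonneg_left ?_ (Nat.cast_nonneg _)) hcount
  rw [excludedFraction, ← sub_sub]
  gcongr

open Classical in
lemma sub_le_natCard_subtype {α : Type*} [Fintype α] {P Q : α → Prop} {θ : ℝ}
    (hPQ : ∀ a, ¬P a → Q a) (hP : ((Finset.univ.filter P).card : ℝ) ≤ θ) :
    (Fintype.card α : ℝ) - θ ≤ Nat.card {a // Q a} := by
  have hsum : (Finset.univ.filter P).card + (Finset.univ.filter fun a => ¬P a).card =
      Fintype.card α := Finset.card_filter_add_card_filter_not P
  have hle : (Finset.univ.filter fun a => ¬P a).card ≤ (Finset.univ.filter Q).card :=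
    Finset.card_le_card (Finset.monotone_filter_right _ fun a _ => hPQ a)
  rw [Nat.card_eq_fintype_card, Fintype.card_subtype, ← hsum, Nat.cast_add]
  have hle' : ((Finset.univ.filter fun a => ¬P a).card : ℝ) ≤ (Finset.univ.filter Q).card :=
    mod_cast hle
  linarith

open Classical in
theorem one_sub_le_tupleProb (h : IsAdmissible d N b R l) (hN : Even N) (hd : Even d) (hd4 : 4 ≤ d)
    {ζ θ : ℝ} (hζ : 0 < ζ) (hθ : 0 < θ) :
    1 - ((4 * (2 * b + 1) + 1) * (2 * d * (4 * (2 * b + 1) + 1) ^ 2) ^ (4 * (2 * b + 1) + 1) / N +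
        4 * d ^ l * (l + 1) ^ 2 / ζ + N * badRootBound d N b R l / θ) ≤
      tupleProb N d fun Mt => (N : ℝ) - θ ≤ Nat.card {r : Fin N //
        ((N * (d / 2)).choose (d / 2) : ℝ) * (1 - excludedFraction d N b R ζ) ≤
          Nat.card {M : SimpleGraph (Fin N) // IsInducedMatching (⨆ i, Mt i) M d ∧
            HasStrongISTs (⨆ i, Mt i) M r (d / 4)}} := by
  have : Nonempty (Fin d) := ⟨⟨0, by omega⟩⟩
  have hcol := treeColor_injective d
  have hcollision := h.collision_le
  have hdense := matchingProb_hasDenseSet_le (ι := Fin d) (V := Fin N) (H := 4 * (2 * b + 1))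
    (by simpa using h.dense_le)
  have huntame := matchingProb_le_card_not_isTame_le (ι := Fin d) (V := Fin N) (l := l)
    (by rw [Fintype.card_fin]; omega) (by rw [Fintype.card_fin, Fintype.card_fin]; omega) hζ
  have hbad := matchingProb_le_card_isBadRoot_le (V := Fin N) (b := b) (R := R) (l := l) hcol
    treeColor_ne_linkColor (Nat.one_le_iff_ne_zero.1 h.one_le)
    (by simpa using h.le_two_pow) (by simpa using h.collision_le) hθ
  have hex : ∃ ψ : Fin d → Fin N → Fin N, IsMatchingSystem ψ := by
    obtain ⟨M, rfl⟩ := hN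
    exact exists_isMatchingSystem (by omega) (by omega)
  simp only [Fintype.card_fin] at hdense huntame hbad
  push_cast at hdense
  refine (sub_le_sub_left ((uniformProb_or_le _ _ _).trans (add_le_add
    ((uniformProb_or_le _ _ _).trans (add_le_add hdense huntame)) hbad)) 1).trans ?_
  rw [← uniformProb_not hex, tupleProb_eq_matchingProb]
  refine uniformProb_mono fun ψ hψ hgood => ⟨hψ, ?_⟩
  simp only [not_or, not_le] at hgood
  obtain ⟨⟨hsparse, htame⟩, hroots⟩ := hgood
  have hcard := sub_le_natCard_subtype (θ := θ) (fun r hr => choose_mul_le_of_not_isBadRoot h hd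
    (by omega) hψ hcol (r := r) hr hsparse htame.le) hroots.le
  rwa [Fintype.card_fin] at hcard

end Tuples

/-! ### Choice of the parameters -/

section Scale

variable {N d μ Λ e : ℕ} {ε : ℝ}

/-- The asymptotic regime, measured in powers of `2 ^ μ`: this quantity exceeds `log N` and the
square root of the degree `d`, but `N` is larger than its `2000 μ`-th power. -/
structure IsScale (N d μ Λ : ℕ) : Prop where
  linear_le : 200 * μ + 100 ≤ 2 ^ μ
  exponent_lt : Λ + 1 ≤ 2 ^ μ
  le_two_pow : N ≤ 2 ^ Λ
  two_pow_le : 2 ^ Λ ≤ 4 * N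
  degree_le : d ≤ (2 ^ μ) ^ 2
  pow_le : (2 ^ μ) ^ (2000 * μ + 1) ≤ N

namespace IsScale

lemma one_le (h : IsScale N d μ Λ) : 1 ≤ μ := by
  have hlinear := h.linear_le
  by_contra! hμ
  obtain rfl : μ = 0 := by omega
  norm_num at hlinear

lemma hundred_le (h : IsScale N d μ Λ) : (100 : ℝ) ≤ 2 ^ μ :=
  mod_cast (Nat.le_add_left _ _).trans h.linear_le

lemma cast_linear_le (h : IsScale N d μ Λ) : 200 * (μ : ℝ) + 100 ≤ 2 ^ μ :=
  mod_cast h.linear_le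

lemma cast_degree_le (h : IsScale N d μ Λ) : (d : ℝ) ≤ (2 ^ μ) ^ 2 :=
  mod_cast h.degree_le

lemma cast_pos (h : IsScale N d μ Λ) : (0 : ℝ) < N :=
  mod_cast (Nat.pos_of_ne_zero (by positivity)).trans_le h.pow_le

lemma pow_le_of_le (h : IsScale N d μ Λ) (he : e ≤ 2000 * μ + 1) : (2 ^ μ) ^ e ≤ N :=
  (Nat.pow_le_pow_right (by positivity) he).trans h.pow_le

lemma pow_div_le (h : IsScale N d μ Λ) (he : e ≤ 2000 * μ) :
    ((2 : ℝ) ^ μ) ^ e / N ≤ 1 / 2 ^ μ := by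
  rw [div_le_div_iff₀ h.cast_pos (by positivity), one_mul, ← pow_succ]
  exact_mod_cast h.pow_le_of_le (Nat.succ_le_succ he)

lemma fifty_mul_le (h : IsScale N d μ Λ) : 50 * μ ≤ Λ := by
  have hpow : 2 ^ (μ * 50) ≤ 2 ^ Λ := by
    rw [pow_mul]
    exact (h.pow_le_of_le (by have := h.one_le; omega)).trans h.le_two_pow
  have := (Nat.pow_le_pow_iff_right one_lt_two).1 hpow
  omega

lemma two_pow_depth_mul (h : IsScale N d μ Λ) :
    (2 : ℝ) ^ (Λ - 20 * μ) * (2 ^ μ) ^ 20 = 2 ^ Λ := by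
  have := h.fifty_mul_le
  rw [← pow_mul, ← pow_add]
  congr 1
  omega

lemma two_pow_depth_mul_le (h : IsScale N d μ Λ) :
    (2 : ℝ) ^ (Λ - 20 * μ) * (2 ^ μ) ^ 20 ≤ 4 * N := by
  rw [h.two_pow_depth_mul]
  exact_mod_cast h.two_pow_le

lemma two_pow_depth_div_le (h : IsScale N d μ Λ) :
    (2 : ℝ) ^ (Λ - 20 * μ) * (2 ^ μ) ^ 15 / N ≤ 1 / (8 * 2 ^ μ) := by
  have hdepth := h.two_pow_depth_mul_le
  have hD := h.hundred_le
  have hD4 : (32 : ℝ) ≤ (2 ^ μ) ^ 4 :=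
    (by linarith : (32 : ℝ) ≤ 2 ^ μ).trans (le_self_pow₀ (by linarith) (by norm_num))
  rw [div_le_div_iff₀ h.cast_pos (by positivity), one_mul]
  refine le_of_mul_le_mul_right ?_ (by positivity : (0 : ℝ) < (2 ^ μ) ^ 4)
  calc _ = 8 * ((2 : ℝ) ^ (Λ - 20 * μ) * (2 ^ μ) ^ 20) := by ring
    _ ≤ N * 32 := by linarith
    _ ≤ N * (2 ^ μ) ^ 4 := by gcongr

lemma cast_depth_le (h : IsScale N d μ Λ) : ((Λ - 20 * μ : ℕ) : ℝ) + 1 ≤ 2 ^ μ := by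
  have hle : Λ - 20 * μ + 1 ≤ 2 ^ μ := (by omega : _ ≤ Λ + 1).trans h.exponent_lt
  exact_mod_cast hle

lemma isAdmissible (h : IsScale N d μ Λ) :
    IsAdmissible d N (23 * μ + 1) (Λ - 20 * μ) (92 * μ + 10) := by
  have hμ := h.one_le
  have hΛ := h.fifty_mul_le
  have hd := h.degree_le
  have hlinear := h.linear_le
  have hexp := h.exponent_lt
  have hD : 100 ≤ 2 ^ μ := by omega
  have hD2 : 100 * 2 ^ μ ≤ (2 ^ μ) ^ 2 := by
    rw [pow_two]
    exact Nat.mul_le_mul_right _ hD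
  have hD3 : 100 * (2 ^ μ) ^ 2 ≤ N :=
    calc 100 * (2 ^ μ) ^ 2 ≤ 2 ^ μ * (2 ^ μ) ^ 2 := Nat.mul_le_mul_right _ hD
      _ = (2 ^ μ) ^ 3 := by ring
      _ ≤ N := h.pow_le_of_le (by omega)
  refine ⟨by omega, by omega, ?_, by omega, by omega⟩
  have hdepth : (2 ^ μ) ^ 24 ≤ 2 ^ (Λ - 20 * μ - 1) := by
    rw [← pow_mul]
    exact Nat.pow_le_pow_right two_pos (by omega)
  have hD24 : 100 * (2 ^ μ) ^ 23 ≤ (2 ^ μ) ^ 24 := by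
    rw [pow_succ' _ 23]
    exact Nat.mul_le_mul_right _ hD
  have hD23 : (2 ^ μ) ^ 2 ≤ (2 ^ μ) ^ 23 := Nat.pow_le_pow_right (by positivity) (by norm_num)
  rw [Nat.add_sub_cancel, mul_comm 23 μ, pow_mul]
  omega

lemma denseSet_bound_le (h : IsScale N d μ Λ) :
    (4 * (2 * (23 * μ + 1 : ℕ) + 1) + 1) * (2 * d * (4 * (2 * (23 * μ + 1 : ℕ) + 1) + 1) ^ 2) ^
      (4 * (2 * (23 * μ + 1) + 1) + 1) / (N : ℝ) ≤ 1 / 2 ^ μ := by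
  have hμ := h.one_le
  have hlinear := h.cast_linear_le
  have hH : (4 * (2 * (23 * μ + 1 : ℕ) + 1) + 1 : ℝ) ≤ 2 ^ μ := by
    push_cast
    linarith
  refine le_trans ?_ (h.pow_div_le (e := 5 * (4 * (2 * (23 * μ + 1) + 1) + 1) + 1) (by omega))
  gcongr
  have hbase : (2 * d * (4 * (2 * (23 * μ + 1 : ℕ) + 1) + 1) ^ 2 : ℝ) ≤ (2 ^ μ) ^ 5 :=
    calc _ ≤ (2 : ℝ) ^ μ * (2 ^ μ) ^ 2 * (2 ^ μ) ^ 2 := by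
          gcongr
          · linarith [h.hundred_le]
          · exact h.cast_degree_le
      _ = _ := by ring
  calc _ ≤ (2 : ℝ) ^ μ * ((2 ^ μ) ^ 5) ^ (4 * (2 * (23 * μ + 1) + 1) + 1) := by gcongr
    _ = _ := by rw [← pow_mul _ 5, pow_succ', mul_comm]

lemma untame_bound_le (h : IsScale N d μ Λ) :
    4 * d ^ (92 * μ + 10) * ((92 * μ + 10 : ℕ) + 1) ^ 2 / ((2 : ℝ) ^ μ) ^ (1000 * μ) ≤
      1 / 2 ^ μ := by
  have hμ := h.one_le
  have hD := h.hundred_le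
  have hlinear := h.cast_linear_le
  have hl : ((92 * μ + 10 : ℕ) + 1 : ℝ) ≤ 2 ^ μ := by
    push_cast
    linarith
  rw [div_le_div_iff₀ (by positivity) (by positivity)]
  calc _ ≤ (2 : ℝ) ^ μ * ((2 ^ μ) ^ 2) ^ (92 * μ + 10) * (2 ^ μ) ^ 2 * 2 ^ μ := by
        gcongr
        · linarith
        · exact h.cast_degree_le
    _ = ((2 : ℝ) ^ μ) ^ (2 * (92 * μ + 10) + 4) := by rw [← pow_mul _ 2]; ring
    _ ≤ ((2 : ℝ) ^ μ) ^ (1000 * μ) := pow_le_pow_right₀ (by linarith) (by omega)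
    _ = _ := by ring

lemma excludedFraction_le (h : IsScale N d μ Λ) :
    excludedFraction d N (23 * μ + 1) (Λ - 20 * μ) ((2 ^ μ) ^ (1000 * μ)) ≤ 3 / 2 ^ μ := by
  have hμ := h.one_le
  have hD := h.hundred_le
  have hd := h.cast_degree_le
  have huntame : d * ((2 : ℝ) ^ μ) ^ (1000 * μ) / N ≤ 1 / 2 ^ μ := by
    refine le_trans ?_ (h.pow_div_le (e := 1000 * μ + 2) (by omega))
    rw [add_comm, pow_add _ 2]
    gcongr
  have hcore : (d * (4 * d ^ 4 * 2 ^ (Λ - 20 * μ)) / N : ℝ) ≤ 1 / 2 ^ μ :=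
    calc _ ≤ (2 ^ μ : ℝ) ^ 2 * (4 * ((2 ^ μ) ^ 2) ^ 4 * 2 ^ (Λ - 20 * μ)) / N := by gcongr
      _ = 4 * (2 ^ (Λ - 20 * μ) * (2 ^ μ) ^ 10 / N) := by ring
      _ ≤ 4 * (2 ^ (Λ - 20 * μ) * (2 ^ μ) ^ 15 / N) := by
          gcongr
          · linarith
          · norm_num
      _ ≤ 4 * (1 / (8 * 2 ^ μ)) :=
          mul_le_mul_of_nonneg_left h.two_pow_depth_div_le (by norm_num)
      _ ≤ 1 / 2 ^ μ := by
          rw [mul_one_div, div_le_div_iff₀ (by positivity) (by positivity)]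
          linarith
  have hclose : (2 * d ^ (4 * (23 * μ + 1) + 4) / N : ℝ) ≤ 1 / 2 ^ μ := by
    refine le_trans ?_ (h.pow_div_le (e := 2 * (4 * (23 * μ + 1) + 4) + 1) (by omega))
    rw [pow_succ' _ (2 * _), pow_mul _ 2]
    gcongr
    linarith
  rw [excludedFraction, mul_add, add_div]
  linarith [(by ring : (3 : ℝ) / 2 ^ μ = 1 / 2 ^ μ + 1 / 2 ^ μ + 1 / 2 ^ μ)]

lemma collisionBound_le (h : IsScale N d μ Λ) :
    collisionBound d N (Λ - 20 * μ) (92 * μ + 10) ≤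
      (4 * ((2 ^ μ) ^ 2) ^ 4 * 2 ^ (Λ - 20 * μ) + 2 * ((2 ^ μ) ^ 2) ^ (92 * μ + 10)) *
        ((2 ^ μ) ^ 3 / N) := by
  have hd := h.cast_degree_le
  have hD := h.hundred_le
  have hlinear := h.cast_linear_le
  have hdepth := h.cast_depth_le
  have hlength : 2 * (2 * ((Λ - 20 * μ : ℕ) : ℝ) + (92 * μ + 10 : ℕ) + 4) ^ 2 ≤ (2 ^ μ) ^ 3 :=
    calc _ ≤ (2 : ℝ) * (3 * 2 ^ μ) ^ 2 := by
          gcongr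
          push_cast
          linarith
      _ = 18 * (2 ^ μ) ^ 2 := by ring
      _ ≤ 2 ^ μ * (2 ^ μ) ^ 2 := by gcongr; linarith
      _ = _ := by ring
  unfold collisionBound
  gcongr

lemma smallCore_bound_le (h : IsScale N d μ Λ) :
    2 * d * ((Λ - 20 * μ : ℕ) + 1) * collisionBound d N (Λ - 20 * μ) (92 * μ + 10) ≤
      2 / 2 ^ μ := by
  have hμ := h.one_le
  have hD := h.hundred_le
  have hcore : 8 * (2 : ℝ) ^ (Λ - 20 * μ) * (2 ^ μ) ^ 14 / N ≤ 1 / 2 ^ μ :=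
    calc _ = 8 * ((2 : ℝ) ^ (Λ - 20 * μ) * (2 ^ μ) ^ 14 / N) := by ring
      _ ≤ 8 * ((2 : ℝ) ^ (Λ - 20 * μ) * (2 ^ μ) ^ 15 / N) := by
          gcongr
          · linarith
          · norm_num
      _ ≤ 8 * (1 / (8 * 2 ^ μ)) :=
          mul_le_mul_of_nonneg_left h.two_pow_depth_div_le (by norm_num)
      _ = 1 / 2 ^ μ := by field_simp
  have htame : 4 * ((2 : ℝ) ^ μ) ^ (2 * (92 * μ + 10) + 6) / N ≤ 1 / 2 ^ μ := by
    refine le_trans ?_ (h.pow_div_le (e := 2 * (92 * μ + 10) + 7) (by omega))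
    rw [pow_succ' _ (2 * (92 * μ + 10) + 6)]
    gcongr
    linarith
  calc _ ≤ 2 * (2 ^ μ : ℝ) ^ 2 * 2 ^ μ * ((4 * ((2 ^ μ) ^ 2) ^ 4 * 2 ^ (Λ - 20 * μ) +
          2 * ((2 ^ μ) ^ 2) ^ (92 * μ + 10)) * ((2 ^ μ) ^ 3 / N)) := by
        gcongr
        · exact collisionBound_nonneg _ _ _ _
        · exact h.cast_degree_le
        · exact h.cast_depth_le
        · exact h.collisionBound_le
    _ = 8 * (2 : ℝ) ^ (Λ - 20 * μ) * (2 ^ μ) ^ 14 / N +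
          4 * ((2 : ℝ) ^ μ) ^ (2 * (92 * μ + 10) + 6) / N := by
        rw [← pow_mul _ 2 (92 * μ + 10), pow_add _ (2 * (92 * μ + 10)) 6]
        ring
    _ ≤ 1 / 2 ^ μ + 1 / 2 ^ μ := add_le_add hcore htame
    _ = _ := by ring

lemma cast_le_exp (h : IsScale N d μ Λ) : (N : ℝ) ≤ Real.exp (2 ^ μ) := by
  have hΛ : (Λ : ℝ) ≤ 2 ^ μ := mod_cast (Nat.le_succ Λ).trans h.exponent_lt
  calc (N : ℝ) ≤ 2 ^ Λ := mod_cast h.le_two_pow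
    _ ≤ Real.exp 1 ^ Λ := by
        gcongr
        linarith [Real.add_one_le_exp (1 : ℝ)]
    _ = Real.exp Λ := by rw [← Real.exp_nat_mul, mul_one]
    _ ≤ Real.exp (2 ^ μ) := Real.exp_le_exp.2 hΛ

lemma six_mul_le_link_exponent (h : IsScale N d μ Λ) :
    6 * (2 : ℝ) ^ μ ≤ 2 ^ (23 * μ) * (2 ^ (Λ - 20 * μ - 1) / (2 * N)) := by
  have hD := h.hundred_le
  have hN := h.cast_pos
  have hdepth : (N : ℝ) ≤ 2 * 2 ^ (Λ - 20 * μ - 1) * (2 ^ μ) ^ 20 := by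
    rw [← pow_succ', Nat.sub_add_cancel (by have := h.fifty_mul_le; have := h.one_le; omega),
      h.two_pow_depth_mul]
    exact_mod_cast h.le_two_pow
  calc 6 * (2 : ℝ) ^ μ = 24 * 2 ^ μ / 4 := by ring
    _ ≤ 2 ^ μ * 2 ^ μ * 2 ^ μ / 4 := by
        gcongr
        nlinarith
    _ = (2 ^ μ) ^ 3 * N / (4 * N) := by field_simp
    _ ≤ (2 ^ μ) ^ 3 * (2 * 2 ^ (Λ - 20 * μ - 1) * (2 ^ μ) ^ 20) / (4 * N) := by gcongr
    _ = 2 ^ (23 * μ) * (2 ^ (Λ - 20 * μ - 1) / (2 * N)) := by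
        rw [mul_comm 23 μ, pow_mul]
        field_simp
        ring

lemma unlinked_bound_le (h : IsScale N d μ Λ) :
    d * (N : ℝ) ^ 3 * Real.exp (-(2 ^ (23 * μ) * (2 ^ (Λ - 20 * μ - 1) / (2 * N)))) ≤
      1 / 2 ^ μ := by
  have hD : (2 : ℝ) ^ μ ≤ Real.exp (2 ^ μ) := by linarith [Real.add_one_le_exp ((2 : ℝ) ^ μ)]
  calc _ ≤ Real.exp (2 ^ μ) ^ 2 * Real.exp (2 ^ μ) ^ 3 * Real.exp (-(6 * 2 ^ μ)) := by
        have hlink := Real.exp_le_exp.2 (neg_le_neg h.six_mul_le_link_exponent)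
        have hd : (d : ℝ) ≤ Real.exp (2 ^ μ) ^ 2 := h.cast_degree_le.trans (by gcongr)
        have hN := h.cast_le_exp
        gcongr ?_ * ?_ ^ 3 * ?_
    _ = Real.exp (-2 ^ μ) := by
        rw [← Real.exp_nat_mul, ← Real.exp_nat_mul, ← Real.exp_add, ← Real.exp_add]
        congr 1
        push_cast
        ring
    _ ≤ 1 / 2 ^ μ := by
        rw [Real.exp_neg, inv_eq_one_div]
        gcongr

lemma badRootBound_le (h : IsScale N d μ Λ) :
    badRootBound d N (23 * μ + 1) (Λ - 20 * μ) (92 * μ + 10) ≤ 3 / 2 ^ μ := by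
  rw [badRootBound, Nat.add_sub_cancel]
  linarith [h.smallCore_bound_le, h.unlinked_bound_le,
    (by ring : (3 : ℝ) / 2 ^ μ = 2 / 2 ^ μ + 1 / 2 ^ μ)]

end IsScale

end Scale

section Asymptotics

variable {N d μ Λ : ℕ} {ε : ℝ}

lemma tupleProb_mono {E E' : (Fin d → SimpleGraph (Fin N)) → Prop} (h : ∀ Mt, E Mt → E' Mt) :
    tupleProb N d E ≤ tupleProb N d E' := by
  rw [tupleProb_eq_matchingProb, tupleProb_eq_matchingProb]
  exact uniformProb_mono fun _ _ ⟨hφ, hE⟩ => ⟨hφ, h _ hE⟩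

lemma tupleProb_le_one (E : (Fin d → SimpleGraph (Fin N)) → Prop) : tupleProb N d E ≤ 1 := by
  rw [tupleProb_eq_matchingProb]
  exact uniformProb_le_one _ _

lemma IsScale.one_sub_mul_le_choose_mul (h : IsScale N d μ Λ) (hd : Even d) (hε : 4 / 2 ^ μ ≤ ε) :
    (1 - ε) * (((N + 1 : ℝ) * d / 2) ^ (d / 2) / (d / 2).factorial) ≤ (N * (d / 2)).choose (d / 2) *
      (1 - excludedFraction d N (23 * μ + 1) (Λ - 20 * μ) ((2 ^ μ) ^ (1000 * μ))) := by
  obtain ⟨m, rfl⟩ := hd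
  have hm : (m + m) / 2 = m := by omega
  have hcast : (N + 1 : ℝ) * (m + m : ℕ) / 2 = (N + 1) * m := by
    push_cast
    ring
  rw [hm, hcast]
  have hN : 1 ≤ N := mod_cast h.cast_pos
  have hD := h.hundred_le
  have hthree : (0 : ℝ) ≤ 1 - 3 / 2 ^ μ :=
    sub_nonneg.2 ((div_le_one (by positivity)).2 (by linarith))
  have hdegree : 2 * (m : ℝ) / (N + 1) ≤ 1 / 2 ^ μ := by
    have hdN := h.cast_degree_le
    push_cast at hdN
    refine le_trans ?_ (h.pow_div_le (e := 2) (by have := h.one_le; omega))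
    have := h.cast_pos
    gcongr <;> linarith
  have hfraction : (1 - ε : ℝ) ≤ (1 - 1 / 2 ^ μ) * (1 - 3 / 2 ^ μ) := by
    have hprod : (0 : ℝ) ≤ 1 / 2 ^ μ * (3 / 2 ^ μ) := by positivity
    linarith [(by ring : (1 - 1 / 2 ^ μ : ℝ) * (1 - 3 / 2 ^ μ) =
      1 - 4 / 2 ^ μ + 1 / 2 ^ μ * (3 / 2 ^ μ))]
  calc _ ≤ (1 - 1 / 2 ^ μ) * (1 - 3 / 2 ^ μ) * (((N + 1 : ℝ) * m) ^ m / m.factorial) := by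
        gcongr
    _ = ((N + 1 : ℝ) * m) ^ m / m.factorial * (1 - 1 / 2 ^ μ) * (1 - 3 / 2 ^ μ) := by ring
    _ ≤ ((N + 1 : ℝ) * m) ^ m / m.factorial * (1 - 2 * m / (N + 1)) * (1 - 3 / 2 ^ μ) := by
        gcongr
    _ ≤ (N * m).choose m * (1 - 3 / 2 ^ μ) := by
        gcongr
        exact pow_mul_one_sub_le_choose hN m
    _ ≤ _ := by
        gcongr
        exact h.excludedFraction_le

lemma IsScale.one_sub_div_le_one_sub (h : IsScale N d μ Λ) (hε : 0 < ε) :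
    1 - (2 + 6 / ε) / 2 ^ μ ≤
      1 - ((4 * (2 * (23 * μ + 1 : ℕ) + 1) + 1) *
            (2 * d * (4 * (2 * (23 * μ + 1 : ℕ) + 1) + 1) ^ 2) ^
              (4 * (2 * (23 * μ + 1) + 1) + 1) / N +
          4 * d ^ (92 * μ + 10) * ((92 * μ + 10 : ℕ) + 1) ^ 2 / (2 ^ μ) ^ (1000 * μ) +
          N * badRootBound d N (23 * μ + 1) (Λ - 20 * μ) (92 * μ + 10) / (ε / 2 * N)) := by
  have hroot : N * badRootBound d N (23 * μ + 1) (Λ - 20 * μ) (92 * μ + 10) / (ε / 2 * N) ≤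
      6 / ε / 2 ^ μ := by
    have hN := h.cast_pos
    calc _ = badRootBound d N (23 * μ + 1) (Λ - 20 * μ) (92 * μ + 10) * (2 / ε) := by field_simp
      _ ≤ 3 / 2 ^ μ * (2 / ε) := by gcongr; exact h.badRootBound_le
      _ = 6 / ε / 2 ^ μ := by ring
  refine sub_le_sub_left ((add_le_add (add_le_add h.denseSet_bound_le h.untame_bound_le)
    hroot).trans_eq ?_) 1
  ring

theorem IsScale.one_sub_le_tupleProb (h : IsScale N d μ Λ) (hN : Even N) (hd : Even d)
    (hd4 : 4 ≤ d) (hε₀ : 0 < ε) (hε : 4 / ε ≤ 2 ^ μ) :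
    1 - (2 + 6 / ε) / 2 ^ μ ≤ tupleProb N d fun Mt => (1 - ε) * (N + 1 : ℝ) ≤
      Nat.card {r : Fin N // (1 - ε) * (((N + 1 : ℝ) * d / 2) ^ (d / 2) / (d / 2).factorial) ≤
        Nat.card {M : SimpleGraph (Fin N) // IsInducedMatching (⨆ i, Mt i) M d ∧
          HasStrongISTs (⨆ i, Mt i) M r (d / 4)}} := by
  have hN0 := h.cast_pos
  have hεN : 4 ≤ ε * N :=
    (div_le_iff₀' hε₀).1 (hε.trans (mod_cast (h.pow_le_of_le (e := 1) (by omega)).trans' (by simp)))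
  have hchoose := h.one_sub_mul_le_choose_mul hd ((div_le_comm₀ hε₀ (by positivity)).1 hε)
  refine (h.one_sub_div_le_one_sub hε₀).trans ((StrongIST.one_sub_le_tupleProb h.isAdmissible hN hd
    hd4 (by positivity) (by positivity : 0 < ε / 2 * N)).trans (tupleProb_mono fun Mt hroots => ?_))
  calc (1 - ε) * (N + 1 : ℝ) ≤ N - ε / 2 * N := by linarith
    _ ≤ _ := hroots
    _ ≤ _ := Nat.cast_le.2 (Nat.card_mono (Set.toFinite _) fun r hr => hchoose.trans hr)

/-- The exponent `μ` of the scale at `n`, with `2 ^ μ` of the order of `log n`. -/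
def scaleExponent (n : ℕ) : ℕ := Nat.clog 2 (Nat.log 2 n + 2)

lemma tendsto_scaleExponent : Tendsto scaleExponent atTop atTop := by
  refine tendsto_atTop.2 fun m => ?_
  filter_upwards [eventually_ge_atTop (2 ^ 2 ^ m)] with n hn
  have hlog : 2 ^ m ≤ Nat.log 2 n := Nat.le_log_of_pow_le one_lt_two hn
  exact ((Nat.lt_clog_iff_pow_lt one_lt_two).2 (by omega)).le

lemma tendsto_two_pow_scaleExponent : Tendsto (fun n => (2 : ℝ) ^ scaleExponent n) atTop atTop :=
  (tendsto_pow_atTop_atTop_of_one_lt one_lt_two).comp tendsto_scaleExponent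

lemma succ_mul_add_le_two_pow {k : ℕ} (hk : 32 ≤ k) :
    (k + 1) * (2000 * (k + 1) + 1) + 10 ≤ 2 ^ k := by
  induction k, hk using Nat.le_induction with
  | base => norm_num
  | succ k hk ih =>
    rw [pow_succ]
    nlinarith

lemma le_two_pow_sq_of_le_log_sq {n : ℕ} (hd : (d : ℝ) ≤ Real.log n ^ 2) (hn : n ≤ 2 ^ Λ)
    (hΛ : Λ ≤ 2 ^ μ) : d ≤ (2 ^ μ) ^ 2 := by
  have hlog : Real.log n ≤ Λ := by
    rcases n.eq_zero_or_pos with rfl | hpos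
    · simp
    calc Real.log n ≤ Real.log ((2 : ℝ) ^ Λ) := Real.log_le_log (mod_cast hpos) (mod_cast hn)
      _ = Λ * Real.log 2 := Real.log_pow _ _
      _ ≤ Λ * 1 := by
          gcongr
          linarith [Real.log_two_lt_d9]
      _ = Λ := mul_one _
  have hcast : (d : ℝ) ≤ ((2 ^ μ : ℕ) : ℝ) ^ 2 :=
    hd.trans (pow_le_pow_left₀ (Real.log_natCast_nonneg n) (hlog.trans (mod_cast hΛ)) 2)
  exact_mod_cast hcast

lemma isScale_of_le_log_sq {n : ℕ} (hn : 2 ≤ n) (hd : (d : ℝ) ≤ Real.log n ^ 2)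
    (hμ : 33 ≤ scaleExponent n) :
    IsScale (n - 1) d (scaleExponent n) (Nat.log 2 n + 1) := by
  have hupper : Nat.log 2 n + 2 ≤ 2 ^ scaleExponent n := Nat.le_pow_clog one_lt_two _
  have hlower : 2 ^ (scaleExponent n - 1) < Nat.log 2 n + 2 :=
    Nat.pow_pred_clog_lt_self one_lt_two (x := Nat.log 2 n + 2) (by omega)
  have hn_lt : n < 2 ^ (Nat.log 2 n + 1) := Nat.lt_pow_succ_log_self one_lt_two _
  have hle_n : 2 ^ Nat.log 2 n ≤ n := Nat.pow_log_le_self 2 (by omega)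
  generalize scaleExponent n = μ at *
  generalize Nat.log 2 n = lg at *
  obtain ⟨k, rfl⟩ : ∃ k, μ = k + 1 := ⟨μ - 1, by omega⟩
  have hk := succ_mul_add_le_two_pow (k := k) (by omega)
  rw [Nat.add_sub_cancel] at hlower
  refine ⟨?_, by omega, by omega, ?_, le_two_pow_sq_of_le_log_sq hd hn_lt.le (by omega), ?_⟩
  · rw [pow_succ]
    nlinarith
  · rw [pow_succ]
    omega
  · have hpow : (2 ^ (k + 1)) ^ (2000 * (k + 1) + 1) ≤ 2 ^ (lg - 1) := by
      rw [← pow_mul]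
      exact Nat.pow_le_pow_right two_pos (Nat.le_sub_of_add_le (by linarith))
    have hlg : 2 ^ lg = 2 * 2 ^ (lg - 1) := by rw [← pow_succ', Nat.sub_add_cancel (by omega)]
    omega

end Asymptotics

end StrongIST

/-- For odd `n → ∞`, even `4 ≤ d(n) ≤ (log n)²`, `k = ⌊d/4⌋` and `ε ∈ (0,1)`: with high
probability the `d(n)`-regular graph underlying `G''(n-1, d(n))` has at least `(1-ε)n`
vertices `r` admitting at least `(1-ε)(nd/2)^{d/2}/(d/2)!` induced `d`-matchings `M`
with respect to which there are `k` strong ISTs rooted at `r`. -/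
theorem stmt13 (d : ℕ → ℕ) (hde : ∀ n, Even (d n))
    (hd : ∀ᶠ n : ℕ in Filter.atTop, 4 ≤ d n ∧ (d n : ℝ) ≤ (Real.log n) ^ 2)
    (ε : ℝ) (hε₀ : 0 < ε) (hε₁ : ε < 1) :
    Filter.Tendsto
      (fun n : ℕ => tupleProb (n - 1) (d n)
        (fun Mt => (1 - ε) * n ≤
          (Nat.card {r : Fin (n - 1) //
            (1 - ε) * (((n : ℝ) * d n / 2) ^ (d n / 2) / (Nat.factorial (d n / 2) : ℝ))
              ≤ (Nat.card {M : SimpleGraph (Fin (n - 1)) //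
                  IsInducedMatching (⨆ i, Mt i) M (d n) ∧
                  HasStrongISTs (⨆ i, Mt i) M r (d n / 4)} : ℝ)} : ℝ)))
      (Filter.atTop ⊓ Filter.principal {n : ℕ | Odd n}) (nhds 1) := by
  have hlower : Tendsto (fun n => 1 - (2 + 6 / ε) / (2 : ℝ) ^ StrongIST.scaleExponent n)
      (atTop ⊓ principal {n : ℕ | Odd n}) (nhds 1) := by
    simpa using ((StrongIST.tendsto_two_pow_scaleExponent.const_div_atTop _).const_sub 1).mono_left
      inf_le_left
  refine tendsto_of_tendsto_of_tendsto_of_le_of_le' hlower tendsto_const_nhds ?_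
    (.of_forall fun _ => StrongIST.tupleProb_le_one _)
  rw [eventually_inf_principal]
  filter_upwards [hd, eventually_ge_atTop 2, StrongIST.tendsto_scaleExponent.eventually_ge_atTop 33,
    StrongIST.tendsto_two_pow_scaleExponent.eventually_ge_atTop (4 / ε)] with n hdn hn hμ hε hodd
  have hscale := StrongIST.isScale_of_le_log_sq hn hdn.2 hμ
  have hprob := hscale.one_sub_le_tupleProb (Nat.Odd.sub_odd hodd odd_one) (hde n) hdn.1 hε₀ hε
  rwa [← Nat.cast_add_one, Nat.sub_add_cancel (by omega : 1 ≤ n)] at hprob
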